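/- arXiv:1302.3024 — 3 statements merged into one kernel-verified Lean document; each statement's English description precedes it below -/
import Mathlib

section
/- There exists a quasiperiodically forced increasing interval map f : T¹ × I → T¹ × I and a minimal set M of f such that M is almost automorphic but M is not filled-in, i.e. M is a proper subset of the set [φ⁻_M, φ⁺_M] = {(θ,x) : φ⁻_M(θ) ≤ x ≤ φ⁺_M(θ)}, where φ⁻_M(θ) = inf M_θ and φ⁺_M(θ) = sup M_θ. -/
open Set Function MeasureTheory

noncomputable section

/-- The circle `T¹ = ℝ/ℤ`. -/
abbrev T1 := AddCircle (1 : ℝ)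

/-- The `n`-th iterate (`n ∈ ℤ`) of a bijection. -/
def zIter {X : Type*} (g : Equiv.Perm X) (n : ℤ) : X → X := fun x => (g ^ n) x

/-- A set of integers is syndetic if it has bounded gaps. -/
def ZSyndetic (S : Set ℤ) : Prop := ∃ N : ℕ, ∀ n : ℤ, ∃ k ∈ S, |k - n| ≤ (N : ℤ)

/-- A homeomorphism `α` of a metric space is almost periodic if for every `ε > 0` the set
`{n ∈ ℤ | dist(αⁿ, Id) < ε}` is syndetic. -/
def AlmostPeriodicHomeo {Θ : Type*} [MetricSpace Θ] (α : Θ ≃ₜ Θ) : Prop :=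
  ∀ ε > (0 : ℝ), ZSyndetic {n : ℤ | ∀ θ : Θ, dist (zIter α.toEquiv n θ) θ < ε}

/-- A homeomorphism is minimal if every (two-sided) orbit is dense. -/
def MinimalHomeo {Θ : Type*} [TopologicalSpace Θ] (α : Θ ≃ₜ Θ) : Prop :=
  ∀ θ : Θ, Dense (range fun n : ℤ => zIter α.toEquiv n θ)

/-- A self-map `g` of a metric space is almost periodic if its family of iterates
is (uniformly) equicontinuous. -/
def AlmostPeriodicMap {Y : Type*} [MetricSpace Y] (g : Y → Y) : Prop :=
  ∀ ε > (0 : ℝ), ∃ δ > (0 : ℝ), ∀ y y' : Y, dist y y' < δ → ∀ n : ℕ, dist (g^[n] y) (g^[n] y') < ε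

/-- `h` is a factor map (semiconjugacy) from `(X, f)` onto `(Y, g)`:
a continuous surjection with `h ∘ f = g ∘ h`.  Then `(X, f)` is a topological
extension of `(Y, g)`. -/
def IsFactorMap {X Y : Type*} [TopologicalSpace X] [TopologicalSpace Y]
    (f : X → X) (g : Y → Y) (h : X → Y) : Prop :=
  Continuous h ∧ Surjective h ∧ h ∘ f = g ∘ h

/-- A map `h` is almost 1-1 if the set of points of the target having exactly one
preimage is dense. -/
def AlmostOneOne {X Y : Type*} [TopologicalSpace Y] (h : X → Y) : Prop :=
  Dense {y : Y | ∃! x, h x = y}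

/-- A witness that the system `(X, f)` is almost automorphic: an almost periodic
homeomorphism of a compact metric space which is an almost 1-1 factor of `(X, f)`. -/
structure AAWitness {X : Type*} [TopologicalSpace X] (f : X → X) where
  (Y : Type)
  [mY : MetricSpace Y]
  [cY : CompactSpace Y]
  (g : Y ≃ₜ Y)
  (hmap : X → Y)
  (factor : IsFactorMap f (⇑g) hmap)
  (a11 : AlmostOneOne hmap)
  (ap : ∀ ε > (0 : ℝ), ∃ δ > (0 : ℝ), ∀ y y' : Y, dist y y' < δ →
        ∀ n : ℤ, dist (zIter g.toEquiv n y) (zIter g.toEquiv n y') < ε)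

/-- `M` is a minimal set of `f`: nonempty, closed, invariant, and without proper
nonempty closed invariant subsets. -/
def IsMinimalSet {X : Type*} [TopologicalSpace X] (f : X → X) (M : Set X) : Prop :=
  M.Nonempty ∧ IsClosed M ∧ f '' M = M ∧
    ∀ M' ⊆ M, M'.Nonempty → IsClosed M' → f '' M' ⊆ M' → M' = M

/-- The restriction of `f` to an invariant set. -/
def restrictMap {X : Type*} {f : X → X} {M : Set X} (hM : Set.MapsTo f M M) : ↥M → ↥M :=
  Set.MapsTo.restrict f M M hM

/-- `M` is an almost automorphic minimal set of `f`: `f` restricted to `M` admits an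
almost periodic almost 1-1 factor. -/
def IsAAMinimal {X : Type*} [MetricSpace X] (f : X → X) (M : Set X) : Prop :=
  IsMinimalSet f M ∧ ∀ hM : Set.MapsTo f M M, Nonempty (AAWitness (restrictMap hM))

/-- `M` is an almost periodic minimal set of `f`: the family of iterates of the
restriction of `f` to `M` is equicontinuous. -/
def IsAPMinimal {X : Type*} [MetricSpace X] (f : X → X) (M : Set X) : Prop :=
  IsMinimalSet f M ∧ ∀ hM : Set.MapsTo f M M, AlmostPeriodicMap (restrictMap hM)

/-- A subset of a product is pinched if some fibre is a singleton. -/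
def Pinched {Θ X : Type*} (A : Set (Θ × X)) : Prop := ∃ θ : Θ, ∃! x : X, (θ, x) ∈ A

/-- An `α`-forced increasing interval map on `Θ × I`: a continuous skew product over `α`
whose fibre maps are strictly increasing. -/
def ForcedIncreasing {Θ : Type*} [TopologicalSpace Θ] {I : Set ℝ} (α : Θ → Θ)
    (f : Θ × ↥I → Θ × ↥I) : Prop :=
  Continuous f ∧ (∀ p : Θ × ↥I, (f p).1 = α p.1) ∧
    ∀ θ : Θ, StrictMono fun x : ↥I => (f (θ, x)).2

/-- The fibre of `M ⊆ Θ × I` over `θ`, as a set of reals. -/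
def fiberSet {Θ : Type*} {I : Set ℝ} (M : Set (Θ × ↥I)) (θ : Θ) : Set ℝ :=
  (fun x : ↥I => (x : ℝ)) '' {x : ↥I | (θ, x) ∈ M}

/-- The filled-in envelope `[φ⁻_M, φ⁺_M]` of `M`, where `φ⁻_M(θ) = inf M_θ` and
`φ⁺_M(θ) = sup M_θ`. -/
def FilledEnvelope {Θ : Type*} {I : Set ℝ} (M : Set (Θ × ↥I)) : Set (Θ × ↥I) :=
  {p : Θ × ↥I | sInf (fiberSet M p.1) ≤ (p.2 : ℝ) ∧ (p.2 : ℝ) ≤ sSup (fiberSet M p.1)}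

/-- The graph of a curve `γ : Θ → I`. -/
def curveGraph {Θ : Type*} {I : Set ℝ} (γ : Θ → ↥I) : Set (Θ × ↥I) :=
  {p : Θ × ↥I | p.2 = γ p.1}

/-- The conclusion of the blow-up construction (properties (i)-(v) of the main theorem):
`f̂` is a topological extension of `f` via the fibre-respecting factor map `h`, `f̂` is an
`α`-forced increasing interval map, the fibre maps of `h` are non-decreasing, `h` is
injective off `h⁻¹(Γ)`, countably many points of `Γ` have non-degenerate vertical-segment
preimages while all other points of `Γ` have singleton preimages, and `h⁻¹(Γ)` contains
the graph of no continuous curve. -/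
def BlowUpConclusion {Θ : Type*} [TopologicalSpace Θ] {I : Set ℝ}
    (α : Θ → Θ) (f : Θ × ↥I → Θ × ↥I) (γ : Θ → ↥I)
    (fhat : Θ × ↥I → Θ × ↥I) (h : Θ × ↥I → Θ × ↥I) : Prop :=
  IsFactorMap fhat f h ∧ (∀ p : Θ × ↥I, (h p).1 = p.1) ∧
  ForcedIncreasing α fhat ∧
  (∀ θ : Θ, Monotone fun x : ↥I => (h (θ, x)).2) ∧
  Set.InjOn h (h ⁻¹' curveGraph γ)ᶜ ∧
  (∃ C : Set (Θ × ↥I), C ⊆ curveGraph γ ∧ C.Countable ∧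
    (∀ p ∈ C, ∃ x₁ x₂ : ↥I, x₁ < x₂ ∧ h ⁻¹' {p} = {p.1} ×ˢ Set.Icc x₁ x₂) ∧
    (∀ p ∈ curveGraph γ \ C, ∃ x : ↥I, h ⁻¹' {p} = {(p.1, x)})) ∧
  (∀ η : Θ → ↥I, Continuous η → ¬ (curveGraph η ⊆ h ⁻¹' curveGraph γ))


namespace AAC

/-- width function on the circle -/
def wf : T1 → ℝ := AddCircle.liftIco 1 0 (fun u : ℝ => u * (1 - u))
/-- offset function on the circle -/
def vf : T1 → ℝ := AddCircle.liftIco 1 0 (fun u : ℝ => u * (u * (1 - u)))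

lemma wf_cont : Continuous wf :=
  AddCircle.liftIco_zero_continuous (by norm_num) (by fun_prop)

lemma vf_cont : Continuous vf :=
  AddCircle.liftIco_zero_continuous (by norm_num) (by fun_prop)

lemma wf_coe {u : ℝ} (h : u ∈ Ico (0:ℝ) 1) : wf (u : T1) = u * (1 - u) :=
  AddCircle.liftIco_coe_apply (by simpa using h)

lemma vf_coe {u : ℝ} (h : u ∈ Ico (0:ℝ) 1) : vf (u : T1) = u * (u * (1 - u)) :=
  AddCircle.liftIco_coe_apply (by simpa using h)

lemma exists_rep (t : T1) : ∃ u ∈ Ico (0:ℝ) 1, (u : T1) = t := by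
  have : t ∈ ((↑) : ℝ → T1) '' Ico (0:ℝ) (0 + 1) := by
    rw [AddCircle.coe_image_Ico_eq]; trivial
  obtain ⟨u, hu, h⟩ := this
  exact ⟨u, by simpa using hu, h⟩

/-- The blow-up relation. -/
def G (t : T1) (y p : ℝ) : Prop :=
  (p = 1 ∨ vf t + y ≤ wf t * p) ∧ (p = 0 ∨ wf t * p ≤ vf t + y)

lemma wf_nonneg (t : T1) : 0 ≤ wf t := by
  obtain ⟨u, hu, rfl⟩ := exists_rep t
  rw [wf_coe hu]
  exact mul_nonneg hu.1 (by linarith [hu.2])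

lemma wf_pos {t : T1} (ht : t ≠ 0) : 0 < wf t := by
  obtain ⟨u, hu, rfl⟩ := exists_rep t
  rw [wf_coe hu]
  have : u ≠ 0 := by rintro rfl; exact ht (by simp)
  exact mul_pos (lt_of_le_of_ne hu.1 this.symm) (by linarith [hu.2])

lemma vf_bounds (t : T1) : 0 ≤ vf t ∧ vf t ≤ 1 ∧ wf t ≤ 1 := by
  obtain ⟨u, hu, rfl⟩ := exists_rep t
  rw [wf_coe hu, vf_coe hu]
  obtain ⟨h0, h1⟩ := hu
  have h2 : 0 ≤ u * (1 - u) := mul_nonneg h0 (by linarith)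
  have h3 : u * (1 - u) ≤ 1 := by nlinarith
  exact ⟨mul_nonneg h0 h2, by nlinarith, h3⟩

lemma G_mono {t : T1} {y y' p p' : ℝ} (h : G t y p) (h' : G t y' p')
    (hp0 : 0 ≤ p') (hp1 : p ≤ 1) (hy : y < y') : p ≤ p' := by
  by_contra hlt
  push Not at hlt
  have h1 := h'.1.resolve_left (by linarith)
  have h2 := h.2.resolve_left (by linarith)
  have := mul_le_mul_of_nonneg_left hlt.le (wf_nonneg t)
  linarith

lemma G_le {t : T1} {y p p' : ℝ} (ht : t ≠ 0) (h : G t y p) (h' : G t y p')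
    (hp0 : 0 ≤ p') (hp1 : p ≤ 1) : p ≤ p' := by
  by_contra hlt
  push Not at hlt
  have h1 := h'.1.resolve_left (by linarith)
  have h2 := h.2.resolve_left (by linarith)
  have := mul_lt_mul_of_pos_left hlt (wf_pos ht)
  linarith

lemma G_zero_coe {u : ℝ} (h : u ∈ Ico (0:ℝ) 1) : G (u : T1) 0 u := by
  unfold G
  rw [wf_coe h, vf_coe h]
  exact ⟨Or.inr (by linarith), Or.inr (by linarith)⟩

lemma G_zero_zero (p : ℝ) : G 0 0 p := by
  have h : (0:ℝ) ∈ Ico (0:ℝ) 1 := by simp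
  have e : (0 : T1) = ((0:ℝ) : T1) := by simp
  unfold G
  rw [e, wf_coe h, vf_coe h]
  simp

lemma G_zero_iff {t : T1} (ht : t ≠ 0) {p : ℝ} (hp : p ∈ Icc (0:ℝ) 1) (h : G t 0 p) :
    (p : T1) = t := by
  obtain ⟨u, hu, rfl⟩ := exists_rep t
  have h' := G_zero_coe hu
  rw [le_antisymm (G_le ht h h' hu.1 hp.2) (G_le ht h' h hp.1 hu.2.le)]

/-- The value of the blow-up function off the singularity. -/
def pf (t : T1) (y : ℝ) : ℝ := max 0 (min 1 ((vf t + y) / wf t))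

lemma pf_mem (t : T1) (y : ℝ) : pf t y ∈ Icc (0:ℝ) 1 :=
  ⟨le_max_left _ _, max_le zero_le_one (min_le_left _ _)⟩

lemma pf_cont (t : T1) : Continuous (pf t) := by
  unfold pf; fun_prop

lemma pf_G {t : T1} (ht : t ≠ 0) (y : ℝ) : G t y (pf t y) := by
  have hw := wf_pos ht
  have e : wf t * ((vf t + y) / wf t) = vf t + y := by field_simp
  unfold G pf
  rcases le_total ((vf t + y) / wf t) 0 with h | h
  · have h1 : min 1 ((vf t + y) / wf t) ≤ 0 := (min_le_right _ _).trans h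
    rw [max_eq_left h1]
    exact ⟨Or.inr (by nlinarith), Or.inl rfl⟩
  · rcases le_total ((vf t + y) / wf t) 1 with h1 | h1
    · rw [min_eq_right h1, max_eq_right h, e]
      exact ⟨Or.inr le_rfl, Or.inr le_rfl⟩
    · rw [min_eq_left h1, max_eq_right zero_le_one]
      exact ⟨Or.inl rfl, Or.inr (by nlinarith)⟩

lemma pf_neg_one (t : T1) : pf t (-1) = 0 := by
  have := vf_bounds t
  unfold pf
  apply max_eq_left
  apply (min_le_right _ _).trans
  exact div_nonpos_of_nonpos_of_nonneg (by linarith) (wf_nonneg t)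

lemma pf_one {t : T1} (ht : t ≠ 0) : pf t 1 = 1 := by
  have := vf_bounds t
  unfold pf
  have : 1 ≤ (vf t + 1) / wf t := by rw [le_div_iff₀ (wf_pos ht)]; linarith
  rw [min_eq_left this, max_eq_right zero_le_one]

/-- ambient space -/
abbrev E := T1 × ℝ × (ℤ → ℝ)

/-- The blown-up space. -/
def B (r : T1) : Set E :=
  {e | e.2.1 ∈ Icc (-1:ℝ) 1 ∧ (∀ n, e.2.2 n ∈ Icc (0:ℝ) 1) ∧
    ∀ n : ℤ, G (e.1 - n • r) e.2.1 (e.2.2 n)}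

lemma B_closed (r : T1) : IsClosed (B r) := by
  have : B r = {e : E | e.2.1 ∈ Icc (-1:ℝ) 1} ∩ ({e : E | ∀ n, e.2.2 n ∈ Icc (0:ℝ) 1} ∩
    {e : E | ∀ n : ℤ, G (e.1 - n • r) e.2.1 (e.2.2 n)}) := rfl
  rw [this]
  have hw := wf_cont
  have hv := vf_cont
  refine (isClosed_Icc.preimage (by fun_prop)).inter (IsClosed.inter ?_ ?_)
  · simp only [ofPred_forall]
    exact isClosed_iInter fun n => isClosed_Icc.preimage (f := fun e : E => e.2.2 n) (by fun_prop)
  · simp only [ofPred_forall]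
    refine isClosed_iInter fun n => ?_
    unfold G
    refine IsClosed.inter (IsClosed.union ?_ ?_) (IsClosed.union ?_ ?_)
    · exact isClosed_eq (f := fun e : E => e.2.2 n) (by fun_prop) continuous_const
    · exact isClosed_le (f := fun e : E => vf (e.1 - n • r) + e.2.1)
        (g := fun e : E => wf (e.1 - n • r) * e.2.2 n) (by fun_prop) (by fun_prop)
    · exact isClosed_eq (f := fun e : E => e.2.2 n) (by fun_prop) continuous_const
    · exact isClosed_le (g := fun e : E => vf (e.1 - n • r) + e.2.1)
        (f := fun e : E => wf (e.1 - n • r) * e.2.2 n) (by fun_prop) (by fun_prop)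

lemma B_compact (r : T1) : IsCompact (B r) := by
  have h : IsCompact ((univ : Set T1) ×ˢ (Icc (-1:ℝ) 1 ×ˢ
      (Set.pi univ fun _ : ℤ => Icc (0:ℝ) 1))) :=
    isCompact_univ.prod (isCompact_Icc.prod (isCompact_univ_pi fun _ => isCompact_Icc))
  refine h.of_isClosed_subset (B_closed r) ?_
  rintro ⟨θ, y, p⟩ ⟨h1, h2, -⟩
  exact ⟨trivial, h1, fun n _ => h2 n⟩

instance (r : T1) : CompactSpace (B r) := isCompact_iff_compactSpace.1 (B_compact r)

/-- shift on the ambient space -/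
def sh (r : T1) : E ≃ₜ E where
  toFun e := (e.1 + r, e.2.1, fun n => e.2.2 (n - 1))
  invFun e := (e.1 - r, e.2.1, fun n => e.2.2 (n + 1))
  left_inv e := by simp
  right_inv e := by simp
  continuous_toFun := by fun_prop
  continuous_invFun := by fun_prop

lemma sh_apply (r : T1) (e : E) : sh r e = (e.1 + r, e.2.1, fun n => e.2.2 (n - 1)) := rfl

lemma sh_mem (r : T1) (e : E) : e ∈ B r ↔ sh r e ∈ B r := by
  have key : ∀ n : ℤ, e.1 + r - n • r = e.1 - (n - 1) • r := fun n => by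
    rw [sub_smul, one_smul]; abel
  constructor
  · rintro ⟨h1, h2, h3⟩
    refine ⟨h1, fun n => h2 _, fun n => ?_⟩
    have := h3 (n - 1)
    rw [← key] at this
    exact this
  · rintro ⟨h1, h2, h3⟩
    refine ⟨h1, fun n => ?_, fun n => ?_⟩
    · have := h2 (n + 1)
      simpa [sh] using this
    · have := h3 (n + 1)
      simp only [sh_apply, key, add_sub_cancel_right] at this
      exact this

/-- shift on `B` -/
def sg (r : T1) : B r ≃ₜ B r := (sh r).subtype (sh_mem r)

lemma sg_coe (r : T1) (b : B r) : (sg r b : E) = sh r b := rfl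

/-- the order -/
def Le (e e' : E) : Prop := e.2.1 ≤ e'.2.1 ∧ ∀ n, e.2.2 n ≤ e'.2.2 n

lemma Le_total {r : T1} (hr : ∀ n : ℤ, n • r = 0 → n = 0) {e e' : E} (h : e ∈ B r)
    (h' : e' ∈ B r) (hθ : e.1 = e'.1) : Le e e' ∨ Le e' e := by
  obtain ⟨θ, y, p⟩ := e
  obtain ⟨θ', y', p'⟩ := e'
  obtain ⟨h1, h2, h3⟩ := h
  obtain ⟨h1', h2', h3'⟩ := h'
  simp only at *
  subst hθ
  rcases lt_trichotomy y y' with hy | hy | hy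
  · exact Or.inl ⟨hy.le, fun n => G_mono (h3 n) (h3' n) (h2' n).1 (h2 n).2 hy⟩
  · subst hy
    by_cases hex : ∃ n : ℤ, θ - n • r = 0
    · obtain ⟨n, hn⟩ := hex
      have hk : ∀ k : ℤ, k ≠ n → θ - k • r ≠ 0 := by
        intro k hk h0
        apply hk
        have : (k - n) • r = 0 := by
          rw [sub_smul, ← sub_eq_zero.1 hn, ← sub_eq_zero.1 h0, sub_self]
        have := hr _ this
        omega
      rcases le_total (p n) (p' n) with hp | hp
      · refine Or.inl ⟨le_rfl, fun k => ?_⟩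
        by_cases hkn : k = n
        · subst hkn; exact hp
        · exact G_le (hk k hkn) (h3 k) (h3' k) (h2' k).1 (h2 k).2
      · refine Or.inr ⟨le_rfl, fun k => ?_⟩
        by_cases hkn : k = n
        · subst hkn; exact hp
        · exact G_le (hk k hkn) (h3' k) (h3 k) (h2 k).1 (h2' k).2
    · push Not at hex
      exact Or.inl ⟨le_rfl, fun n => G_le (hex n) (h3 n) (h3' n) (h2' n).1 (h2 n).2⟩
  · exact Or.inr ⟨hy.le, fun n => G_mono (h3' n) (h3 n) (h2 n).1 (h2' n).2 hy⟩

/-- height -/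
def ht (c : ℤ → ℝ) (e : E) : ℝ := e.2.1 + ∑' n, c n * e.2.2 n

lemma summ {c : ℤ → ℝ} (hc : ∀ n, 0 < c n) (hs : Summable c) {p : ℤ → ℝ}
    (hp : ∀ n, p n ∈ Icc (0:ℝ) 1) : Summable fun n => c n * p n :=
  hs.of_nonneg_of_le (fun n => mul_nonneg (hc n).le (hp n).1)
    (fun n => mul_le_of_le_one_right (hc n).le (hp n).2)

lemma ht_le {c : ℤ → ℝ} (hc : ∀ n, 0 < c n) (hs : Summable c) {r : T1} {e e' : E}
    (h : e ∈ B r) (h' : e' ∈ B r) (hl : Le e e') : ht c e ≤ ht c e' :=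
  add_le_add hl.1 ((summ hc hs h.2.1).tsum_le_tsum
    (fun n => mul_le_mul_of_nonneg_left (hl.2 n) (hc n).le) (summ hc hs h'.2.1))

lemma ht_eq {c : ℤ → ℝ} (hc : ∀ n, 0 < c n) (hs : Summable c) {r : T1} {e e' : E}
    (h : e ∈ B r) (h' : e' ∈ B r) (hθ : e.1 = e'.1) (hl : Le e e') (hh : ht c e' ≤ ht c e) :
    e = e' := by
  have hle : ∀ n, c n * e.2.2 n ≤ c n * e'.2.2 n :=
    fun n => mul_le_mul_of_nonneg_left (hl.2 n) (hc n).le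
  have h1 := (summ hc hs h.2.1).tsum_le_tsum hle (summ hc hs h'.2.1)
  have h2 := hl.1
  have hy : e.2.1 = e'.2.1 := by unfold ht at hh; linarith
  have hp : e.2.2 = e'.2.2 := by
    by_contra hne
    obtain ⟨n, hn⟩ := Function.ne_iff.1 hne
    have := (summ hc hs h.2.1).tsum_lt_tsum hle
      (mul_lt_mul_of_pos_left (lt_of_le_of_ne (hl.2 n) hn) (hc n)) (summ hc hs h'.2.1)
    unfold ht at hh; linarith
  exact Prod.ext hθ (Prod.ext hy hp)

lemma ht_inj {c : ℤ → ℝ} (hc : ∀ n, 0 < c n) (hs : Summable c) {r : T1}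
    (hr : ∀ n : ℤ, n • r = 0 → n = 0) {e e' : E}
    (h : e ∈ B r) (h' : e' ∈ B r) (hθ : e.1 = e'.1) (hh : ht c e = ht c e') : e = e' := by
  rcases Le_total hr h h' hθ with hl | hl
  · exact ht_eq hc hs h h' hθ hl hh.ge
  · exact (ht_eq hc hs h' h hθ.symm hl hh.le).symm

lemma ht_lt {c : ℤ → ℝ} (hc : ∀ n, 0 < c n) (hs : Summable c) {r : T1}
    (hr : ∀ n : ℤ, n • r = 0 → n = 0) {e e' : E}
    (h : e ∈ B r) (h' : e' ∈ B r) (hθ : e.1 = e'.1) (hh : ht c e < ht c e') :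
    ht c (sh r e) < ht c (sh r e') := by
  have hl : Le e e' := by
    rcases Le_total hr h h' hθ with hl | hl
    · exact hl
    · exact absurd (ht_le hc hs h' h hl) (not_le.2 hh)
  by_contra hcon
  push Not at hcon
  have := ht_eq hc hs ((sh_mem r e).1 h) ((sh_mem r e').1 h') (by simp [sh, hθ])
    ⟨hl.1, fun n => hl.2 _⟩ hcon
  rw [(sh r).injective this] at hh
  exact lt_irrefl _ hh

lemma ht_cont {c : ℤ → ℝ} (hc : ∀ n, 0 < c n) (hs : Summable c) (r : T1) :
    Continuous fun b : B r => ht c b := by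
  unfold ht
  refine Continuous.add (by fun_prop) (continuous_tsum (fun n => by fun_prop) hs ?_)
  intro n b
  have := b.2.2.1 n
  rw [Real.norm_eq_abs, abs_of_nonneg (mul_nonneg (hc n).le this.1)]
  exact mul_le_of_le_one_right (hc n).le this.2

lemma ht_mem {c : ℤ → ℝ} (hc : ∀ n, 0 < c n) (hs : Summable c) {r : T1} {e : E}
    (h : e ∈ B r) : ht c e ∈ Icc (-1:ℝ) (1 + ∑' n, c n) := by
  have h0 : 0 ≤ ∑' n, c n * e.2.2 n := tsum_nonneg fun n => mul_nonneg (hc n).le (h.2.1 n).1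
  have h1 := (summ hc hs h.2.1).tsum_le_tsum
    (fun n => mul_le_of_le_one_right (hc n).le (h.2.1 n).2) hs
  have := h.1
  unfold ht
  exact ⟨by linarith [this.1], by linarith [this.2]⟩

/-- The coordinate map. -/
def psi {c : ℤ → ℝ} (hc : ∀ n, 0 < c n) (hs : Summable c) (r : T1) (b : B r) :
    T1 × ↥(Icc (-1:ℝ) (1 + ∑' n, c n)) := (b.1.1, ⟨ht c b, ht_mem hc hs b.2⟩)

lemma psi_cont {c : ℤ → ℝ} (hc : ∀ n, 0 < c n) (hs : Summable c) (r : T1) :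
    Continuous (psi hc hs r) := by
  unfold psi
  exact Continuous.prodMk (by fun_prop) ((ht_cont hc hs r).subtype_mk _)

lemma psi_inj {c : ℤ → ℝ} (hc : ∀ n, 0 < c n) (hs : Summable c) {r : T1}
    (hr : ∀ n : ℤ, n • r = 0 → n = 0) : Injective (psi hc hs r) := by
  intro b b' h
  have h1 := congrArg Prod.fst h
  have h2 := congrArg (fun q => (q.2 : ℝ)) h
  exact Subtype.ext (ht_inj hc hs hr b.2 b'.2 h1 h2)

/-- the non-orbit points -/
def NO (r : T1) : Set T1 := {θ | ∀ n : ℤ, θ - n • r ≠ 0}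

lemma NO_preimage_dense (r : T1) : Dense {x : ℝ | (x : T1) ∈ NO r} := by
  obtain ⟨ρ, rfl⟩ := QuotientAddGroup.mk_surjective r
  have : (range fun q : ℤ × ℤ => (q.1 : ℝ) * ρ + q.2).Countable := countable_range _
  refine (this.dense_compl ℝ).mono ?_
  intro x hx n h
  apply hx
  rw [sub_eq_zero] at h
  have h' : ((x - n * ρ : ℝ) : T1) = 0 := by
    rw [AddCircle.coe_sub, h, sub_eq_zero, ← zsmul_eq_mul]
    rfl
  obtain ⟨k, hk⟩ := AddCircle.coe_eq_zero_iff 1 |>.1 h'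
  refine ⟨(n, k), ?_⟩
  simp at hk ⊢
  linarith

lemma NO_dense (r : T1) : Dense (NO r) := by
  have h := (QuotientAddGroup.mk_surjective (s := AddSubgroup.zmultiples (1:ℝ))).denseRange.dense_image
    (AddCircle.continuous_mk' 1) (NO_preimage_dense r)
  refine h.mono ?_
  rintro _ ⟨x, hx, rfl⟩
  exact hx

lemma psi_surj {c : ℤ → ℝ} (hc : ∀ n, 0 < c n) (hs : Summable c) (r : T1) :
    Surjective (psi hc hs r) := by
  rw [← range_eq_univ]
  have hcl : IsClosed (range (psi hc hs r)) := (isCompact_range (psi_cont hc hs r)).isClosed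
  have hd : Dense (range (psi hc hs r)) := by
    refine ((NO_dense r).prod dense_univ).mono ?_
    rintro ⟨θ, x, hx⟩ ⟨hθ, -⟩
    have hX : Continuous fun y : ℝ => y + ∑' n : ℤ, c n * pf (θ - n • r) y := by
      refine Continuous.add continuous_id (continuous_tsum
        (fun n => continuous_const.mul (pf_cont _)) hs ?_)
      intro n y
      have := pf_mem (θ - n • r) y
      rw [Real.norm_eq_abs, abs_of_nonneg (mul_nonneg (hc n).le this.1)]
      exact mul_le_of_le_one_right (hc n).le this.2
    have hivt := intermediate_value_Icc (show (-1:ℝ) ≤ 1 by norm_num) hX.continuousOn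
    have e1 : ∀ n : ℤ, pf (θ - n • r) (-1) = 0 := fun n => pf_neg_one _
    have e2 : ∀ n : ℤ, pf (θ - n • r) 1 = 1 := fun n => pf_one (hθ n)
    simp only [e1, e2, mul_zero, tsum_zero, mul_one, add_zero] at hivt
    obtain ⟨y, hy, hxy⟩ := hivt hx
    refine ⟨⟨(θ, y, fun n => pf (θ - n • r) y), hy, fun n => pf_mem _ _, fun n => pf_G (hθ n) y⟩, ?_⟩
    exact Prod.ext rfl (Subtype.ext hxy)
  rw [← hcl.closure_eq, hd.closure_eq]

/-- The blow-up homeomorphism. -/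
def Psi {c : ℤ → ℝ} (hc : ∀ n, 0 < c n) (hs : Summable c) {r : T1}
    (hr : ∀ n : ℤ, n • r = 0 → n = 0) : B r ≃ₜ T1 × ↥(Icc (-1:ℝ) (1 + ∑' n, c n)) :=
  Continuous.homeoOfEquivCompactToT2
    (f := Equiv.ofBijective (psi hc hs r) ⟨psi_inj hc hs hr, psi_surj hc hs r⟩) (psi_cont hc hs r)

lemma Psi_apply {c : ℤ → ℝ} (hc : ∀ n, 0 < c n) (hs : Summable c) {r : T1}
    (hr : ∀ n : ℤ, n • r = 0 → n = 0) (b : B r) : Psi hc hs hr b = psi hc hs r b := rfl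

/-- regular points -/
def Rg (r : T1) : Set (B r) := {b | b.1.2.1 = 0 ∧ b.1.1 ∈ NO r}

/-- the minimal set in the blown-up space -/
def MB (r : T1) : Set (B r) := closure (Rg r)

lemma MB_prop {r : T1} {b : B r} (hb : b ∈ MB r) :
    b.1.2.1 = 0 ∧ ∀ n : ℤ, ((b.1.2.2 n : ℝ) : T1) = b.1.1 - n • r := by
  have hcl : IsClosed ({b : B r | b.1.2.1 = 0} ∩
      {b : B r | ∀ n : ℤ, ((b.1.2.2 n : ℝ) : T1) = b.1.1 - n • r}) := by
    refine IsClosed.inter (isClosed_eq (by fun_prop) (by fun_prop)) ?_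
    simp only [ofPred_forall]
    refine isClosed_iInter fun n => isClosed_eq ?_ (by fun_prop)
    exact (AddCircle.continuous_mk' 1).comp (f := fun b : B r => b.1.2.2 n) (by fun_prop)
  refine closure_minimal ?_ hcl hb
  rintro b ⟨h1, h2⟩
  refine ⟨h1, fun n => ?_⟩
  have := b.2.2.2 n
  rw [h1] at this
  exact G_zero_iff (h2 n) (b.2.2.1 n) this

lemma Rg_exists {r θ : T1} (h : θ ∈ NO r) : ∃ b ∈ Rg r, b.1.1 = θ :=
  ⟨⟨(θ, 0, fun n => pf (θ - n • r) 0), by norm_num, fun n => pf_mem _ _, fun n => pf_G (h n) 0⟩,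
    ⟨rfl, h⟩, rfl⟩

lemma fib_unique {r : T1} {b b' : B r} (hb : b ∈ MB r) (hb' : b' ∈ MB r) (h : b.1.1 = b'.1.1)
    (hθ : b.1.1 ∈ NO r) : b = b' := by
  have h1 := (MB_prop hb).1
  have h2 := (MB_prop hb').1
  refine Subtype.ext (Prod.ext h (Prod.ext (h1.trans h2.symm) (funext fun n => ?_)))
  have g1 := b.2.2.2 n
  have g2 := b'.2.2.2 n
  rw [h1] at g1
  rw [h2, ← h] at g2
  exact le_antisymm (G_le (hθ n) g1 g2 (b'.2.2.1 n).1 (b.2.2.1 n).2)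
    (G_le (hθ n) g2 g1 (b.2.2.1 n).1 (b'.2.2.1 n).2)

lemma NO_add {r θ : T1} : θ + r ∈ NO r ↔ θ ∈ NO r := by
  have key : ∀ n : ℤ, θ + r - n • r = θ - (n - 1) • r := fun n => by
    rw [sub_smul, one_smul]; abel
  constructor
  · intro h n
    have := h (n + 1)
    rwa [key, add_sub_cancel_right] at this
  · intro h n
    rw [key]; exact h _

lemma sg_MB (r : T1) : sg r '' MB r = MB r := by
  unfold MB
  rw [(sg r).image_closure]
  congr 1
  ext b
  constructor
  · rintro ⟨a, ⟨h1, h2⟩, rfl⟩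
    exact ⟨h1, NO_add.2 h2⟩
  · rintro ⟨h1, h2⟩
    obtain ⟨a, rfl⟩ := (sg r).surjective b
    exact ⟨a, ⟨h1, NO_add.1 h2⟩, rfl⟩

lemma MB_surj (r : T1) (θ : T1) : ∃ b ∈ MB r, b.1.1 = θ := by
  have hcl : IsClosed ((fun b : B r => b.1.1) '' MB r) :=
    ((isClosed_closure.isCompact).image (by fun_prop)).isClosed
  have hd : Dense ((fun b : B r => b.1.1) '' MB r) :=
    (NO_dense r).mono fun θ hθ => by
      obtain ⟨b, hb, h⟩ := Rg_exists hθ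
      exact ⟨b, subset_closure hb, h⟩
  have : θ ∈ (fun b : B r => b.1.1) '' MB r := by
    rw [← hcl.closure_eq, hd.closure_eq]; trivial
  exact this

lemma MB_endpoints (r : T1) {q : ℝ} (hq : q ∈ Icc (0:ℝ) 1) : ∃ b ∈ MB r, b.1.2.2 0 = q := by
  have hcl : IsClosed ((fun b : B r => b.1.2.2 0) '' MB r) :=
    ((isClosed_closure.isCompact).image (by fun_prop)).isClosed
  have hsub : Ioo (0:ℝ) 1 ∩ {x : ℝ | (x : T1) ∈ NO r} ⊆ (fun b : B r => b.1.2.2 0) '' MB r := by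
    rintro x ⟨hx, hN⟩
    obtain ⟨b, hb, h⟩ := Rg_exists hN
    refine ⟨b, subset_closure hb, ?_⟩
    have g := b.2.2.2 0
    have h0 : (x : T1) ≠ 0 := by simpa using hN 0
    rw [hb.1, h, zero_smul, sub_zero] at g
    have g' := G_zero_coe (Ioo_subset_Ico_self hx)
    exact le_antisymm (G_le h0 g g' hx.1.le (b.2.2.1 0).2) (G_le h0 g' g (b.2.2.1 0).1 hx.2.le)
  have : q ∈ (fun b : B r => b.1.2.2 0) '' MB r := by
    rw [← hcl.closure_eq]
    refine closure_mono hsub ?_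
    rw [← closure_Ioo zero_ne_one] at hq
    exact closure_minimal ((NO_preimage_dense r).open_subset_closure_inter isOpen_Ioo)
      isClosed_closure hq
  exact this

lemma MB_minimal {r : T1} (hd : DenseRange (fun n : ℕ => n • r)) (M' : Set (B r))
    (hsub : M' ⊆ MB r) (hne : M'.Nonempty) (hcl : IsClosed M') (hinv : sg r '' M' ⊆ M') :
    M' = MB r := by
  refine hsub.antisymm (closure_minimal ?_ hcl)
  have hclp : IsClosed ((fun b : B r => b.1.1) '' M') :=
    (hcl.isCompact.image (by fun_prop)).isClosed
  obtain ⟨b, hb⟩ := hne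
  have hit : ∀ n : ℕ, ∃ a ∈ M', a.1.1 = b.1.1 + n • r := by
    intro n
    induction n with
    | zero => exact ⟨b, hb, by simp⟩
    | succ k ih =>
      obtain ⟨a, ha, h⟩ := ih
      refine ⟨sg r a, hinv ⟨a, ha, rfl⟩, ?_⟩
      rw [sg_coe]
      simp only [sh_apply, h, succ_nsmul, add_assoc]
  have hd' : Dense ((fun b : B r => b.1.1) '' M') := by
    have h1 := (Homeomorph.addLeft b.1.1).surjective.denseRange.comp hd
      (Homeomorph.addLeft b.1.1).continuous
    refine Dense.mono ?_ h1
    rintro _ ⟨n, rfl⟩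
    exact hit n
  intro x hx
  have : x.1.1 ∈ (fun b : B r => b.1.1) '' M' := by
    rw [← hclp.closure_eq, hd'.closure_eq]; trivial
  obtain ⟨a, ha, h⟩ := this
  have := fib_unique (hsub ha) (subset_closure hx) h (by simp only at h; rw [h]; exact hx.2)
  rwa [← this]

lemma zero_Le {r : T1} (hr : ∀ n : ℤ, n • r = 0 → n = 0) {e e' : E} (h : e ∈ B r)
    (h' : e' ∈ B r) (hθ : e.1 = 0) (hθ' : e'.1 = 0) (hy : e.2.1 = 0) (hy' : e'.2.1 = 0)
    (hp : e.2.2 0 ≤ e'.2.2 0) : Le e e' := by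
  refine ⟨by rw [hy, hy'], fun n => ?_⟩
  by_cases hn : n = 0
  · subst hn; exact hp
  · have g := h.2.2 n
    have g' := h'.2.2 n
    rw [hθ, hy] at g
    rw [hθ', hy'] at g'
    refine G_le (fun h0 => hn (hr n ?_)) g g' (h'.2.1 n).1 (h.2.1 n).2
    simpa using h0

/-- a point in the interior of a gap -/
lemma gap_mem {r : T1} (hr : ∀ n : ℤ, n • r = 0 → n = 0) :
    ((0, 0, fun n => if n = 0 then 1 / 2 else pf (0 - n • r) 0) : E) ∈ B r := by
  refine ⟨by norm_num, fun n => ?_, fun n => ?_⟩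
  · by_cases hn : n = 0
    · simp only [hn, if_true]; norm_num
    · simp only [hn, if_false]; exact pf_mem _ _
  · by_cases hn : n = 0
    · simp only [hn, zero_smul, sub_zero]; exact G_zero_zero _
    · simp only [hn, if_false]
      exact pf_G (fun h0 => hn (hr n (by simpa using h0))) 0

lemma half_ne : ((1 / 2 : ℝ) : T1) ≠ 0 := by
  rw [Ne, AddCircle.coe_eq_zero_iff_of_mem_Ico (by norm_num)]
  norm_num

end AAC

/-- there is a quasiperiodically forced increasing interval map with an
almost automorphic minimal set which is not filled-in. -/
theorem stmt2 :
    ∃ I : Set ℝ, IsCompact I ∧ I.OrdConnected ∧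
      ∃ ρ : ℝ, Irrational ρ ∧
        ∃ (f : T1 × ↥I → T1 × ↥I) (M : Set (T1 × ↥I)),
          ForcedIncreasing (fun θ : T1 => θ + (ρ : T1)) f ∧
          IsAAMinimal f M ∧ M ⊂ FilledEnvelope M := by
  obtain ⟨c, hc, C, hC, -⟩ := posSumOfEncodable (zero_lt_one (α := ℝ)) ℤ
  have hs : Summable c := hC.summable
  have hirr : Irrational (√2) := irrational_sqrt_two
  set r : T1 := ((√2 : ℝ) : T1) with hrdef
  have hdz : DenseRange (fun n : ℤ => n • r) :=
    AddCircle.denseRange_zsmul_coe_iff.2 (by simpa using hirr)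
  have hdn : DenseRange (fun n : ℕ => n • r) := denseRange_zsmul_iff_nsmul.1 hdz
  have hr : ∀ n : ℤ, n • r = 0 → n = 0 := by
    intro n hn
    by_contra hne
    have h0 := AddCircle.denseRange_zsmul_iff.1 hdz
    rw [addOrderOf_eq_zero_iff, isOfFinAddOrder_iff_zsmul_eq_zero] at h0
    exact h0 ⟨n, hne, hn⟩
  set Ψ := AAC.Psi hc hs hr with hΨ
  have hΨ1 : ∀ b, (Ψ b).1 = b.1.1 := fun b => rfl
  have hΨ2 : ∀ b, ((Ψ b).2 : ℝ) = AAC.ht c b := fun b => rfl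
  have hsg1 : ∀ b, (AAC.sg r b).1.1 = b.1.1 + r := fun b => rfl
  have hmin : IsMinimalSet (fun q => Ψ (AAC.sg r (Ψ.symm q))) (Ψ '' AAC.MB r) := by
    have himg : ∀ S : Set (AAC.B r), (fun q => Ψ (AAC.sg r (Ψ.symm q))) '' (Ψ '' S) =
        Ψ '' (AAC.sg r '' S) := by
      intro S
      simp only [image_image, Homeomorph.symm_apply_apply]
    refine ⟨?_, ?_, ?_, ?_⟩
    · obtain ⟨b, hb, -⟩ := AAC.MB_surj r 0
      exact ⟨_, b, hb, rfl⟩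
    · exact Ψ.isClosed_image.2 isClosed_closure
    · rw [himg, AAC.sg_MB]
    · intro M' hsub hne hcl hinv
      have hM' : M' = Ψ '' (Ψ ⁻¹' M') := (image_preimage_eq M' Ψ.surjective).symm
      rw [hM', himg] at hinv
      have hinv' := (image_subset_image_iff Ψ.injective).1 hinv
      have := AAC.MB_minimal hdn (Ψ ⁻¹' M')
        (by rw [← image_subset_image_iff Ψ.injective, ← hM']; exact hsub)
        (by obtain ⟨q, hq⟩ := hne
            exact ⟨Ψ.symm q, by simpa using hq⟩)
        (hcl.preimage Ψ.continuous) hinv'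
      rw [hM', this]
  refine ⟨Icc (-1:ℝ) (1 + ∑' n, c n), isCompact_Icc, ordConnected_Icc, √2, hirr,
    fun q => Ψ (AAC.sg r (Ψ.symm q)), Ψ '' AAC.MB r, ⟨?_, ?_, ?_⟩, ⟨hmin, ?_⟩, ?_⟩
  · exact Ψ.continuous.comp ((AAC.sg r).continuous.comp Ψ.symm.continuous)
  · intro q
    obtain ⟨b, rfl⟩ := Ψ.surjective q
    simp only [Homeomorph.symm_apply_apply, hΨ1, hsg1]
    rfl
  · intro θ x x' hx
    obtain ⟨b, hb⟩ := Ψ.surjective (θ, x)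
    obtain ⟨b', hb'⟩ := Ψ.surjective (θ, x')
    have h1 : b.1.1 = b'.1.1 := by rw [← hΨ1, ← hΨ1, hb, hb']
    have h2 : AAC.ht c b < AAC.ht c b' := by
      rw [← hΨ2, ← hΨ2, hb, hb']; exact hx
    simp only [← hb, ← hb', Homeomorph.symm_apply_apply]
    rw [← Subtype.coe_lt_coe, hΨ2, hΨ2]
    exact AAC.ht_lt hc hs hr b.2 b'.2 h1 h2
  · intro hM
    refine ⟨{ Y := T1, g := Homeomorph.addRight r, hmap := fun q => q.1.1,
              factor := ⟨by fun_prop, ?_, ?_⟩, a11 := ?_, ap := ?_ }⟩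
    · intro θ
      obtain ⟨b, hb, h⟩ := AAC.MB_surj r θ
      exact ⟨⟨Ψ b, b, hb, rfl⟩, h⟩
    · funext q
      obtain ⟨_, b, hb, rfl⟩ := q
      simp only [comp_apply, restrictMap, MapsTo.val_restrict_apply, Homeomorph.symm_apply_apply,
        hΨ1, hsg1, Homeomorph.coe_addRight]
    · refine (AAC.NO_dense r).mono fun θ hθ => ?_
      obtain ⟨b, hb, h⟩ := AAC.MB_surj r θ
      refine ⟨⟨Ψ b, b, hb, rfl⟩, h, ?_⟩
      rintro ⟨_, b', hb', rfl⟩ h'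
      simp only [hΨ1] at h'
      have := AAC.fib_unique hb hb' (h.trans h'.symm) (by rw [h]; exact hθ)
      subst this
      rfl
    · intro ε hε
      refine ⟨ε, hε, fun y y' hd n => ?_⟩
      have hz : ∀ (n : ℤ) (y : T1), zIter (Homeomorph.addRight r).toEquiv n y = y + n • r := by
        intro n y
        have hs1 : ∀ z : T1, (Homeomorph.addRight r).toEquiv z = z + r := fun z => rfl
        have hs2 : ∀ z : T1, ((Homeomorph.addRight r).toEquiv : Equiv.Perm T1)⁻¹ z = z - r := by
          intro z
          rw [Equiv.Perm.inv_eq_iff_eq, hs1, sub_add_cancel]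
        unfold zIter
        induction n using Int.induction_on generalizing y with
        | zero => simp
        | succ k ih => rw [zpow_add_one, Equiv.Perm.mul_apply, hs1, ih, add_smul, one_smul]; abel
        | pred k ih => rw [zpow_sub_one, Equiv.Perm.mul_apply, hs2, ih, sub_smul, one_smul]; abel
      rw [hz, hz, dist_add_right]
      exact hd
  · rw [ssubset_iff_exists]
    refine ⟨?_, ?_⟩
    · rintro ⟨θ, x⟩ hx
      have hmem : (x : ℝ) ∈ fiberSet (Ψ '' AAC.MB r) θ := ⟨x, hx, rfl⟩
      refine ⟨csInf_le ⟨-1, ?_⟩ hmem, le_csSup ⟨1 + ∑' n, c n, ?_⟩ hmem⟩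
      · rintro _ ⟨z, -, rfl⟩; exact z.2.1
      · rintro _ ⟨z, -, rfl⟩; exact z.2.2
    · obtain ⟨b0, hb0, h0⟩ := AAC.MB_endpoints r (q := 0) (by norm_num)
      obtain ⟨b1, hb1, h1⟩ := AAC.MB_endpoints r (q := 1) (by norm_num)
      have t0 : b0.1.1 = 0 := by
        have := (AAC.MB_prop hb0).2 0
        rw [h0] at this
        simpa using this.symm
      have t1 : b1.1.1 = 0 := by
        have := (AAC.MB_prop hb1).2 0
        rw [h1, zero_smul, sub_zero] at this
        rw [← this]
        exact AddCircle.coe_period 1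
      have y0 := (AAC.MB_prop hb0).1
      have y1 := (AAC.MB_prop hb1).1
      let bm : AAC.B r := ⟨_, AAC.gap_mem hr⟩
      have hbm : bm.1.2.2 0 = 1 / 2 := rfl
      have l0 := AAC.ht_le hc hs b0.2 bm.2
        (AAC.zero_Le hr b0.2 bm.2 t0 rfl y0 rfl (by rw [h0, hbm]; norm_num))
      have l1 := AAC.ht_le hc hs bm.2 b1.2
        (AAC.zero_Le hr bm.2 b1.2 rfl t1 rfl y1 (by rw [h1, hbm]; norm_num))
      have m0 : AAC.ht c b0 ∈ fiberSet (Ψ '' AAC.MB r) (0 : T1) :=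
        ⟨(Ψ b0).2, ⟨b0, hb0, Prod.ext t0 rfl⟩, rfl⟩
      have m1 : AAC.ht c b1 ∈ fiberSet (Ψ '' AAC.MB r) (0 : T1) :=
        ⟨(Ψ b1).2, ⟨b1, hb1, Prod.ext t1 rfl⟩, rfl⟩
      refine ⟨Ψ bm, ⟨?_, ?_⟩, ?_⟩
      · refine (csInf_le ⟨-1, ?_⟩ m0).trans l0
        rintro _ ⟨z, -, rfl⟩; exact z.2.1
      · refine l1.trans (le_csSup ⟨1 + ∑' n, c n, ?_⟩ m1)
        rintro _ ⟨z, -, rfl⟩; exact z.2.2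
      · rintro ⟨b, hb, hbe⟩
        rw [Ψ.injective hbe] at hb
        have := (AAC.MB_prop hb).2 0
        rw [hbm, zero_smul, sub_zero] at this
        exact AAC.half_ne this

end
end

section
/- There exists a minimal homeomorphism f of the two-torus T² which is point-distal, not distal, and almost automorphic; moreover f can be taken of skew product form f(θ,x) = (θ+ω, f_θ(x)) over an irrational rotation, semiconjugate to an irrational rotation (θ,x) ↦ (θ+ω, x+ρ) of T² via a map h which is bijective except on a countable union of vertical segments (each mapped to a single point of one orbit of the rotation), and whose set of non-distal points equals this union of segments. -/
open Set Function MeasureTheory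

noncomputable section

/-- `x` is a distal point of the invertible system `f`:
`inf_{n ∈ ℤ} d(fⁿ(x), fⁿ(y)) > 0` for every `y ≠ x`. -/
def IsDistalPt {X : Type*} [MetricSpace X] (f : Equiv.Perm X) (x : X) : Prop :=
  ∀ y : X, y ≠ x → ∃ c > (0 : ℝ), ∀ n : ℤ, c ≤ dist (zIter f n x) (zIter f n y)

/-! ### Existence of a minimal translation of the two-torus -/

lemma exists_div_near (x g : T1) (n : ℕ) (hn : 0 < n) :
    ∃ v : T1, (n : ℤ) • v = g ∧ ‖v - x‖ ≤ 1 / n := by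
  obtain ⟨r, hr, hrg⟩ : ∃ r : ℝ, r ∈ Ico (0 : ℝ) (0 + 1) ∧ (r : T1) = g - (n : ℤ) • x := by
    have := AddCircle.coe_image_Ico_eq (1 : ℝ) 0
    have h2 : g - (n : ℤ) • x ∈ ((↑) '' Ico (0 : ℝ) (0 + 1) : Set T1) := by rw [this]; trivial
    obtain ⟨r, h1, h2⟩ := h2
    exact ⟨r, h1, h2⟩
  have hn' : (0 : ℝ) < n := by exact_mod_cast hn
  refine ⟨x + ((r / n : ℝ) : T1), ?_, ?_⟩
  · rw [smul_add, ← AddCircle.coe_zsmul]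
    have : (n : ℤ) • (r / n) = r := by
      simp; field_simp
    rw [this, hrg]; abel
  · rw [add_sub_cancel_left]
    refine (QuotientAddGroup.norm_mk_le_norm (S := AddSubgroup.zmultiples (1 : ℝ)) (m := r / n)).trans ?_
    simp only [zero_add, mem_Ico] at hr
    rw [Real.norm_eq_abs, abs_of_nonneg (div_nonneg hr.1 hn'.le)]
    gcongr
    exact hr.2.le

lemma exists_dense_pair : ∃ g : T1 × T1, Dense (range fun n : ℤ => n • g) := by
  let B := TopologicalSpace.countableBasis (T1 × T1)
  have hB := TopologicalSpace.isBasis_countableBasis (T1 × T1)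
  have : Countable B := (TopologicalSpace.countable_countableBasis (T1 × T1)).to_subtype
  have hd : Dense (⋂ U : B, {g : T1 × T1 | ∃ n : ℤ, n • g ∈ (U : Set (T1 × T1))}) := by
    apply dense_iInter_of_isOpen
    · intro U
      have : {g : T1 × T1 | ∃ n : ℤ, n • g ∈ (U : Set (T1 × T1))}
          = ⋃ n : ℤ, (fun g => n • g) ⁻¹' (U : Set (T1 × T1)) := by ext; simp
      rw [this]
      refine isOpen_iUnion fun n => (hB.isOpen U.2).preimage ?_
      exact continuous_zsmul n
    · intro U
      obtain ⟨u, hu⟩ := TopologicalSpace.nonempty_of_mem_countableBasis U.2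
      rw [Metric.dense_iff]
      intro x r hr
      obtain ⟨n, hn⟩ := exists_nat_one_div_lt hr
      obtain ⟨v, hv, hv'⟩ := exists_div_near x.1 u.1 (n + 1) (by omega)
      obtain ⟨w, hw, hw'⟩ := exists_div_near x.2 u.2 (n + 1) (by omega)
      refine ⟨(v, w), ?_, ((n + 1 : ℕ) : ℤ), ?_⟩
      · rw [Metric.mem_ball, Prod.dist_eq, dist_eq_norm, dist_eq_norm]
        push_cast at hv' hw'
        exact max_lt (hv'.trans_lt hn) (hw'.trans_lt hn)
      · have : ((n + 1 : ℕ) : ℤ) • (v, w) = u := Prod.ext hv hw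
        rw [this]; exact hu
  obtain ⟨g, hg⟩ := hd.nonempty
  refine ⟨g, ?_⟩
  rw [hB.dense_iff]
  intro o ho _
  obtain ⟨n, hn⟩ := mem_iInter.1 hg ⟨o, ho⟩
  exact ⟨n • g, hn, n, rfl⟩

/-! ### The one-point model -/

def psi (σ : T1) : ℝ := ‖σ - ((1 / 4 : ℝ) : T1)‖ - 1 / 4

def cc (t : T1) : ℝ := 1 - ‖t‖

def HH (t σ : T1) : T1 := σ + ((cc t * psi σ : ℝ) : T1)

lemma T1_norm_le (x : T1) : ‖x‖ ≤ 1 / 2 := by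
  simpa using AddCircle.norm_le_half_period (1 : ℝ) one_ne_zero (x := x)

lemma T1_norm_coe_le (x : ℝ) : ‖(x : T1)‖ ≤ |x| := QuotientAddGroup.norm_mk_le_norm

lemma T1_norm_coe {x : ℝ} (h : |x| ≤ 1 / 2) : ‖(x : T1)‖ = |x| :=
  (AddCircle.norm_coe_eq_abs_iff (1 : ℝ) one_ne_zero).2 (by simpa using h)

lemma cc_nonneg (t : T1) : 0 ≤ cc t := by have := T1_norm_le t; unfold cc; linarith

lemma cc_le (t : T1) : cc t ≤ 1 := by have := norm_nonneg t; unfold cc; linarith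

lemma cc_lt {t : T1} (h : t ≠ 0) : cc t < 1 := by
  have := norm_pos_iff.2 h; unfold cc; linarith

lemma cc_zero : cc 0 = 1 := by simp [cc]

lemma psi_abs (σ : T1) : |psi σ| ≤ 1 / 4 := by
  have h1 := T1_norm_le (σ - ((1 / 4 : ℝ) : T1))
  have h2 := norm_nonneg (σ - ((1 / 4 : ℝ) : T1))
  unfold psi
  rw [abs_le]; constructor <;> linarith

lemma psi_lip (σ σ' : T1) : |psi σ - psi σ'| ≤ ‖σ - σ'‖ := by
  unfold psi
  have := abs_norm_sub_norm_le (σ - ((1 / 4 : ℝ) : T1)) (σ' - ((1 / 4 : ℝ) : T1))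
  simpa using this

lemma continuous_psi : Continuous psi := by unfold psi; fun_prop

lemma continuous_cc : Continuous cc := by unfold cc; fun_prop

lemma continuous_T1_coe : Continuous (fun x : ℝ => (x : T1)) := AddCircle.continuous_mk' 1

lemma continuous_HH {X : Type*} [TopologicalSpace X] {a b : X → T1} (ha : Continuous a)
    (hb : Continuous b) : Continuous (fun p => HH (a p) (b p)) := by
  unfold HH
  exact hb.add (continuous_T1_coe.comp
    ((continuous_cc.comp ha).mul (continuous_psi.comp hb)))

lemma HH_inj {t : T1} (ht : t ≠ 0) {σ σ' : T1} (h : HH t σ = HH t σ') : σ = σ' := by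
  unfold HH at h
  have h1 : σ - σ' = ((cc t * (psi σ' - psi σ) : ℝ) : T1) := by
    have : ((cc t * (psi σ' - psi σ) : ℝ) : T1)
        = ((cc t * psi σ' : ℝ) : T1) - ((cc t * psi σ : ℝ) : T1) := by
      rw [mul_sub]; rfl
    rw [this, sub_eq_sub_iff_add_eq_add, h, add_comm]
  have h2 : ‖σ - σ'‖ ≤ cc t * ‖σ - σ'‖ := by
    calc ‖σ - σ'‖ = ‖((cc t * (psi σ' - psi σ) : ℝ) : T1)‖ := by rw [← h1]
      _ ≤ |cc t * (psi σ' - psi σ)| := T1_norm_coe_le _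
      _ = cc t * |psi σ - psi σ'| := by rw [abs_mul, abs_of_nonneg (cc_nonneg t), abs_sub_comm]
      _ ≤ _ := mul_le_mul_of_nonneg_left (psi_lip _ _) (cc_nonneg t)
  have h3 : ‖σ - σ'‖ = 0 := by
    have := cc_lt ht
    have := norm_nonneg (σ - σ')
    nlinarith
  exact sub_eq_zero.1 (norm_eq_zero.1 h3)

lemma surj_of_bdd {g : ℝ → ℝ} (hg : Continuous g) (C : ℝ) (hC : ∀ x, |g x| ≤ C) :
    Surjective fun x => x + g x := by
  apply Continuous.surjective (by fun_prop)
  · refine Filter.tendsto_atTop_mono (f := fun x => x + (-C)) (fun x => ?_)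
      (Filter.tendsto_atTop_add_const_right _ _ Filter.tendsto_id)
    have := (abs_le.1 (hC x)).1
    linarith
  · refine Filter.tendsto_atBot_mono (f := fun x => x + C) (fun x => ?_)
      (Filter.tendsto_atBot_add_const_right _ _ Filter.tendsto_id)
    have := (abs_le.1 (hC x)).2
    linarith

lemma T1_coe_surj (x : T1) : ∃ r : ℝ, (r : T1) = x := QuotientAddGroup.mk_surjective x

lemma HH_surj (t : T1) : Surjective (HH t) := by
  intro y
  obtain ⟨Y, rfl⟩ := T1_coe_surj y
  obtain ⟨S, hS⟩ := surj_of_bdd (g := fun S => cc t * psi (S : T1))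
    (continuous_const.mul (continuous_psi.comp continuous_T1_coe)) (1 / 4) (fun x => by
      rw [abs_mul, abs_of_nonneg (cc_nonneg t)]
      have := psi_abs (x : T1)
      have := cc_le t
      have := cc_nonneg t
      have := abs_nonneg (psi (x : T1))
      nlinarith) Y
  refine ⟨(S : T1), ?_⟩
  rw [← hS]; rfl

/-- Near-zero part of the circle. -/
lemma psi_coe_near {S : ℝ} (h : |S| ≤ 1 / 4) : psi (S : T1) = -S := by
  have h' := abs_le.1 h
  unfold psi
  rw [← AddCircle.coe_sub, T1_norm_coe (by rw [abs_le]; constructor <;> linarith),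
    abs_of_nonpos (by linarith)]
  ring

lemma psi_coe_far {S : ℝ} (h : 1 / 4 ≤ S) (h' : S ≤ 3 / 4) : psi (S : T1) = S - 1 / 2 := by
  unfold psi
  rw [← AddCircle.coe_sub, T1_norm_coe (by rw [abs_le]; constructor <;> linarith),
    abs_of_nonneg (by linarith)]
  ring

lemma HH_zero_near {S : ℝ} (h : |S| ≤ 1 / 4) : HH 0 (S : T1) = 0 := by
  unfold HH
  rw [psi_coe_near h, cc_zero, ← AddCircle.coe_add]
  simp

lemma T1_cases (σ : T1) : (∃ S : ℝ, |S| ≤ 1 / 4 ∧ (S : T1) = σ) ∨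
    (∃ S : ℝ, 1 / 4 < S ∧ S < 3 / 4 ∧ (S : T1) = σ) := by
  have h2 : σ ∈ ((↑) '' Ico (-(1 / 4) : ℝ) (-(1 / 4) + 1) : Set T1) := by
    rw [AddCircle.coe_image_Ico_eq]; trivial
  obtain ⟨S, ⟨h1, h3⟩, h4⟩ := h2
  by_cases h : S ≤ 1 / 4
  · exact Or.inl ⟨S, abs_le.2 ⟨by linarith, h⟩, h4⟩
  · exact Or.inr ⟨S, not_le.1 h, by linarith, h4⟩

lemma HH_zero_far {S : ℝ} (h : 1 / 4 < S) (h' : S < 3 / 4) :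
    HH 0 (S : T1) = ((2 * S - 1 / 2 : ℝ) : T1) := by
  unfold HH
  rw [psi_coe_far h.le h'.le, cc_zero, ← AddCircle.coe_add]
  congr 1; ring

lemma far_ne {S : ℝ} (h : 1 / 4 < S) (h' : S < 3 / 4) : HH 0 (S : T1) ≠ 0 := by
  rw [HH_zero_far h h']
  intro h0
  have := (AddCircle.coe_eq_coe_iff_of_mem_Ico (p := (1 : ℝ)) (a := 0) (x := 2 * S - 1 / 2) (y := 0)
    ⟨by linarith, by linarith⟩ ⟨by norm_num, by norm_num⟩).1 (by rw [h0]; rfl)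
  linarith

lemma HH_zero_eq {σ : T1} (h : HH 0 σ = 0) : ∃ S : ℝ, |S| ≤ 1 / 4 ∧ (S : T1) = σ := by
  rcases T1_cases σ with h1 | ⟨S, h1, h2, rfl⟩
  · exact h1
  · exact absurd h (far_ne h1 h2)

lemma HH_inj' {t σ σ' : T1} (hne : t ≠ 0 ∨ HH t σ ≠ 0) (h : HH t σ = HH t σ') : σ = σ' := by
  by_cases ht : t = 0
  · subst ht
    have h1 : HH 0 σ ≠ 0 := by simpa using hne
    rcases T1_cases σ with ⟨S, hS, rfl⟩ | ⟨S, hS, hS', rfl⟩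
    · exact absurd (HH_zero_near hS) h1
    rcases T1_cases σ' with ⟨R, hR, rfl⟩ | ⟨R, hR, hR', rfl⟩
    · rw [HH_zero_near hR] at h; exact absurd h h1
    rw [HH_zero_far hS hS', HH_zero_far hR hR'] at h
    have := (AddCircle.coe_eq_coe_iff_of_mem_Ico (p := (1 : ℝ)) (a := 0)
      (x := 2 * S - 1 / 2) (y := 2 * R - 1 / 2)
      ⟨by linarith, by linarith⟩ ⟨by linarith, by linarith⟩).1 h
    have : S = R := by linarith
    rw [this]
  · exact HH_inj ht h

/-- For `t ≠ 0`, `HH t` has a continuous inverse. -/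
lemma exists_KK {t : T1} (ht : t ≠ 0) :
    ∃ K : T1 → T1, Continuous K ∧ ∀ y, HH t (K y) = y := by
  let e := Equiv.ofBijective (HH t) ⟨fun _ _ h => HH_inj ht h, HH_surj t⟩
  have hc : Continuous (HH t) := continuous_HH continuous_const continuous_id
  have hc' : Continuous e := hc
  exact ⟨e.symm, hc'.continuous_symm_of_equiv_compact_to_t2, fun y => e.apply_symm_apply y⟩

/-! ### The extension space -/

/-- The extended space. -/
def XX (ω ρ : T1) : Set (T1 × T1 × (ℤ → T1)) :=
  {p | ∀ n : ℤ, HH (p.1 - n • ω) (p.2.2 n) = p.2.1 - n • ρ}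

def uu (ω : T1) (p : T1 × T1 × (ℤ → T1)) (n : ℤ) : ℝ := -(cc (p.1 - n • ω) * psi (p.2.2 n))

def xx (a : ℤ → ℝ) (ω : T1) (p : T1 × T1 × (ℤ → T1)) : ℝ := ∑' n, a n * uu ω p n

def Psi (a : ℤ → ℝ) (ω : T1) (p : T1 × T1 × (ℤ → T1)) : T1 × T1 :=
  (p.1, p.2.1 + (xx a ω p : T1))

lemma uu_abs (ω : T1) (p : T1 × T1 × (ℤ → T1)) (n : ℤ) : |uu ω p n| ≤ 1 / 4 := by
  unfold uu
  rw [abs_neg, abs_mul, abs_of_nonneg (cc_nonneg _)]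
  have h1 := cc_le (p.1 - n • ω)
  have h2 := psi_abs (p.2.2 n)
  have h3 := cc_nonneg (p.1 - n • ω)
  have h4 := abs_nonneg (psi (p.2.2 n))
  nlinarith

lemma continuous_uu (ω : T1) (n : ℤ) : Continuous fun p => uu ω p n := by
  unfold uu
  refine ((continuous_cc.comp (continuous_fst.sub continuous_const)).mul
    (continuous_psi.comp ((continuous_apply n).comp (continuous_snd.comp continuous_snd)))).neg

lemma isClosed_XX (ω ρ : T1) : IsClosed (XX ω ρ) := by
  have : XX ω ρ = ⋂ n : ℤ, {p | HH (p.1 - n • ω) (p.2.2 n) = p.2.1 - n • ρ} := by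
    ext p; simp [XX]
  rw [this]
  refine isClosed_iInter fun n => isClosed_eq ?_ ?_
  · exact continuous_HH (continuous_fst.sub continuous_const)
      ((continuous_apply n).comp (continuous_snd.comp continuous_snd))
  · exact (continuous_fst.comp continuous_snd).sub continuous_const

lemma term_le {a : ℤ → ℝ} (ha : ∀ n, 0 < a n) (ω : T1) (p : T1 × T1 × (ℤ → T1)) (n : ℤ) :
    ‖a n * uu ω p n‖ ≤ a n := by
  rw [Real.norm_eq_abs, abs_mul, abs_of_pos (ha n)]
  have := uu_abs ω p n
  have := ha n
  nlinarith

lemma summable_term {a : ℤ → ℝ} (ha : ∀ n, 0 < a n) (hs : Summable a) (ω : T1)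
    (p : T1 × T1 × (ℤ → T1)) : Summable fun n => a n * uu ω p n :=
  Summable.of_norm_bounded hs (term_le ha ω p)

lemma continuous_xx {a : ℤ → ℝ} (ha : ∀ n, 0 < a n) (hs : Summable a) (ω : T1) :
    Continuous (xx a ω) :=
  continuous_tsum (fun n => continuous_const.mul (continuous_uu ω n)) hs
    (fun n p => term_le ha ω p n)

lemma xx_abs {a : ℤ → ℝ} (ha : ∀ n, 0 < a n) (hs : Summable a) (ω : T1)
    (p : T1 × T1 × (ℤ → T1)) : |xx a ω p| ≤ ∑' n, a n :=
  tsum_of_norm_bounded hs.hasSum (term_le ha ω p)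

lemma continuous_Psi {a : ℤ → ℝ} (ha : ∀ n, 0 < a n) (hs : Summable a) (ω : T1) :
    Continuous (Psi a ω) :=
  continuous_fst.prodMk ((continuous_fst.comp continuous_snd).add
    (continuous_T1_coe.comp (continuous_xx ha hs ω)))

lemma sig_eq {ω ρ : T1} {p : T1 × T1 × (ℤ → T1)} (hp : p ∈ XX ω ρ) (n : ℤ) :
    p.2.2 n = p.2.1 - n • ρ + (uu ω p n : T1) := by
  rw [← hp n]
  unfold uu HH
  rw [AddCircle.coe_neg]; abel

lemma uu_mono {ω ρ : T1} {p q : T1 × T1 × (ℤ → T1)} (hp : p ∈ XX ω ρ) (hq : q ∈ XX ω ρ)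
    (h1 : p.1 = q.1) {Y Y' : ℝ} (hY : (Y : T1) = p.2.1) (hY' : (Y' : T1) = q.2.1) (hlt : Y < Y')
    (n : ℤ) : Y + uu ω p n ≤ Y' + uu ω q n := by
  have e : p.2.2 n - q.2.2 n = ((Y - Y' + (uu ω p n - uu ω q n) : ℝ) : T1) := by
    rw [sig_eq hp n, sig_eq hq n, ← hY, ← hY', AddCircle.coe_add, AddCircle.coe_sub,
      AddCircle.coe_sub]
    abel
  have h2 : |uu ω p n - uu ω q n| ≤ |Y - Y' + (uu ω p n - uu ω q n)| := by
    calc |uu ω p n - uu ω q n| = cc (q.1 - n • ω) * |psi (p.2.2 n) - psi (q.2.2 n)| := by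
          unfold uu
          have e2 : -(cc (p.1 - n • ω) * psi (p.2.2 n)) - -(cc (q.1 - n • ω) * psi (q.2.2 n))
              = cc (q.1 - n • ω) * -(psi (p.2.2 n) - psi (q.2.2 n)) := by rw [h1]; ring
          rw [e2, abs_mul, abs_neg, abs_of_nonneg (cc_nonneg (q.1 - n • ω))]
      _ ≤ |psi (p.2.2 n) - psi (q.2.2 n)| :=
          mul_le_of_le_one_left (abs_nonneg _) (cc_le _)
      _ ≤ ‖p.2.2 n - q.2.2 n‖ := psi_lip _ _
      _ ≤ _ := by rw [e]; exact T1_norm_coe_le _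
  by_contra hcon
  push Not at hcon
  rw [abs_of_pos (by linarith), abs_of_pos (by linarith)] at h2
  linarith

lemma xx_strict {a : ℤ → ℝ} (ha : ∀ n, 0 < a n) (hs : Summable a) (hA : ∑' n, a n ≤ 1 / 2)
    {ω ρ : T1} {p q : T1 × T1 × (ℤ → T1)} (hp : p ∈ XX ω ρ) (hq : q ∈ XX ω ρ)
    (h1 : p.1 = q.1) {Y Y' : ℝ} (hY : (Y : T1) = p.2.1) (hY' : (Y' : T1) = q.2.1) (hlt : Y < Y') :
    Y + xx a ω p < Y' + xx a ω q := by
  have h : xx a ω p - xx a ω q ≤ (∑' n, a n) * (Y' - Y) := by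
    unfold xx
    rw [← (summable_term ha hs ω p).tsum_sub (summable_term ha hs ω q), ← tsum_mul_right]
    refine ((summable_term ha hs ω p).sub (summable_term ha hs ω q)).tsum_le_tsum (fun n => ?_)
      (hs.mul_right _)
    have := uu_mono hp hq h1 hY hY' hlt n
    rw [← mul_sub]
    exact mul_le_mul_of_nonneg_left (by linarith) (ha n).le
  nlinarith

lemma XX_ext {ω ρ : T1} {p q : T1 × T1 × (ℤ → T1)} (hp : p ∈ XX ω ρ) (hq : q ∈ XX ω ρ)
    (h1 : p.1 = q.1) (h2 : p.2.1 = q.2.1)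
    (h : ∀ n : ℤ, p.1 - n • ω ≠ 0 ∨ p.2.1 - n • ρ ≠ 0) : p = q := by
  refine Prod.ext h1 (Prod.ext h2 (funext fun n => ?_))
  have e1 := hp n
  have e2 := hq n
  rw [← h1, ← h2] at e2
  refine HH_inj' (t := p.1 - n • ω) ?_ (e1.trans e2.symm)
  rw [e1]; exact h n

lemma XX_ext_m {ω ρ : T1} {p q : T1 × T1 × (ℤ → T1)} (hp : p ∈ XX ω ρ) (hq : q ∈ XX ω ρ)
    (h1 : p.1 = q.1) (m : ℤ) (hm : ∀ n, n ≠ m → p.1 - n • ω ≠ 0)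
    (h : p.2.2 m = q.2.2 m) : p = q := by
  have h2 : p.2.1 = q.2.1 := by
    have e1 := hp m
    have e2 := hq m
    rw [← h1, ← h] at e2
    exact sub_left_injective (e1.symm.trans e2)
  refine Prod.ext h1 (Prod.ext h2 (funext fun n => ?_))
  by_cases hn : n = m
  · rw [hn, h]
  have e1 := hp n
  have e2 := hq n
  rw [← h1, ← h2] at e2
  exact HH_inj (hm n hn) (e1.trans e2.symm)

lemma exists_m {ω : T1} (hω : ∀ n : ℤ, n • ω = 0 → n = 0) (θ : T1) :
    ∃ m : ℤ, ∀ n, n ≠ m → θ - n • ω ≠ 0 := by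
  by_cases h : ∃ m : ℤ, θ - m • ω = 0
  · obtain ⟨m, hm⟩ := h
    refine ⟨m, fun n hn h0 => hn ?_⟩
    have : (n - m) • ω = 0 := by
      rw [sub_smul, ← sub_eq_zero.1 hm, ← sub_eq_zero.1 h0, sub_self]
    have := hω _ this
    omega
  · push Not at h
    exact ⟨0, fun n _ => h n⟩

lemma Psi_inj {a : ℤ → ℝ} (ha : ∀ n, 0 < a n) (hs : Summable a) (hA : ∑' n, a n ≤ 1 / 2)
    {ω ρ : T1} (hω : ∀ n : ℤ, n • ω = 0 → n = 0)
    {p q : T1 × T1 × (ℤ → T1)} (hp : p ∈ XX ω ρ) (hq : q ∈ XX ω ρ)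
    (h : Psi a ω p = Psi a ω q) : p = q := by
  have h1 : p.1 = q.1 := (Prod.ext_iff.1 h).1
  have h2 : p.2.1 + (xx a ω p : T1) = q.2.1 + (xx a ω q : T1) := (Prod.ext_iff.1 h).2
  obtain ⟨Y, hY⟩ := T1_coe_surj p.2.1
  obtain ⟨Y', hY', hE⟩ : ∃ Y' : ℝ, (Y' : T1) = q.2.1 ∧ Y + xx a ω p = Y' + xx a ω q := by
    refine ⟨Y + xx a ω p - xx a ω q, ?_, by ring⟩
    rw [AddCircle.coe_sub, AddCircle.coe_add, hY, h2]; abel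
  have hYY : Y = Y' := by
    rcases lt_trichotomy Y Y' with hlt | hlt | hlt
    · exact absurd hE (xx_strict ha hs hA hp hq h1 hY hY' hlt).ne
    · exact hlt
    · exact absurd hE (xx_strict ha hs hA hq hp h1.symm hY' hY hlt).ne'
  have h3 : p.2.1 = q.2.1 := by rw [← hY, ← hY', hYY]
  have h4 : xx a ω p = xx a ω q := by rw [hYY] at hE; linarith
  obtain ⟨m, hm⟩ := exists_m hω p.1
  refine XX_ext_m hp hq h1 m hm ?_
  have h5 : ∀ n, n ≠ m → uu ω p n = uu ω q n := by
    intro n hn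
    have e1 := hp n
    have e2 := hq n
    rw [← h1, ← h3] at e2
    have := HH_inj (hm n hn) (e1.trans e2.symm)
    unfold uu
    rw [h1, this]
  have h6 : uu ω p m = uu ω q m := by
    have e : ∑' n, (a n * uu ω p n - a n * uu ω q n) = a m * uu ω p m - a m * uu ω q m := by
      apply tsum_eq_single
      intro n hn
      rw [h5 n hn, sub_self]
    rw [(summable_term ha hs ω p).tsum_sub (summable_term ha hs ω q)] at e
    unfold xx at h4
    rw [h4, sub_self, ← mul_sub] at e
    have := (mul_eq_zero.1 e.symm).resolve_left (ha m).ne'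
    linarith
  rw [sig_eq hp, sig_eq hq, h3, h6]

lemma exists_pt {ω : T1} (ρ θ : T1) (m : ℤ) (hm : ∀ n, n ≠ m → θ - n • ω ≠ 0) :
    ∃ P : T1 → T1 × T1 × (ℤ → T1), Continuous P ∧
      ∀ σ, P σ ∈ XX ω ρ ∧ (P σ).1 = θ ∧ (P σ).2.2 m = σ := by
  choose! K hK hK' using fun n hn => exists_KK (hm n hn)
  have hy : Continuous fun σ => HH (θ - m • ω) σ + m • ρ :=
    (continuous_HH continuous_const continuous_id).add continuous_const
  refine ⟨fun σ => (θ, HH (θ - m • ω) σ + m • ρ, fun n => if n = m then σ else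
    K n (HH (θ - m • ω) σ + m • ρ - n • ρ)), ?_, fun σ => ⟨?_, rfl, ?_⟩⟩
  · refine continuous_const.prodMk (hy.prodMk (continuous_pi fun n => ?_))
    by_cases hn : n = m
    · simp only [hn, if_true]; exact continuous_id
    · simp only [hn, if_false]
      exact (hK n hn).comp (hy.sub continuous_const)
  · intro n
    by_cases hn : n = m
    · simp [hn]
    · simp only [hn, if_false]
      exact hK' n hn _
  · simp

lemma Psi_surj {a : ℤ → ℝ} (ha : ∀ n, 0 < a n) (hs : Summable a)
    {ω ρ : T1} (hω : ∀ n : ℤ, n • ω = 0 → n = 0) (z : T1 × T1) :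
    ∃ p ∈ XX ω ρ, Psi a ω p = z := by
  obtain ⟨θ, x⟩ := z
  obtain ⟨m, hm⟩ := exists_m hω θ
  obtain ⟨P, hPc, hP⟩ := exists_pt ρ θ m hm
  obtain ⟨R, hR⟩ := T1_coe_surj (m • ρ)
  obtain ⟨X, rfl⟩ := T1_coe_surj x
  have hc : Continuous fun S : ℝ => P (S : T1) := hPc.comp continuous_T1_coe
  obtain ⟨S, hS⟩ := surj_of_bdd
    (g := fun S => cc (θ - m • ω) * psi (S : T1) + R + xx a ω (P (S : T1)))
    (((continuous_const.mul (continuous_psi.comp continuous_T1_coe)).add continuous_const).add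
      ((continuous_xx ha hs ω).comp hc)) (1 / 4 + |R| + ∑' n, a n) (fun S => by
      refine (abs_add_le _ _).trans (add_le_add ((abs_add_le _ _).trans ?_) (xx_abs ha hs ω _))
      gcongr
      rw [abs_mul, abs_of_nonneg (cc_nonneg _)]
      have h1 := psi_abs (S : T1)
      have h2 := cc_le (θ - m • ω)
      have h3 := cc_nonneg (θ - m • ω)
      have h4 := abs_nonneg (psi (S : T1))
      nlinarith) X
  obtain ⟨h1, h2, h3⟩ := hP (S : T1)
  refine ⟨P (S : T1), h1, Prod.ext h2 ?_⟩
  have h4 := h1 m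
  rw [h2, h3, ← hR] at h4
  have h5 : (P (S : T1)).2.1 = ((S + cc (θ - m • ω) * psi (S : T1) + R : ℝ) : T1) := by
    rw [sub_eq_iff_eq_add.1 h4.symm, AddCircle.coe_add, AddCircle.coe_add]
    rfl
  change (P (S : T1)).2.1 + (xx a ω (P (S : T1)) : T1) = (X : T1)
  rw [h5, ← AddCircle.coe_add, ← hS]
  congr 1
  ring

/-! ### The dynamics -/

lemma zIter_unique {X : Type*} (g : Equiv.Perm X) (G : ℤ → X → X) (h0 : ∀ x, G 0 x = x)
    (h1 : ∀ n x, G (n + 1) x = g (G n x)) (n : ℤ) (x : X) : zIter g n x = G n x := by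
  unfold zIter
  induction n using Int.induction_on with
  | zero => simp [h0]
  | succ k ih => rw [h1, ← ih, add_comm, zpow_add, zpow_one, Equiv.Perm.mul_apply]
  | pred k ih =>
    apply g.injective
    rw [← h1, sub_add_cancel, ← ih, ← Equiv.Perm.mul_apply]
    congr 1
    rw [← zpow_one_add]; congr 1; ring

def shiftFun (ω ρ : T1) (k : ℤ) (p : T1 × T1 × (ℤ → T1)) : T1 × T1 × (ℤ → T1) :=
  (p.1 + k • ω, p.2.1 + k • ρ, fun n => p.2.2 (n - k))

lemma shiftFun_mem {ω ρ : T1} (k : ℤ) {p : T1 × T1 × (ℤ → T1)} (hp : p ∈ XX ω ρ) :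
    shiftFun ω ρ k p ∈ XX ω ρ := by
  intro n
  have := hp (n - k)
  simp only [shiftFun]
  have e1 : p.1 + k • ω - n • ω = p.1 - (n - k) • ω := by rw [sub_smul]; abel
  have e2 : p.2.1 + k • ρ - n • ρ = p.2.1 - (n - k) • ρ := by rw [sub_smul]; abel
  rw [e1, e2, this]

lemma continuous_shiftFun (ω ρ : T1) (k : ℤ) : Continuous (shiftFun ω ρ k) := by
  unfold shiftFun
  exact (continuous_fst.add continuous_const).prodMk
    (((continuous_fst.comp continuous_snd).add continuous_const).prodMk
      (continuous_pi fun n => (continuous_apply (n - k)).comp (continuous_snd.comp continuous_snd)))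

lemma shiftFun_add (ω ρ : T1) (k l : ℤ) (p : T1 × T1 × (ℤ → T1)) :
    shiftFun ω ρ k (shiftFun ω ρ l p) = shiftFun ω ρ (l + k) p := by
  unfold shiftFun
  refine Prod.ext ?_ (Prod.ext ?_ ?_)
  · simp only [add_smul]; abel
  · simp only [add_smul]; abel
  · funext n
    have : n - k - l = n - (l + k) := by ring
    simp only [this]

lemma shiftFun_zero (ω ρ : T1) (p : T1 × T1 × (ℤ → T1)) : shiftFun ω ρ 0 p = p := by
  simp [shiftFun]

def SH (ω ρ : T1) (k : ℤ) : XX ω ρ ≃ₜ XX ω ρ where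
  toFun p := ⟨shiftFun ω ρ k p.1, shiftFun_mem k p.2⟩
  invFun p := ⟨shiftFun ω ρ (-k) p.1, shiftFun_mem (-k) p.2⟩
  left_inv p := Subtype.ext (by simp [shiftFun_add, shiftFun_zero])
  right_inv p := Subtype.ext (by simp [shiftFun_add, shiftFun_zero])
  continuous_toFun := ((continuous_shiftFun ω ρ k).comp continuous_subtype_val).subtype_mk _
  continuous_invFun := ((continuous_shiftFun ω ρ (-k)).comp continuous_subtype_val).subtype_mk _

instance compactSpace_XX (ω ρ : T1) : CompactSpace (XX ω ρ) :=
  isCompact_iff_compactSpace.1 (isClosed_XX ω ρ).isCompact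

lemma exists_EE {a : ℤ → ℝ} (ha : ∀ n, 0 < a n) (hs : Summable a) (hA : ∑' n, a n ≤ 1 / 2)
    {ω ρ : T1} (hω : ∀ n : ℤ, n • ω = 0 → n = 0) :
    ∃ E : XX ω ρ ≃ₜ T1 × T1, ∀ p, E p = Psi a ω p.1 := by
  let e : XX ω ρ ≃ T1 × T1 := Equiv.ofBijective (fun p => Psi a ω p.1)
    ⟨fun p q h => Subtype.ext (Psi_inj ha hs hA hω p.2 q.2 h), fun z => by
      obtain ⟨p, hp, h⟩ := Psi_surj (ρ := ρ) ha hs hω z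
      exact ⟨⟨p, hp⟩, h⟩⟩
  have hc : Continuous (fun p : XX ω ρ => Psi a ω p.1) :=
    (continuous_Psi ha hs ω).comp continuous_subtype_val
  have hc' : Continuous e := hc
  exact ⟨hc'.homeoOfEquivCompactToT2, fun p => rfl⟩

/-- projection to the translation -/
def proj (ω ρ : T1) (p : XX ω ρ) : T1 × T1 := (p.1.1, p.1.2.1)

lemma continuous_proj (ω ρ : T1) : Continuous (proj ω ρ) :=
  (continuous_fst.comp continuous_subtype_val).prodMk
    ((continuous_fst.comp continuous_snd).comp continuous_subtype_val)

lemma proj_SH (ω ρ : T1) (k : ℤ) (p : XX ω ρ) :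
    proj ω ρ (SH ω ρ k p) = proj ω ρ p + k • ((ω, ρ) : T1 × T1) := rfl

lemma proj_surj {ω : T1} (ρ : T1) (hω : ∀ n : ℤ, n • ω = 0 → n = 0) : Surjective (proj ω ρ) := by
  rintro ⟨θ, y⟩
  obtain ⟨m, hm⟩ := exists_m hω θ
  obtain ⟨P, -, hP⟩ := exists_pt ρ θ m hm
  obtain ⟨σ, hσ⟩ := HH_surj (θ - m • ω) (y - m • ρ)
  obtain ⟨h1, h2, h3⟩ := hP σ
  refine ⟨⟨P σ, h1⟩, Prod.ext h2 ?_⟩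
  have := h1 m
  rw [h2, h3, hσ] at this
  exact (sub_left_injective this).symm

lemma proj_inj {ω ρ : T1} {p q : XX ω ρ} (h : proj ω ρ p = proj ω ρ q)
    (hn : ∀ n : ℤ, proj ω ρ p ≠ (n • ω, n • ρ)) : p = q := by
  refine Subtype.ext (XX_ext p.2 q.2 (Prod.ext_iff.1 h).1 (Prod.ext_iff.1 h).2 fun n => ?_)
  by_contra hcon
  push Not at hcon
  exact hn n (Prod.ext (sub_eq_zero.1 hcon.1) (sub_eq_zero.1 hcon.2))

lemma half_ne : ((1 / 2 : ℝ) : T1) ≠ 0 := by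
  intro h
  have := T1_norm_coe (x := 1 / 2) (by norm_num [abs_of_pos])
  rw [h, norm_zero, abs_of_pos (by norm_num)] at this
  norm_num at this

lemma two_half : (2 : ℤ) • ((1 / 2 : ℝ) : T1) = 0 := by
  rw [← AddCircle.coe_zsmul]
  have : (2 : ℤ) • (1 / 2 : ℝ) = 1 := by norm_num
  rw [this]; exact AddCircle.coe_period 1

lemma dense_fst {ω ρ : T1} (hd : Dense (range fun n : ℤ => n • ((ω, ρ) : T1 × T1))) :
    DenseRange fun n : ℤ => n • ω := by
  have h1 : DenseRange (Prod.fst : T1 × T1 → T1) := Prod.fst_surjective.denseRange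
  have h2 : DenseRange fun n : ℤ => n • ((ω, ρ) : T1 × T1) := hd
  exact h1.comp h2 continuous_fst

lemma indep_of_dense {ω ρ : T1} (hd : Dense (range fun n : ℤ => n • ((ω, ρ) : T1 × T1)))
    (n : ℤ) (hn : n • ω = 0) : n = 0 := by
  by_contra h0
  have hcl : IsClosed {x : T1 | n • x = 0} := isClosed_eq (continuous_zsmul n) continuous_const
  have hsub : range (fun k : ℤ => k • ω) ⊆ {x : T1 | n • x = 0} := by
    rintro _ ⟨k, rfl⟩
    change n • k • ω = 0
    rw [smul_comm, hn, smul_zero]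
  have huniv := (dense_fst hd).closure_eq ▸ hcl.closure_subset_iff.2 hsub
  have h1 : n • (((1 / 2) / n : ℝ) : T1) = 0 := huniv (mem_univ _)
  rw [← AddCircle.coe_zsmul] at h1
  have h2 : n • ((1 / 2) / n : ℝ) = 1 / 2 := by
    have : (n : ℝ) ≠ 0 := by exact_mod_cast h0
    rw [zsmul_eq_mul]; field_simp
  rw [h2] at h1
  exact half_ne h1

lemma half_off {ω : T1} (hω : ∀ n : ℤ, n • ω = 0 → n = 0) (k n : ℤ) :
    ((1 / 2 : ℝ) : T1) + k • ω ≠ n • ω := by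
  intro h
  have h1 : ((1 / 2 : ℝ) : T1) = (n - k) • ω := by rw [sub_smul, ← h]; abel
  have h2 := two_half
  rw [h1, smul_smul] at h2
  have h3 := hω _ h2
  have h4 : n - k = 0 := by omega
  rw [h4, zero_smul] at h1
  exact half_ne h1

lemma dense_off {ω ρ : T1} (hd : Dense (range fun n : ℤ => n • ((ω, ρ) : T1 × T1))) :
    Dense {θ : T1 | ∀ n : ℤ, θ ≠ n • ω} := by
  have h1 : DenseRange fun n : ℤ => ((1 / 2 : ℝ) : T1) + n • ω :=
    (Homeomorph.addLeft ((1 / 2 : ℝ) : T1)).surjective.denseRange.comp (dense_fst hd)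
      (Homeomorph.addLeft ((1 / 2 : ℝ) : T1)).continuous
  refine h1.mono ?_
  rintro _ ⟨k, rfl⟩ n
  exact half_off (indep_of_dense hd) k n

lemma minimal_SH {ω ρ : T1} (hd : Dense (range fun n : ℤ => n • ((ω, ρ) : T1 × T1)))
    (p : XX ω ρ) : DenseRange fun k : ℤ => SH ω ρ k p := by
  have hω := indep_of_dense hd
  set M : Set (XX ω ρ) := closure (range fun k : ℤ => SH ω ρ k p) with hM
  have hMc : IsCompact M := isClosed_closure.isCompact
  have h1 : proj ω ρ '' M = univ := by
    have hcl : IsClosed (proj ω ρ '' M) := (hMc.image (continuous_proj ω ρ)).isClosed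
    have hdr : DenseRange fun n : ℤ => proj ω ρ p + n • ((ω, ρ) : T1 × T1) :=
      DenseRange.comp (Homeomorph.addLeft (proj ω ρ p)).surjective.denseRange hd
        (Homeomorph.addLeft (proj ω ρ p)).continuous
    have hsub : (range fun n : ℤ => proj ω ρ p + n • ((ω, ρ) : T1 × T1)) ⊆ proj ω ρ '' M := by
      rintro _ ⟨n, rfl⟩
      exact ⟨SH ω ρ n p, subset_closure ⟨n, rfl⟩, proj_SH ω ρ n p⟩
    have := hcl.closure_subset_iff.2 hsub
    rw [hdr.closure_eq] at this
    exact univ_subset_iff.1 this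
  have h2 : ∀ q : XX ω ρ, (∀ n : ℤ, q.1.1 ≠ n • ω) → q ∈ M := by
    intro q hq
    obtain ⟨q', hq', h⟩ : proj ω ρ q ∈ proj ω ρ '' M := by rw [h1]; trivial
    have : q = q' := proj_inj h.symm fun n hn => hq n (Prod.ext_iff.1 hn).1
    rw [this]; exact hq'
  intro q
  obtain ⟨m, hm⟩ := exists_m hω q.1.1
  have hκ : Continuous fun r : XX ω ρ => (r.1.1, r.1.2.2 m) :=
    (continuous_fst.comp continuous_subtype_val).prodMk
      (((continuous_apply m).comp (continuous_snd.comp continuous_snd)).comp continuous_subtype_val)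
  have hcl : IsClosed ((fun r : XX ω ρ => (r.1.1, r.1.2.2 m)) '' M) := (hMc.image hκ).isClosed
  have hcl2 : IsClosed {θ : T1 | (θ, q.1.2.2 m) ∈ (fun r : XX ω ρ => (r.1.1, r.1.2.2 m)) '' M} :=
    hcl.preimage (continuous_id.prodMk continuous_const)
  have hsub : {θ : T1 | ∀ n : ℤ, θ ≠ n • ω} ⊆
      {θ : T1 | (θ, q.1.2.2 m) ∈ (fun r : XX ω ρ => (r.1.1, r.1.2.2 m)) '' M} := by
    intro θ hθ
    obtain ⟨P, -, hP⟩ := exists_pt ρ θ m fun n _ => sub_ne_zero.2 (hθ n)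
    obtain ⟨e1, e2, e3⟩ := hP (q.1.2.2 m)
    exact ⟨⟨P (q.1.2.2 m), e1⟩, h2 _ (fun n => by rw [e2]; exact hθ n), Prod.ext e2 e3⟩
  have h3 := hcl2.closure_subset_iff.2 hsub
  rw [(dense_off hd).closure_eq] at h3
  obtain ⟨q', hq', h⟩ := h3 (mem_univ q.1.1)
  have : q = q' := Subtype.ext (XX_ext_m q.2 q'.2 (Prod.ext_iff.1 h).1.symm m hm
    (Prod.ext_iff.1 h).2.symm)
  rw [this]; exact hq'

lemma fibre_seg {a : ℤ → ℝ} (ha : ∀ n, 0 < a n) (hs : Summable a) (hA : ∑' n, a n ≤ 1 / 2)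
    {ω ρ : T1} (hω : ∀ n : ℤ, n • ω = 0 → n = 0) (m : ℤ) :
    ∃ A : ℝ, ∀ p : XX ω ρ, proj ω ρ p = (m • ω, m • ρ) ↔ Psi a ω p.1 ∈
      ({m • ω} : Set T1) ×ˢ ((fun t : ℝ => ((t : ℝ) : T1)) '' Set.Icc (A - a m / 4) (A + a m / 4)) := by
  have hm : ∀ n, n ≠ m → m • ω - n • ω ≠ 0 := by
    intro n hn h
    rw [← sub_smul] at h
    have := hω _ h
    omega
  obtain ⟨P, -, hP⟩ := exists_pt ρ (m • ω) m hm
  obtain ⟨R, hR⟩ := T1_coe_surj (m • ρ)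
  have hy : ∀ S : ℝ, |S| ≤ 1 / 4 → (P (S : T1)).2.1 = m • ρ := by
    intro S hS
    obtain ⟨e1, e2, e3⟩ := hP (S : T1)
    have := e1 m
    rw [e2, e3, sub_self, HH_zero_near hS] at this
    exact sub_eq_zero.1 this.symm
  have hu : ∀ S : ℝ, |S| ≤ 1 / 4 → uu ω (P (S : T1)) m = S := by
    intro S hS
    obtain ⟨e1, e2, e3⟩ := hP (S : T1)
    unfold uu
    rw [e2, e3, sub_self, cc_zero, psi_coe_near hS]; ring
  have hx : ∀ S : ℝ, |S| ≤ 1 / 4 →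
      xx a ω (P (S : T1)) = xx a ω (P ((0 : ℝ) : T1)) + a m * S := by
    intro S hS
    have h0 : |(0 : ℝ)| ≤ 1 / 4 := by norm_num
    have e : ∑' n, (a n * uu ω (P (S : T1)) n - a n * uu ω (P ((0 : ℝ) : T1)) n)
        = a m * uu ω (P (S : T1)) m - a m * uu ω (P ((0 : ℝ) : T1)) m := by
      apply tsum_eq_single
      intro n hn
      obtain ⟨e1, e2, e3⟩ := hP (S : T1)
      obtain ⟨e1', e2', e3'⟩ := hP ((0 : ℝ) : T1)
      have f1 := e1 n
      have f2 := e1' n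
      rw [e2, hy S hS] at f1
      rw [e2', hy 0 h0] at f2
      have := HH_inj (hm n hn) (f1.trans f2.symm)
      unfold uu
      rw [e2, e2', this, sub_self]
    rw [(summable_term ha hs ω _).tsum_sub (summable_term ha hs ω _), hu S hS, hu 0 h0] at e
    unfold xx
    linarith
  have hPsi : ∀ S : ℝ, |S| ≤ 1 / 4 → Psi a ω (P (S : T1)) =
      (m • ω, ((R + xx a ω (P ((0 : ℝ) : T1)) + a m * S : ℝ) : T1)) := by
    intro S hS
    refine Prod.ext (hP _).2.1 ?_
    change (P (S : T1)).2.1 + (xx a ω (P (S : T1)) : T1) = _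
    rw [hy S hS, hx S hS, ← hR, ← AddCircle.coe_add]
    congr 1; ring
  refine ⟨R + xx a ω (P ((0 : ℝ) : T1)), fun p => ⟨fun h => ?_, fun h => ?_⟩⟩
  · have h1 : p.1.1 = m • ω := (Prod.ext_iff.1 h).1
    have h2 : p.1.2.1 = m • ρ := (Prod.ext_iff.1 h).2
    have h3 := p.2 m
    rw [h1, h2, sub_self, sub_self] at h3
    obtain ⟨S, hS, hS'⟩ := HH_zero_eq h3
    have h4 : p.1 = P (S : T1) := XX_ext_m p.2 (hP _).1 (h1.trans (hP _).2.1.symm) m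
      (by rw [h1]; exact hm) (hS'.symm.trans (hP _).2.2.symm)
    rw [h4, hPsi S hS]
    refine ⟨rfl, _, ?_, rfl⟩
    have := abs_le.1 hS
    have := ha m
    constructor <;> nlinarith
  · obtain ⟨h1, t, ht, h2⟩ := h
    have ham := ha m
    set S := (t - (R + xx a ω (P ((0 : ℝ) : T1)))) / a m with hSdef
    have hSt : a m * S = t - (R + xx a ω (P ((0 : ℝ) : T1))) := by
      rw [hSdef]; field_simp
    have hS : |S| ≤ 1 / 4 := by
      rw [hSdef, abs_div, abs_of_pos ham, div_le_iff₀ ham, abs_le]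
      constructor <;> linarith [ht.1, ht.2]
    have h3 : Psi a ω p.1 = Psi a ω (P (S : T1)) := by
      rw [hPsi S hS, hSt, add_sub_cancel]
      exact Prod.ext h1 h2.symm
    have h4 := Psi_inj ha hs hA hω p.2 (hP _).1 h3
    refine Prod.ext ?_ ?_
    · change p.1.1 = _
      rw [h4]; exact (hP _).2.1
    · change p.1.2.1 = _
      rw [h4]; exact hy S hS

lemma irrational_of_indep {w : ℝ} (hω : ∀ n : ℤ, n • (w : T1) = 0 → n = 0) : Irrational w := by
  rintro ⟨q, rfl⟩
  have h1 : ((q.den : ℤ)) • (((q : ℝ)) : T1) = 0 := by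
    rw [← AddCircle.coe_zsmul]
    have : (q.den : ℤ) • (q : ℝ) = q.num • (1 : ℝ) := by
      rw [zsmul_eq_mul, zsmul_eq_mul, mul_one]
      have := Rat.den_mul_eq_num q
      exact_mod_cast this
    rw [this, AddCircle.coe_zsmul, AddCircle.coe_period, smul_zero]
  have := hω _ h1
  have := q.den_pos
  omega

lemma coe_ne_of_lt {a b : ℝ} (h : a < b) (h' : b < a + 1) : (a : T1) ≠ (b : T1) := by
  intro hab
  have := (AddCircle.coe_eq_coe_iff_of_mem_Ico (p := (1 : ℝ)) (a := a)
    ⟨le_refl a, by linarith⟩ ⟨h.le, h'⟩).1 hab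
  exact h.ne this

def rot (g : T1 × T1) : (T1 × T1) ≃ₜ (T1 × T1) := Homeomorph.addRight g

lemma zIter_rot (g : T1 × T1) (n : ℤ) (x : T1 × T1) :
    zIter (rot g).toEquiv n x = x + n • g := by
  refine zIter_unique (rot g).toEquiv (fun n x => x + n • g) (fun x => by simp) ?_ n x
  intro n x
  change x + (n + 1) • g = x + n • g + g
  rw [add_smul, one_smul, add_assoc]

/-- Rees: a point-distal, non-distal, almost automorphic minimal
homeomorphism of the two-torus, of skew product form over an irrational rotation,
semiconjugate to an irrational translation of the torus by a map which is bijective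
off a countable union of vertical segments, which form exactly the set of
non-distal points. -/
theorem stmt3 :
    ∃ f : (T1 × T1) ≃ₜ (T1 × T1),
      (∀ z : T1 × T1, Dense (range fun n : ℤ => zIter f.toEquiv n z)) ∧
      (∃ z : T1 × T1, IsDistalPt f.toEquiv z) ∧
      ¬ (∀ z : T1 × T1, IsDistalPt f.toEquiv z) ∧
      Nonempty (AAWitness (⇑f)) ∧
      ∃ ω ρ : ℝ, Irrational ω ∧
        (∀ p : T1 × T1, (f p).1 = p.1 + (ω : T1)) ∧
        ∃ h : T1 × T1 → T1 × T1,
          IsFactorMap (⇑f) (fun p : T1 × T1 => (p.1 + (ω : T1), p.2 + (ρ : T1))) h ∧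
          ∃ (z₀ : T1 × T1) (J : ℤ → Set (T1 × T1)),
            (∀ n : ℤ, ∃ (θ : T1) (a b : ℝ), a < b ∧ b < a + 1 ∧
              J n = {θ} ×ˢ ((fun t : ℝ => ((t : ℝ) : T1)) '' Set.Icc a b)) ∧
            (∀ n : ℤ, h '' J n = {(z₀.1 + n • (ω : T1), z₀.2 + n • (ρ : T1))}) ∧
            Set.InjOn h (⋃ n : ℤ, J n)ᶜ ∧
            {z : T1 × T1 | ¬ IsDistalPt f.toEquiv z} = ⋃ n : ℤ, J n := by
  obtain ⟨⟨ω', ρ'⟩, hd⟩ := exists_dense_pair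
  obtain ⟨ω, rfl⟩ := T1_coe_surj ω'
  obtain ⟨ρ, rfl⟩ := T1_coe_surj ρ'
  have hω := indep_of_dense hd
  obtain ⟨a, ha, A, hAs, hA'⟩ := posSumOfEncodable (ε := 1 / 2) (by norm_num) ℤ
  have hs : Summable a := hAs.summable
  have hA : ∑' n, a n ≤ 1 / 2 := by rw [hAs.tsum_eq]; exact hA'
  have hal : ∀ n, a n ≤ 1 / 2 := fun n =>
    (hs.le_tsum n fun k _ => (ha k).le).trans hA
  obtain ⟨E, hE⟩ := exists_EE (ρ := (ρ : T1)) ha hs hA hω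
  set g : T1 × T1 := ((ω : T1), (ρ : T1)) with hg
  let f : (T1 × T1) ≃ₜ (T1 × T1) := E.symm.trans ((SH (ω : T1) (ρ : T1) 1).trans E)
  have hf : ∀ (n : ℤ) (z : T1 × T1),
      zIter f.toEquiv n z = E (SH (ω : T1) (ρ : T1) n (E.symm z)) := by
    refine zIter_unique f.toEquiv (fun n z => E (SH (ω : T1) (ρ : T1) n (E.symm z))) ?_ ?_
    · intro z
      have : SH (ω : T1) (ρ : T1) 0 (E.symm z) = E.symm z := Subtype.ext (shiftFun_zero _ _ _)
      simp only [this, Homeomorph.apply_symm_apply]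
    · intro n z
      change _ = E (SH (ω : T1) (ρ : T1) 1 (E.symm (E (SH (ω : T1) (ρ : T1) n (E.symm z)))))
      rw [Homeomorph.symm_apply_apply]
      congr 1
      exact Subtype.ext (shiftFun_add _ _ _ _ _).symm
  let h : T1 × T1 → T1 × T1 := fun z => proj (ω : T1) (ρ : T1) (E.symm z)
  have hc : Continuous h := (continuous_proj _ _).comp E.symm.continuous
  have hsurj : Surjective h := (proj_surj (ρ : T1) hω).comp E.symm.surjective
  have hiter : ∀ (n : ℤ) (z : T1 × T1), h (zIter f.toEquiv n z) = h z + n • g := by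
    intro n z
    rw [hf]
    change proj _ _ (E.symm (E _)) = _
    rw [Homeomorph.symm_apply_apply, proj_SH]
  have hconj : ∀ z, h (f z) = h z + g := by
    intro z
    have := hiter 1 z
    rw [one_smul] at this
    rw [← this]
    rfl
  have hinj : ∀ z z' : T1 × T1, h z = h z' →
      (∀ n : ℤ, h z ≠ (n • (ω : T1), n • (ρ : T1))) → z = z' := by
    intro z z' h1 h2
    exact E.symm.injective (proj_inj h1 h2)
  choose c hcs using fibre_seg (ρ := (ρ : T1)) ha hs hA hω
  let J : ℤ → Set (T1 × T1) := fun m => ({m • (ω : T1)} : Set T1) ×ˢ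
    ((fun t : ℝ => ((t : ℝ) : T1)) '' Set.Icc (c m - a m / 4) (c m + a m / 4))
  have hJ : ∀ m z, z ∈ J m ↔ h z = (m • (ω : T1), m • (ρ : T1)) := by
    intro m z
    have := hcs m (E.symm z)
    rw [← hE, Homeomorph.apply_symm_apply] at this
    exact this.symm
  have hoff : ∀ z, z ∉ ⋃ n : ℤ, J n → ∀ n : ℤ, h z ≠ (n • (ω : T1), n • (ρ : T1)) := by
    intro z hz n hn
    exact hz (mem_iUnion.2 ⟨n, (hJ n z).2 hn⟩)
  have hdistal : ∀ z, z ∉ ⋃ n : ℤ, J n → IsDistalPt f.toEquiv z := by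
    intro z hz y hy
    have hne : h z ≠ h y := fun he => hy (hinj z y he (hoff z hz)).symm
    obtain ⟨δ, hδ, hδ'⟩ := Metric.uniformContinuous_iff.1
      (CompactSpace.uniformContinuous_of_continuous hc) _ (dist_pos.2 hne)
    refine ⟨δ, hδ, fun n => ?_⟩
    by_contra hcon
    have := hδ' (not_le.1 hcon)
    rw [hiter, hiter, dist_add_right] at this
    exact lt_irrefl _ this
  have hnon : ∀ z, z ∈ ⋃ n : ℤ, J n → ¬ IsDistalPt f.toEquiv z := by
    intro z hz hdz
    obtain ⟨m, hm⟩ := mem_iUnion.1 hz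
    have ham := ha m
    have ham' := hal m
    obtain ⟨y, hyz, hy⟩ : ∃ y, y ≠ z ∧ y ∈ J m := by
      have h1 : (m • (ω : T1), ((c m - a m / 4 : ℝ) : T1)) ∈ J m :=
        ⟨rfl, _, ⟨le_refl _, by linarith⟩, rfl⟩
      have h2 : (m • (ω : T1), ((c m + a m / 4 : ℝ) : T1)) ∈ J m :=
        ⟨rfl, _, ⟨by linarith, le_refl _⟩, rfl⟩
      by_cases h3 : (m • (ω : T1), ((c m - a m / 4 : ℝ) : T1)) = z
      · refine ⟨_, ?_, h2⟩
        rw [← h3]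
        intro h4
        exact coe_ne_of_lt (by linarith) (by linarith) (Prod.ext_iff.1 h4).2.symm
      · exact ⟨_, h3, h1⟩
    obtain ⟨d, hd0, hdd⟩ := hdz y hyz
    obtain ⟨n, hn⟩ := (hs.tendsto_cofinite_zero.eventually (gt_mem_nhds hd0)).exists
    have hmem : ∀ x ∈ J m, zIter f.toEquiv (n - m) x ∈ J n := by
      intro x hx
      rw [hJ, hiter, (hJ m x).1 hx]
      refine Prod.ext ?_ ?_
      · change m • (ω : T1) + (n - m) • (ω : T1) = n • (ω : T1)
        rw [← add_smul]; congr 1; ring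
      · change m • (ρ : T1) + (n - m) • (ρ : T1) = n • (ρ : T1)
        rw [← add_smul]; congr 1; ring
    obtain ⟨e1, t, ht, e2⟩ := hmem z hm
    obtain ⟨e3, s, hs', e4⟩ := hmem y hy
    have hle := hdd (n - m)
    have : dist (zIter f.toEquiv (n - m) z) (zIter f.toEquiv (n - m) y) ≤ a n / 2 := by
      have han := ha n
      rw [Prod.dist_eq, ← e2, ← e4, mem_singleton_iff.1 e1, mem_singleton_iff.1 e3, dist_self]
      refine max_le (by linarith) ?_
      rw [dist_eq_norm]
      change ‖(((t : ℝ) : T1)) - ((s : ℝ) : T1)‖ ≤ _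
      rw [← AddCircle.coe_sub]
      refine (T1_norm_coe_le _).trans ?_
      rw [abs_le]
      constructor <;> linarith [ht.1, ht.2, hs'.1, hs'.2]
    have han := ha n
    linarith
  have hJne : ∀ n, (J n).Nonempty := by
    intro n
    have := ha n
    exact ⟨(n • (ω : T1), ((c n : ℝ) : T1)), rfl, _, ⟨by linarith, by linarith⟩, rfl⟩
  have hfactor : IsFactorMap (⇑f) (fun p : T1 × T1 => (p.1 + (ω : T1), p.2 + (ρ : T1))) h :=
    ⟨hc, hsurj, funext hconj⟩
  refine ⟨f, ?_, ?_, ?_, ?_, ω, ρ, irrational_of_indep hω, ?_, h, hfactor, 0, J, ?_, ?_, ?_, ?_⟩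
  · intro z
    have h1 := E.surjective.denseRange.comp (minimal_SH hd (E.symm z)) E.continuous
    have h2 : (fun n : ℤ => zIter f.toEquiv n z) =
        (E ∘ fun k : ℤ => SH (ω : T1) (ρ : T1) k (E.symm z)) := funext fun n => hf n z
    rw [h2]
    exact h1
  · obtain ⟨z, hz⟩ := hsurj (((1 / 2 : ℝ) : T1), 0)
    refine ⟨z, hdistal z fun hmem => ?_⟩
    obtain ⟨n, hn⟩ := mem_iUnion.1 hmem
    have h1 := (hJ n z).1 hn
    rw [hz] at h1
    apply half_off hω 0 n
    rw [zero_smul, add_zero]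
    exact (Prod.ext_iff.1 h1).1
  · intro hall
    obtain ⟨z, hz⟩ := hJne 0
    exact hnon z (mem_iUnion.2 ⟨0, hz⟩) (hall z)
  · refine ⟨{ Y := T1 × T1, g := rot g, hmap := h, factor := hfactor, a11 := ?_, ap := ?_ }⟩
    · have hD : Dense ({θ : T1 | ∀ n : ℤ, θ ≠ n • (ω : T1)} ×ˢ (univ : Set T1)) :=
        (dense_off hd).prod dense_univ
      refine hD.mono ?_
      rintro y ⟨hy, -⟩
      obtain ⟨z, hz⟩ := hsurj y
      refine ⟨z, hz, fun z' hz' => hinj z' z (hz'.trans hz.symm) fun n hn => ?_⟩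
      have h1 : h z' = y := hz'
      rw [h1] at hn
      exact hy n (Prod.ext_iff.1 hn).1
    · intro ε hε
      refine ⟨ε, hε, fun y y' hyy n => ?_⟩
      rw [zIter_rot, zIter_rot, dist_add_right]
      exact hyy
  · intro p
    have h1 : ∀ z, (h z).1 = z.1 := by
      intro z
      have := hE (E.symm z)
      rw [Homeomorph.apply_symm_apply] at this
      exact (Prod.ext_iff.1 this).1.symm
    rw [← h1 (f p), hconj, ← h1 p]
    rfl
  · intro n
    have := ha n
    have := hal n
    exact ⟨n • (ω : T1), c n - a n / 4, c n + a n / 4, by linarith, by linarith, rfl⟩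
  · intro n
    have e : ((0 : T1 × T1).1 + n • (ω : T1), (0 : T1 × T1).2 + n • (ρ : T1))
        = (n • (ω : T1), n • (ρ : T1)) := Prod.ext (zero_add _) (zero_add _)
    rw [e]
    apply Subset.antisymm
    · rintro _ ⟨z, hz, rfl⟩
      exact (hJ n z).1 hz
    · rintro _ rfl
      obtain ⟨z, hz⟩ := hJne n
      exact ⟨z, hz, (hJ n z).1 hz⟩
  · intro z hz z' _ he
    exact hinj z z' he (hoff z hz)
  · ext z
    constructor
    · intro hz
      by_contra hcon
      exact hz (hdistal z hcon)
    · exact hnon z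

end
end

section
/- Let f, Γ, f̂ and h be as in the blow-up construction for a quasiperiodically forced increasing interval map (Theorem 4.1): f̂ is a topological extension of f via h and h^{-1}(Γ) is the pinched preimage of the invariant curve Γ. Then h^{-1}(Γ) contains exactly one minimal set of f̂; this minimal set is almost automorphic, not almost periodic, and not filled-in. -/
open Set Function MeasureTheory

noncomputable section

/-! ### The extension of the skew product to the whole cylinder -/

lemma inverse_continuous_aux {Θ : Type*} [TopologicalSpace Θ] (Fy : Θ → ℝ → ℝ)
    (hc : Continuous fun p : Θ × ℝ => Fy p.1 p.2) (hm : ∀ θ, StrictMono (Fy θ))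
    (Gy : Θ → ℝ → ℝ) (hG : ∀ θ z, Fy θ (Gy θ z) = z) :
    Continuous fun p : Θ × ℝ => Gy p.1 p.2 := by
  rw [continuous_iff_continuousAt]
  rintro ⟨θ, z⟩
  refine tendsto_order.2 ⟨fun c hcz => ?_, fun c hcz => ?_⟩
  · have h1 : Fy θ c < z := by
      have := hm θ hcz
      rwa [hG] at this
    have h2 : ContinuousAt (fun p : Θ × ℝ => Fy p.1 c) (θ, z) :=
      (hc.comp (continuous_fst.prodMk continuous_const)).continuousAt
    filter_upwards [h2.eventually_lt (continuous_snd.continuousAt) h1] with p hp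
    rw [← (hm p.1).lt_iff_lt, hG]
    exact hp
  · have h1 : z < Fy θ c := by
      have := hm θ hcz
      rwa [hG] at this
    have h2 : ContinuousAt (fun p : Θ × ℝ => Fy p.1 c) (θ, z) :=
      (hc.comp (continuous_fst.prodMk continuous_const)).continuousAt
    filter_upwards [(continuous_snd.continuousAt).eventually_lt h2 h1] with p hp
    rw [← (hm p.1).lt_iff_lt, hG]
    exact hp

lemma exists_extension {a b : ℝ} (hab : a ≤ b) (ρ : T1)
    (f : T1 × ↥(Icc a b) → T1 × ↥(Icc a b)) (hf : ForcedIncreasing (fun θ : T1 => θ + ρ) f) :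
    ∃ F : (T1 × ℝ) ≃ₜ (T1 × ℝ), (∀ p, (F p).1 = p.1 + ρ) ∧
      (∀ θ, StrictMono fun y => (F (θ, y)).2) ∧
      (∀ p : T1 × ↥(Icc a b), F (p.1, (p.2 : ℝ)) = ((f p).1, ((f p).2 : ℝ))) := by
  obtain ⟨hfc, hf1, hfm⟩ := hf
  set Fy : T1 → ℝ → ℝ := fun θ y =>
    ((f (θ, projIcc a b hab y)).2 : ℝ) + (y - (projIcc a b hab y : ℝ)) with hFy
  have hc : Continuous fun p : T1 × ℝ => Fy p.1 p.2 := by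
    simp only [hFy]
    have h1 : Continuous fun p : T1 × ℝ => projIcc a b hab p.2 :=
      continuous_projIcc.comp continuous_snd
    have h2 : Continuous fun p : T1 × ℝ => f (p.1, projIcc a b hab p.2) :=
      hfc.comp (continuous_fst.prodMk h1)
    exact (continuous_subtype_val.comp h2.snd).add
      (continuous_snd.sub (continuous_subtype_val.comp h1))
  have hm : ∀ θ, StrictMono (Fy θ) := by
    intro θ y y' hy
    have h1 : projIcc a b hab y ≤ projIcc a b hab y' := monotone_projIcc hab hy.le
    have h3 : y - (projIcc a b hab y : ℝ) ≤ y' - (projIcc a b hab y' : ℝ) := by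
      simp only [coe_projIcc]
      rcases max_cases a (min b y) with h | h <;> rcases max_cases a (min b y') with h' | h' <;>
      rcases min_cases b y with k | k <;> rcases min_cases b y' with k' | k' <;> linarith
    rcases h1.lt_or_eq with h2 | h2
    · have h4 : (f (θ, projIcc a b hab y)).2 < (f (θ, projIcc a b hab y')).2 := hfm θ h2
      have h5 : ((f (θ, projIcc a b hab y)).2 : ℝ) < ((f (θ, projIcc a b hab y')).2 : ℝ) := h4
      simp only [hFy]
      linarith
    · simp only [hFy, h2]
      linarith
  have hs : ∀ θ, Surjective (Fy θ) := by
    intro θ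
    have hcθ : Continuous (Fy θ) := hc.comp (continuous_const.prodMk continuous_id)
    refine hcθ.surjective ?_ ?_
    · refine Filter.tendsto_atTop_mono (f := fun y => y + (a - b)) (fun y => ?_)
        (Filter.tendsto_atTop_add_const_right _ _ Filter.tendsto_id)
      have := (f (θ, projIcc a b hab y)).2.2.1
      have := (projIcc a b hab y).2.2
      simp only [hFy]
      linarith
    · refine Filter.tendsto_atBot_mono (f := fun y => y + (b - a)) (fun y => ?_)
        (Filter.tendsto_atBot_add_const_right _ _ Filter.tendsto_id)
      have := (f (θ, projIcc a b hab y)).2.2.2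
      have := (projIcc a b hab y).2.1
      simp only [hFy]
      linarith
  choose Gy hG using hs
  have hGc := inverse_continuous_aux Fy hc hm Gy hG
  have hGF : ∀ θ y, Gy θ (Fy θ y) = y := fun θ y => (hm θ).injective (hG θ _)
  refine ⟨{ toFun := fun p => (p.1 + ρ, Fy p.1 p.2)
            invFun := fun p => (p.1 - ρ, Gy (p.1 - ρ) p.2)
            left_inv := ?_
            right_inv := ?_
            continuous_toFun := ?_
            continuous_invFun := ?_ }, ?_, ?_, ?_⟩
  · rintro ⟨θ, y⟩
    simp [hGF]
  · rintro ⟨θ, y⟩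
    simp [hG]
  · exact (continuous_fst.add continuous_const).prodMk hc
  · have h1 : Continuous fun p : T1 × ℝ => p.1 - ρ := continuous_fst.sub continuous_const
    exact h1.prodMk (hGc.comp (h1.prodMk continuous_snd))
  · intro p
    rfl
  · exact hm
  · rintro ⟨θ, y⟩
    show (θ + ρ, Fy θ y) = _
    have := hf1 (θ, y)
    simp only at this
    simp [hFy, this]

/-! ### The angular functions -/

/-- The function vanishing exactly at zero. -/
def vFun (θ : T1) : ℝ := ‖(AddCircle.toCircle θ : ℂ) - 1‖
/-- The odd function. -/
def uFun (θ : T1) : ℝ := (AddCircle.toCircle θ : ℂ).im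
/-- The cosine. -/
def cFun (θ : T1) : ℝ := (AddCircle.toCircle θ : ℂ).re

lemma continuous_toCircle_coe : Continuous fun θ : T1 => (AddCircle.toCircle θ : ℂ) :=
  continuous_subtype_val.comp AddCircle.continuous_toCircle

lemma continuous_vFun : Continuous vFun := (continuous_toCircle_coe.sub continuous_const).norm
lemma continuous_uFun : Continuous uFun := Complex.continuous_im.comp continuous_toCircle_coe
lemma continuous_cFun : Continuous cFun := Complex.continuous_re.comp continuous_toCircle_coe

lemma vFun_nonneg (θ : T1) : 0 ≤ vFun θ := norm_nonneg _

lemma abs_uFun_le (θ : T1) : |uFun θ| ≤ vFun θ := by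
  have := Complex.abs_im_le_norm ((AddCircle.toCircle θ : ℂ) - 1)
  simpa [uFun, vFun] using this

lemma vFun_eq_zero {θ : T1} : vFun θ = 0 ↔ θ = 0 := by
  unfold vFun
  rw [norm_eq_zero, sub_eq_zero]
  constructor
  · intro h
    apply AddCircle.injective_toCircle one_ne_zero
    rw [AddCircle.toCircle_zero]
    exact Subtype.ext h
  · rintro rfl
    simp

lemma uFun_neg (θ : T1) : uFun (-θ) = -uFun θ := by
  unfold uFun
  rw [AddCircle.toCircle_neg, Circle.coe_inv_eq_conj]
  simp

lemma cFun_neg (θ : T1) : cFun (-θ) = cFun θ := by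
  unfold cFun
  rw [AddCircle.toCircle_neg, Circle.coe_inv_eq_conj]
  simp

lemma cFun_zero : cFun 0 = 1 := by simp [cFun]

lemma circ_sq (θ : T1) : cFun θ ^ 2 + uFun θ ^ 2 = 1 := by
  have := Circle.normSq_coe (AddCircle.toCircle θ)
  rw [Complex.normSq_apply] at this
  simp only [cFun, uFun]
  nlinarith

lemma vFun_sq (θ : T1) : vFun θ ^ 2 = 2 - 2 * cFun θ := by
  have h := circ_sq θ
  simp only [vFun, Complex.sq_norm, Complex.normSq_apply]
  simp only [cFun, uFun] at *
  simp
  nlinarith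

lemma vFun_neg (θ : T1) : vFun (-θ) = vFun θ := by
  have h1 := vFun_sq θ
  have h2 := vFun_sq (-θ)
  rw [cFun_neg] at h2
  exact (pow_left_inj₀ (vFun_nonneg _) (vFun_nonneg _) two_ne_zero).1 (h2.trans h1.symm)

lemma uFun_sq (θ : T1) : 2 * uFun θ ^ 2 = vFun θ ^ 2 * (1 + cFun θ) := by
  have h1 := vFun_sq θ
  have h2 := circ_sq θ
  rw [h1]
  nlinarith

/-! ### Monotonicity of the quotient -/

lemma quot_mono {u v w w' s s' : ℝ} (huv : |u| ≤ v) (hw : w < w')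
    (hs : |s| ≤ 1) (hs' : |s'| ≤ 1) (h : s * (|w| + v) = w + u) (h' : s' * (|w'| + v) = w' + u) :
    s ≤ s' := by
  rw [abs_le] at huv hs hs'
  by_contra hlt
  push Not at hlt
  have hv : 0 ≤ v := by linarith
  rcases le_or_gt 0 w with h0 | h0
  · rw [abs_of_nonneg h0] at h
    rw [abs_of_pos (by linarith)] at h'
    nlinarith
  · rw [abs_of_neg h0] at h
    rcases le_or_gt 0 w' with h1 | h1
    · rw [abs_of_nonneg h1] at h'
      nlinarith
    · rw [abs_of_neg h1] at h'
      nlinarith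

/-! ### Iterates of the extension -/

/-- Properties shared by all iterates. -/
def GoodIter (γ : T1 → ℝ) (r : T1) (F : (T1 × ℝ) ≃ₜ (T1 × ℝ)) : Prop :=
  (∀ p, (F p).1 = p.1 + r) ∧ (∀ θ, StrictMono fun y => (F (θ, y)).2) ∧
    ∀ θ, F (θ, γ θ) = (θ + r, γ (θ + r))

lemma GoodIter.mul {γ : T1 → ℝ} {r r' : T1} {F G : (T1 × ℝ) ≃ₜ (T1 × ℝ)}
    (hF : GoodIter γ r F) (hG : GoodIter γ r' G) : GoodIter γ (r' + r) (F * G) := by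
  obtain ⟨f1, f2, f3⟩ := hF
  obtain ⟨g1, g2, g3⟩ := hG
  refine ⟨fun p => ?_, fun θ y y' h => ?_, fun θ => ?_⟩
  · show (F (G p)).1 = _
    rw [f1, g1, add_assoc]
  · show (F (G (θ, y))).2 < (F (G (θ, y'))).2
    have e : ∀ y, G (θ, y) = (θ + r', (G (θ, y)).2) := fun y => Prod.ext (g1 _) rfl
    rw [e y, e y']
    exact f2 _ (g2 θ h)
  · show F (G _) = _
    rw [g3, f3, add_assoc]

lemma GoodIter.inv {γ : T1 → ℝ} {r : T1} {F : (T1 × ℝ) ≃ₜ (T1 × ℝ)}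
    (hF : GoodIter γ r F) : GoodIter γ (-r) F⁻¹ := by
  obtain ⟨f1, f2, f3⟩ := hF
  have k1 : ∀ p, (F⁻¹ p).1 = p.1 + -r := by
    intro p
    have h1 := f1 (F⁻¹ p)
    have h2 : F (F⁻¹ p) = p := F.apply_symm_apply p
    rw [h2] at h1
    rw [h1]
    abel
  refine ⟨k1, fun θ y y' h => ?_, fun θ => ?_⟩
  · have e : ∀ y, F⁻¹ (θ, y) = (θ + -r, (F⁻¹ (θ, y)).2) := fun y => Prod.ext (k1 _) rfl
    have h2 : ∀ p, F (F⁻¹ p) = p := F.apply_symm_apply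
    rw [← (f2 (θ + -r)).lt_iff_lt]
    simp only
    rw [← e, ← e, h2, h2]
    exact h
  · apply F.injective
    have h2 : ∀ p, F (F⁻¹ p) = p := F.apply_symm_apply
    rw [h2, f3]
    simp

lemma GoodIter.one (γ : T1 → ℝ) : GoodIter γ 0 1 := by
  refine ⟨fun p => ?_, fun θ y y' h => h, fun θ => ?_⟩
  · simp
  · simp

lemma GoodIter.pow {γ : T1 → ℝ} {r : T1} {F : (T1 × ℝ) ≃ₜ (T1 × ℝ)}
    (hF : GoodIter γ r F) (n : ℕ) : GoodIter γ (n • r) (F ^ n) := by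
  induction n with
  | zero => simpa using GoodIter.one γ
  | succ n ih =>
    rw [pow_succ, add_smul, one_smul, add_comm]
    exact ih.mul hF

lemma GoodIter.zpow {γ : T1 → ℝ} {r : T1} {F : (T1 × ℝ) ≃ₜ (T1 × ℝ)}
    (hF : GoodIter γ r F) (n : ℤ) : GoodIter γ (n • r) (F ^ n) := by
  cases n with
  | ofNat n => simpa using hF.pow n
  | negSucc n =>
    rw [zpow_negSucc, negSucc_zsmul]
    exact (hF.pow _).inv

/-- The numerators and denominators describing the blow-up of the orbit. -/
structure BUData {a b : ℝ} (ρ : T1) (f : T1 × ↥(Icc a b) → T1 × ↥(Icc a b))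
    (γ : T1 → ↥(Icc a b)) (N D : ℤ → T1 × ↥(Icc a b) → ℝ) : Prop where
  Nc : ∀ n, Continuous (N n)
  Dc : ∀ n, Continuous (D n)
  le : ∀ n p, |N n p| ≤ D n p
  zero : ∀ n p, D n p = 0 ↔ p = (n • ρ, γ (n • ρ))
  Nstep : ∀ n p, N (n + 1) (f p) = N n p
  Dstep : ∀ n p, D (n + 1) (f p) = D n p
  mono : ∀ n θ (y y' : ↥(Icc a b)) (s s' : ℝ), y < y' → |s| ≤ 1 → |s'| ≤ 1 →
    s * D n (θ, y) = N n (θ, y) → s' * D n (θ, y') = N n (θ, y') → s ≤ s'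
  D0 : ∀ θ, D 0 (θ, γ θ) = vFun θ
  N0 : ∀ θ, N 0 (θ, γ θ) = uFun θ

lemma exists_BUData {a b : ℝ} (hab : a ≤ b) (ρ : T1)
    (f : T1 × ↥(Icc a b) → T1 × ↥(Icc a b)) (hf : ForcedIncreasing (fun θ : T1 => θ + ρ) f)
    (γ : T1 → ↥(Icc a b)) (hγc : Continuous γ)
    (hγinv : ∀ θ : T1, f (θ, γ θ) = (θ + ρ, γ (θ + ρ))) :
    ∃ N D, BUData ρ f γ N D := by
  obtain ⟨F, F1, F2, F3⟩ := exists_extension hab ρ f hf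
  have hgood : GoodIter (fun θ => (γ θ : ℝ)) ρ F := by
    refine ⟨F1, F2, fun θ => ?_⟩
    rw [F3 (θ, γ θ), hγinv]
  have hz := fun n : ℤ => hgood.zpow (-n)
  let ι : T1 × ↥(Icc a b) → T1 × ℝ := fun p => (p.1, (p.2 : ℝ))
  have hι : Continuous ι := continuous_fst.prodMk (continuous_subtype_val.comp continuous_snd)
  let W : T1 × ℝ → ℝ := fun q => q.2 - γ q.1
  have hW : Continuous W :=
    continuous_snd.sub (continuous_subtype_val.comp (hγc.comp continuous_fst))
  have hstep : ∀ (n : ℤ) p, (F ^ (-(n + 1))) (ι (f p)) = (F ^ (-n)) (ι p) := by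
    intro n p
    have h1 : ι (f p) = F (ι p) := (F3 p).symm
    rw [h1]
    have : F ^ (-n) = F ^ (-(n + 1)) * F := by
      rw [← zpow_add_one]; congr 1; ring
    rw [this]
    rfl
  refine ⟨fun n p => W ((F ^ (-n)) (ι p)) + uFun ((F ^ (-n)) (ι p)).1,
    fun n p => |W ((F ^ (-n)) (ι p))| + vFun ((F ^ (-n)) (ι p)).1, ?_, ?_, ?_, ?_, ?_, ?_, ?_, ?_, ?_⟩
  · intro n
    have h1 : Continuous fun p => (F ^ (-n)) (ι p) := (F ^ (-n)).continuous.comp hι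
    exact (hW.comp h1).add (continuous_uFun.comp h1.fst)
  · intro n
    have h1 : Continuous fun p => (F ^ (-n)) (ι p) := (F ^ (-n)).continuous.comp hι
    exact (hW.comp h1).abs.add (continuous_vFun.comp h1.fst)
  · intro n p
    exact (abs_add_le _ _).trans (by gcongr; exact abs_uFun_le _)
  · intro n p
    have h1 := (hz n).1 (ι p)
    have h3 := (hz n).2.2
    constructor
    · intro h
      have hv : vFun ((F ^ (-n)) (ι p)).1 = 0 := by
        have := vFun_nonneg ((F ^ (-n)) (ι p)).1
        have := abs_nonneg (W ((F ^ (-n)) (ι p)))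
        linarith
      have hw : W ((F ^ (-n)) (ι p)) = 0 := by
        rw [hv, add_zero] at h
        exact abs_eq_zero.1 h
      rw [vFun_eq_zero, h1, neg_smul] at hv
      have hp1 : p.1 = n • ρ := by
        have : p.1 + -(n • ρ) = 0 := hv
        rwa [← sub_eq_add_neg, sub_eq_zero] at this
      have h5 : (F ^ (-n)) (ι p) = (F ^ (-n)) (n • ρ, (γ (n • ρ) : ℝ)) := by
        rw [h3]
        refine Prod.ext ?_ ?_
        · rw [h1]
          show p.1 + _ = _
          rw [hp1]
        · have : ((F ^ (-n)) (ι p)).2 = γ ((F ^ (-n)) (ι p)).1 := sub_eq_zero.1 hw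
          rw [this, h1]
          show (γ (p.1 + _) : ℝ) = _
          rw [hp1]
      have h6 := (F ^ (-n)).injective h5
      refine Prod.ext hp1 ?_
      exact Subtype.ext (congrArg Prod.snd h6)
    · rintro rfl
      have h4 := h3 (n • ρ)
      simp only [ι]
      rw [h4]
      simp [W, vFun_eq_zero]
  · intro n p
    simp only [hstep]
  · intro n p
    simp only [hstep]
  · intro n θ y y' s s' hy hs hs' h h'
    have e1 := (hz n).1 (ι (θ, y))
    have e2 := (hz n).1 (ι (θ, y'))
    have e3 : ((F ^ (-n)) (ι (θ, y'))).1 = ((F ^ (-n)) (ι (θ, y))).1 := e2.trans e1.symm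
    rw [e3] at h'
    have hlt : ((F ^ (-n)) (ι (θ, y))).2 < ((F ^ (-n)) (ι (θ, y'))).2 := (hz n).2.1 θ hy
    refine quot_mono (abs_uFun_le _) ?_ hs hs' h h'
    simp only [W, e3]
    linarith
  · intro θ
    simp [W, ι]
  · intro θ
    simp [W, ι]

/-! ### The blown-up space -/

/-- The blown-up space. -/
def KSet {a b : ℝ} (N D : ℤ → T1 × ↥(Icc a b) → ℝ) : Set ((T1 × ↥(Icc a b)) × (ℤ → ℝ)) :=
  {k | ∀ n, |k.2 n| ≤ 1 ∧ k.2 n * D n k.1 = N n k.1}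

/-- The vertical coordinate. -/
def VFun {a b : ℝ} (c : ℤ → ℝ) (k : (T1 × ↥(Icc a b)) × (ℤ → ℝ)) : ℝ :=
  (k.1.2 : ℝ) + ∑' n, c n * k.2 n

/-- The canonical section. -/
def secFun {a b : ℝ} (N D : ℤ → T1 × ↥(Icc a b) → ℝ) (p : T1 × ↥(Icc a b)) : ℤ → ℝ :=
  fun n => N n p / D n p

section
variable {a b : ℝ} {ρ : T1} {f : T1 × ↥(Icc a b) → T1 × ↥(Icc a b)}
  {γ : T1 → ↥(Icc a b)} {N D : ℤ → T1 × ↥(Icc a b) → ℝ} {c : ℤ → ℝ}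

lemma KSet_compact (hd : BUData ρ f γ N D) : IsCompact (KSet N D) := by
  have h1 : IsCompact ((univ : Set (T1 × ↥(Icc a b))) ×ˢ
      (Set.pi univ fun _ : ℤ => Icc (-1 : ℝ) 1)) :=
    isCompact_univ.prod (isCompact_univ_pi fun _ => isCompact_Icc)
  refine h1.of_isClosed_subset ?_ ?_
  · have : KSet N D = ⋂ n, ({k | |k.2 n| ≤ 1} ∩ {k | k.2 n * D n k.1 = N n k.1}) := by
      ext k
      simp [KSet]
    rw [this]
    refine isClosed_iInter fun n => ?_
    have hn : Continuous fun k : (T1 × ↥(Icc a b)) × (ℤ → ℝ) => k.2 n :=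
      (continuous_apply n).comp continuous_snd
    exact (isClosed_le hn.abs continuous_const).inter
      (isClosed_eq (hn.mul ((hd.Dc n).comp continuous_fst)) ((hd.Nc n).comp continuous_fst))
  · intro k hk
    refine ⟨mem_univ _, fun n _ => ?_⟩
    exact abs_le.1 (hk n).1

lemma VFun_continuousOn (hc : Summable c) (hc0 : ∀ n, 0 < c n) :
    ContinuousOn (VFun c) (KSet N D) := by
  refine ContinuousOn.add ?_ ?_
  · exact (continuous_subtype_val.comp continuous_fst.snd).continuousOn
  · refine continuousOn_tsum (u := c) (fun n => ?_) hc ?_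
    · exact (continuous_const.mul ((continuous_apply n).comp continuous_snd)).continuousOn
    · intro n k hk
      rw [Real.norm_eq_abs, abs_mul, abs_of_pos (hc0 n)]
      exact mul_le_of_le_one_right (hc0 n).le (hk n).1

lemma KSet_summable (hc : Summable c) (hc0 : ∀ n, 0 < c n) {k : (T1 × ↥(Icc a b)) × (ℤ → ℝ)}
    (hk : k ∈ KSet N D) : Summable fun n => c n * k.2 n := by
  refine Summable.of_norm_bounded hc fun n => ?_
  rw [Real.norm_eq_abs, abs_mul, abs_of_pos (hc0 n)]
  exact mul_le_of_le_one_right (hc0 n).le (hk n).1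

lemma sec_mem (hd : BUData ρ f γ N D) (p : T1 × ↥(Icc a b)) : (p, secFun N D p) ∈ KSet N D := by
  intro n
  have h := hd.le n p
  have h0 : 0 ≤ D n p := (abs_nonneg _).trans h
  simp only [secFun]
  constructor
  · rw [abs_div, abs_of_nonneg h0]
    exact div_le_one_of_le₀ h h0
  · rcases eq_or_ne (D n p) 0 with h1 | h1
    · rw [h1] at h ⊢
      rw [abs_nonpos_iff.1 h]
      simp
    · exact div_mul_cancel₀ _ h1

lemma KSet_coord_eq {p : T1 × ↥(Icc a b)} {s s' : ℤ → ℝ} (hk : (p, s) ∈ KSet N D)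
    (hk' : (p, s') ∈ KSet N D) {n : ℤ} (hn : D n p ≠ 0) : s n = s' n :=
  mul_right_cancel₀ hn ((hk n).2.trans (hk' n).2.symm)

lemma KSet_comp (hd : BUData ρ f γ N D) (hρ : ∀ n m : ℤ, n • ρ = m • ρ → n = m) {θ : T1}
    {y y' : ↥(Icc a b)} {s s' : ℤ → ℝ}
    (hk : ((θ, y), s) ∈ KSet N D) (hk' : ((θ, y'), s') ∈ KSet N D) :
    (y ≤ y' ∧ s ≤ s') ∨ (y' ≤ y ∧ s' ≤ s) := by
  rcases lt_trichotomy y y' with h | h | h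
  · exact Or.inl ⟨h.le, fun n => hd.mono n θ y y' _ _ h (hk n).1 (hk' n).1 (hk n).2 (hk' n).2⟩
  · subst h
    by_cases hz : ∃ n, D n (θ, y) = 0
    · obtain ⟨n, hn⟩ := hz
      have ho : ∀ m, m ≠ n → s m = s' m := by
        intro m hm
        refine KSet_coord_eq hk hk' fun h0 => hm ?_
        rw [hd.zero] at h0 hn
        exact hρ _ _ (congrArg Prod.fst (h0.symm.trans hn))
      rcases le_total (s n) (s' n) with h1 | h1
      · refine Or.inl ⟨le_rfl, fun m => ?_⟩
        by_cases hm : m = n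
        · rw [hm]; exact h1
        · exact (ho m hm).le
      · refine Or.inr ⟨le_rfl, fun m => ?_⟩
        by_cases hm : m = n
        · rw [hm]; exact h1
        · exact (ho m hm).ge
    · push Not at hz
      exact Or.inl ⟨le_rfl, fun n => (KSet_coord_eq hk hk' (hz n)).le⟩
  · exact Or.inr ⟨h.le, fun n => hd.mono n θ y' y _ _ h (hk' n).1 (hk n).1 (hk' n).2 (hk n).2⟩

lemma VFun_le (hc : Summable c) (hc0 : ∀ n, 0 < c n) {k k' : (T1 × ↥(Icc a b)) × (ℤ → ℝ)}
    (hk : k ∈ KSet N D) (hk' : k' ∈ KSet N D) (hs : k.2 ≤ k'.2) :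
    (k'.1.2 : ℝ) - k.1.2 ≤ VFun c k' - VFun c k := by
  have := (KSet_summable hc hc0 hk).tsum_le_tsum
    (fun n => mul_le_mul_of_nonneg_left (hs n) (hc0 n).le) (KSet_summable hc hc0 hk')
  simp only [VFun]
  linarith

lemma VFun_lt (hc : Summable c) (hc0 : ∀ n, 0 < c n) {k k' : (T1 × ↥(Icc a b)) × (ℤ → ℝ)}
    (hk : k ∈ KSet N D) (hk' : k' ∈ KSet N D) (h1 : k.1.1 = k'.1.1) (hy : k.1.2 ≤ k'.1.2)
    (hs : k.2 ≤ k'.2) (hne : k ≠ k') : VFun c k < VFun c k' := by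
  have hle := VFun_le hc hc0 hk hk' hs
  have hy' : (k.1.2 : ℝ) ≤ k'.1.2 := hy
  rcases hy.lt_or_eq with h | h
  · have : (k.1.2 : ℝ) < k'.1.2 := h
    linarith
  · have hne2 : k.2 ≠ k'.2 := fun h2 => hne (Prod.ext (Prod.ext h1 h) h2)
    obtain ⟨n, hn⟩ := Function.ne_iff.1 hne2
    have hn' : k.2 n < k'.2 n := lt_of_le_of_ne (hs n) hn
    have := Summable.tsum_lt_tsum (f := fun n => c n * k.2 n) (g := fun n => c n * k'.2 n)
      (i := n) (fun n => mul_le_mul_of_nonneg_left (hs n) (hc0 n).le)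
      (mul_lt_mul_of_pos_left hn' (hc0 n)) (KSet_summable hc hc0 hk) (KSet_summable hc hc0 hk')
    simp only [VFun]
    linarith

lemma VFun_le_iff (hd : BUData ρ f γ N D) (hρ : ∀ n m : ℤ, n • ρ = m • ρ → n = m)
    (hc : Summable c) (hc0 : ∀ n, 0 < c n) {k k' : (T1 × ↥(Icc a b)) × (ℤ → ℝ)}
    (hk : k ∈ KSet N D) (hk' : k' ∈ KSet N D) (h1 : k.1.1 = k'.1.1) :
    VFun c k ≤ VFun c k' ↔ k.1.2 ≤ k'.1.2 ∧ k.2 ≤ k'.2 := by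
  obtain ⟨⟨θ, y⟩, s⟩ := k
  obtain ⟨⟨θ', y'⟩, s'⟩ := k'
  obtain rfl : θ = θ' := h1
  constructor
  · intro h
    rcases KSet_comp hd hρ hk hk' with h2 | h2
    · exact h2
    · by_cases he : (((θ, y), s) : (T1 × ↥(Icc a b)) × (ℤ → ℝ)) = ((θ, y'), s')
      · simp only [Prod.mk.injEq, true_and] at he
        exact ⟨he.1.le, he.2.le⟩
      · exact absurd h (not_le.2 (VFun_lt hc hc0 hk' hk rfl h2.1 h2.2 (Ne.symm he)))
  · rintro ⟨h2, h3⟩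
    have := VFun_le hc hc0 hk hk' h3
    have h4 : (y : ℝ) ≤ y' := h2
    simp only at this
    linarith

lemma VFun_surj (hd : BUData ρ f γ N D) (hρ : ∀ n m : ℤ, n • ρ = m • ρ → n = m)
    (hc : Summable c) (hc0 : ∀ n, 0 < c n) (θ : T1) {k₀ k₁ : (T1 × ↥(Icc a b)) × (ℤ → ℝ)}
    (hk₀ : k₀ ∈ KSet N D) (hk₁ : k₁ ∈ KSet N D) (h0 : k₀.1.1 = θ) (h1 : k₁.1.1 = θ) {z : ℝ}
    (hz0 : VFun c k₀ ≤ z) (hz1 : z ≤ VFun c k₁) :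
    ∃ k ∈ KSet N D, k.1.1 = θ ∧ VFun c k = z := by
  have hK := KSet_compact hd
  have hV : ContinuousOn (VFun c) (KSet N D) := VFun_continuousOn hc hc0
  have hfst : ContinuousOn (fun k : (T1 × ↥(Icc a b)) × (ℤ → ℝ) => k.1.1) (KSet N D) :=
    continuous_fst.fst.continuousOn
  have hsnd : Continuous (fun k : (T1 × ↥(Icc a b)) × (ℤ → ℝ) => k.1.2) := continuous_fst.snd
  have hA : IsCompact ((KSet N D ∩ (fun k => k.1.1) ⁻¹' {θ}) ∩ (KSet N D ∩ VFun c ⁻¹' Iic z)) :=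
    (hK.of_isClosed_subset (hfst.preimage_isClosed_of_isClosed hK.isClosed isClosed_singleton)
      inter_subset_left).inter_right
      (hV.preimage_isClosed_of_isClosed hK.isClosed isClosed_Iic)
  have hB : IsCompact ((KSet N D ∩ (fun k => k.1.1) ⁻¹' {θ}) ∩ (KSet N D ∩ VFun c ⁻¹' Ici z)) :=
    (hK.of_isClosed_subset (hfst.preimage_isClosed_of_isClosed hK.isClosed isClosed_singleton)
      inter_subset_left).inter_right
      (hV.preimage_isClosed_of_isClosed hK.isClosed isClosed_Ici)
  obtain ⟨k, ⟨⟨hk, hkθ⟩, -, hkz⟩, hkmax⟩ :=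
    hA.exists_isMaxOn ⟨k₀, ⟨hk₀, h0⟩, hk₀, hz0⟩ hsnd.continuousOn
  obtain ⟨k', ⟨⟨hk', hkθ'⟩, -, hkz'⟩, hkmin⟩ :=
    hB.exists_isMinOn ⟨k₁, ⟨hk₁, h1⟩, hk₁, hz1⟩ hsnd.continuousOn
  obtain ⟨⟨θ1, y⟩, s⟩ := k
  obtain ⟨⟨θ2, y'⟩, s'⟩ := k'
  obtain rfl : θ1 = θ := hkθ
  obtain rfl : θ2 = θ1 := hkθ'
  simp only [mem_preimage, mem_Iic, mem_Ici] at hkz hkz'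
  have hle : y' ≤ y := by
    by_contra hlt
    push Not at hlt
    have hlt' : (y : ℝ) < y' := hlt
    let ym : ↥(Icc a b) := ⟨((y : ℝ) + y') / 2, by
      have := y.2.1; have := y'.2.2; constructor <;> linarith⟩
    have hm := sec_mem hd (θ2, ym)
    rcases le_total (VFun c ((θ2, ym), secFun N D (θ2, ym))) z with h | h
    · have h3 : ym ≤ y := hkmax ⟨⟨hm, rfl⟩, hm, h⟩
      have h4 : ((y : ℝ) + y') / 2 ≤ y := h3
      linarith
    · have h3 : y' ≤ ym := hkmin ⟨⟨hm, rfl⟩, hm, h⟩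
      have h4 : (y' : ℝ) ≤ ((y : ℝ) + y') / 2 := h3
      linarith
  have hye : y = y' := by
    have := ((VFun_le_iff hd hρ hc hc0 hk hk' rfl).1 (hkz.trans hkz')).1
    exact le_antisymm this hle
  subst hye
  let P : ℝ → (T1 × ↥(Icc a b)) × (ℤ → ℝ) :=
    fun t => ((θ2, y), fun n => (1 - t) * s n + t * s' n)
  have hP : Continuous P := by
    refine continuous_const.prodMk (continuous_pi fun n => ?_)
    fun_prop
  have hPK : MapsTo P (Icc 0 1) (KSet N D) := by
    intro t ht n
    have e1 := hk n
    have e2 := hk' n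
    simp only [abs_le] at e1 e2
    simp only [P, abs_le]
    obtain ⟨t0, t1⟩ := ht
    refine ⟨⟨?_, ?_⟩, ?_⟩
    · nlinarith
    · nlinarith
    · linear_combination (1 - t) * e1.2 + t * e2.2
  have hiv := intermediate_value_Icc zero_le_one (hV.comp hP.continuousOn hPK)
  have hP0 : P 0 = ((θ2, y), s) := by simp [P]
  have hP1 : P 1 = ((θ2, y), s') := by simp [P]
  obtain ⟨t, ht, htz⟩ := hiv (show z ∈ _ by
    simp only [comp_apply, hP0, hP1]; exact ⟨hkz, hkz'⟩)
  exact ⟨P t, hPK ht, rfl, htz⟩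
end

/-- The properties of the blow-up map `h` and of the blow-up coordinates `s`. -/
structure BlowUp {a b : ℝ} (N D : ℤ → T1 × ↥(Icc a b) → ℝ) (c : ℤ → ℝ)
    (h : T1 × ↥(Icc a b) → T1 × ↥(Icc a b)) (s : T1 × ↥(Icc a b) → ℤ → ℝ) : Prop where
  hc : Continuous h
  sc : Continuous s
  h1 : ∀ q, (h q).1 = q.1
  mem : ∀ q, (h q, s q) ∈ KSet N D
  surj : ∀ p t, (p, t) ∈ KSet N D → ∃ q, h q = p ∧ s q = t
  le_iff : ∀ θ x x', x ≤ x' ↔ (h (θ, x)).2 ≤ (h (θ, x')).2 ∧ s (θ, x) ≤ s (θ, x')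
  est : ∀ θ x x' n, x ≤ x' → h (θ, x) = h (θ, x') → (∀ m, m ≠ n → s (θ, x) m = s (θ, x') m) →
    (x' : ℝ) - x ≤ 2 * c n

lemma exists_BlowUp {a b : ℝ} {ρ : T1} {f : T1 × ↥(Icc a b) → T1 × ↥(Icc a b)}
    {γ : T1 → ↥(Icc a b)} {N D : ℤ → T1 × ↥(Icc a b) → ℝ} {c : ℤ → ℝ} (hab : a < b)
    (hd : BUData ρ f γ N D) (hρ : ∀ n m : ℤ, n • ρ = m • ρ → n = m)
    (hγ : ∀ θ, a < γ θ ∧ γ θ < b)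
    (hc : Summable c) (hc0 : ∀ n, 0 < c n) : ∃ h s, BlowUp N D c h s := by
  let A : ↥(Icc a b) := ⟨a, le_rfl, hab.le⟩
  let B : ↥(Icc a b) := ⟨b, hab.le, le_rfl⟩
  have hDA : ∀ n θ, D n (θ, A) ≠ 0 := by
    intro n θ h
    rw [hd.zero] at h
    have h2 : A = γ (n • ρ) := congrArg Prod.snd h
    have := (hγ (n • ρ)).1
    rw [← h2] at this
    exact lt_irrefl _ this
  have hDB : ∀ n θ, D n (θ, B) ≠ 0 := by
    intro n θ h
    rw [hd.zero] at h
    have h2 : B = γ (n • ρ) := congrArg Prod.snd h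
    have := (hγ (n • ρ)).2
    rw [← h2] at this
    exact lt_irrefl _ this
  have hV : ContinuousOn (VFun c) (KSet N D) := VFun_continuousOn hc hc0
  have hsec : ∀ Y : ↥(Icc a b), (∀ n θ, D n (θ, Y) ≠ 0) →
      Continuous fun θ => VFun c ((θ, Y), secFun N D (θ, Y)) := by
    intro Y hY
    refine hV.comp_continuous ?_ fun θ => sec_mem hd _
    have h1 : Continuous fun θ : T1 => (θ, Y) := continuous_id.prodMk continuous_const
    refine h1.prodMk (continuous_pi fun n => ?_)
    exact ((hd.Nc n).comp h1).div ((hd.Dc n).comp h1) (hY n)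
  let L : T1 → ℝ := fun θ => VFun c ((θ, A), secFun N D (θ, A))
  let U : T1 → ℝ := fun θ => VFun c ((θ, B), secFun N D (θ, B))
  have hL : Continuous L := hsec A hDA
  have hU : Continuous U := hsec B hDB
  have hLle : ∀ k ∈ KSet N D, L k.1.1 ≤ VFun c k := by
    rintro ⟨⟨θ, y⟩, s⟩ hk
    refine (VFun_le_iff hd hρ hc hc0 (sec_mem hd (θ, A)) hk rfl).2 ?_
    rcases KSet_comp hd hρ (sec_mem hd (θ, A)) hk with h | h
    · exact h
    · have hy : y = A := le_antisymm h.1 y.2.1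
      subst hy
      exact ⟨le_rfl, fun n => (KSet_coord_eq (sec_mem hd _) hk (hDA n θ)).le⟩
  have hUle : ∀ k ∈ KSet N D, VFun c k ≤ U k.1.1 := by
    rintro ⟨⟨θ, y⟩, s⟩ hk
    refine (VFun_le_iff hd hρ hc hc0 hk (sec_mem hd (θ, B)) rfl).2 ?_
    rcases KSet_comp hd hρ hk (sec_mem hd (θ, B)) with h | h
    · exact h
    · have hy : y = B := le_antisymm y.2.2 h.1
      subst hy
      exact ⟨le_rfl, fun n => (KSet_coord_eq hk (sec_mem hd _) (hDB n θ)).le⟩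
  have hUL : ∀ θ, b - a ≤ U θ - L θ := by
    intro θ
    have h1 := (VFun_le_iff hd hρ hc hc0 (sec_mem hd (θ, A)) (sec_mem hd (θ, B)) rfl).1
      (hLle _ (sec_mem hd (θ, B)))
    exact VFun_le hc hc0 (sec_mem hd (θ, A)) (sec_mem hd (θ, B)) h1.2
  have hUL0 : ∀ θ, 0 < U θ - L θ := fun θ => by linarith [hUL θ]
  have hba : 0 < b - a := by linarith
  let Z : T1 → ℝ → ℝ := fun θ v => a + (b - a) * ((v - L θ) / (U θ - L θ))
  have hZm : ∀ θ v v', Z θ v ≤ Z θ v' ↔ v ≤ v' := by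
    intro θ v v'
    simp only [Z]
    rw [add_le_add_iff_left, mul_le_mul_iff_right₀ hba, div_le_div_iff_of_pos_right (hUL0 θ),
      sub_le_sub_iff_right]
  have hZL : ∀ θ, Z θ (L θ) = a := by intro θ; simp [Z]
  have hZU : ∀ θ, Z θ (U θ) = b := by
    intro θ
    simp only [Z]
    rw [div_self (hUL0 θ).ne']
    ring
  let Φ : ↥(KSet N D) → T1 × ↥(Icc a b) := fun k => (k.1.1.1, ⟨Z k.1.1.1 (VFun c k.1),
    (hZL k.1.1.1).symm.le.trans ((hZm _ _ _).2 (hLle _ k.2)),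
    ((hZm _ _ _).2 (hUle _ k.2)).trans (hZU k.1.1.1).le⟩)
  have hΦle : ∀ k k' : ↥(KSet N D), k.1.1.1 = k'.1.1.1 →
      ((Φ k).2 ≤ (Φ k').2 ↔ k.1.1.2 ≤ k'.1.1.2 ∧ k.1.2 ≤ k'.1.2) := by
    intro k k' h
    rw [← VFun_le_iff hd hρ hc hc0 k.2 k'.2 h, ← hZm k.1.1.1]
    have : (Φ k').2 = (⟨Z k.1.1.1 (VFun c k'.1), by rw [h]; exact (Φ k').2.2⟩ : ↥(Icc a b)) := by
      apply Subtype.ext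
      show Z k'.1.1.1 _ = Z k.1.1.1 _
      rw [h]
    rw [this]
    rfl
  have hΦc : Continuous Φ := by
    have h1 : Continuous fun k : ↥(KSet N D) => k.1.1.1 := continuous_subtype_val.fst.fst
    have h2 : Continuous fun k : ↥(KSet N D) => VFun c k.1 := hV.domRestrict
    refine h1.prodMk (Continuous.subtype_mk ?_ _)
    exact continuous_const.add (continuous_const.mul
      ((h2.sub (hL.comp h1)).div ((hU.comp h1).sub (hL.comp h1)) fun k => (hUL0 _).ne'))
  have hΦi : Injective Φ := by
    intro k k' h
    have h1 : k.1.1.1 = k'.1.1.1 := congrArg (fun q => q.1) h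
    have h2 : (Φ k).2 = (Φ k').2 := congrArg Prod.snd h
    obtain ⟨e1, e2⟩ := (hΦle k k' h1).1 h2.le
    obtain ⟨e3, e4⟩ := (hΦle k' k h1.symm).1 h2.ge
    exact Subtype.ext (Prod.ext (Prod.ext h1 (le_antisymm e1 e3)) (le_antisymm e2 e4))
  have hΦs : Surjective Φ := by
    rintro ⟨θ, x⟩
    let z : ℝ := L θ + (U θ - L θ) * ((x - a) / (b - a))
    have hzx : Z θ z = x := by
      simp only [Z, z]
      have := (hUL0 θ).ne'
      have := hba.ne'
      field_simp
      ring
    obtain ⟨k, hk, hkθ, hkz⟩ := VFun_surj hd hρ hc hc0 θ (sec_mem hd (θ, A)) (sec_mem hd (θ, B))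
      rfl rfl (z := z) (by
        show L θ ≤ z
        rw [← hZm θ, hZL, hzx]; exact x.2.1) (by
        show z ≤ U θ
        rw [← hZm θ, hZU, hzx]; exact x.2.2)
    refine ⟨⟨k, hk⟩, Prod.ext hkθ (Subtype.ext ?_)⟩
    show Z k.1.1 (VFun c k) = x
    rw [hkθ, hkz, hzx]
  have : CompactSpace ↥(KSet N D) := isCompact_iff_compactSpace.1 (KSet_compact hd)
  let E : ↥(KSet N D) ≃ₜ T1 × ↥(Icc a b) :=
    Continuous.homeoOfEquivCompactToT2 (f := Equiv.ofBijective Φ ⟨hΦi, hΦs⟩) hΦc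
  have hE : ∀ k, E k = Φ k := fun k => rfl
  have hEs : ∀ q, Φ (E.symm q) = q := fun q => E.apply_symm_apply q
  have hEs1 : ∀ q, (E.symm q).1.1.1 = q.1 := fun q => congrArg (fun r => r.1) (hEs q)
  refine ⟨fun q => (E.symm q).1.1, fun q => (E.symm q).1.2, ?_, ?_, ?_, ?_, ?_, ?_, ?_⟩
  · exact (continuous_subtype_val.comp E.symm.continuous).fst
  · exact (continuous_subtype_val.comp E.symm.continuous).snd
  · exact hEs1
  · exact fun q => (E.symm q).2
  · intro p t hpt
    refine ⟨E ⟨(p, t), hpt⟩, ?_, ?_⟩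
    · simp only [E.symm_apply_apply]
    · simp only [E.symm_apply_apply]
  · intro θ x x'
    have := hΦle (E.symm (θ, x)) (E.symm (θ, x')) ((hEs1 (θ, x)).trans (hEs1 (θ, x')).symm)
    rw [hEs, hEs] at this
    exact this
  · intro θ x x' n hx hh hs
    set k := E.symm (θ, x) with hkdef
    set k' := E.symm (θ, x') with hkdef'
    have hkθ : k.1.1.1 = θ := hEs1 _
    have hkθ' : k'.1.1.1 = θ := hEs1 _
    have e1 : (x : ℝ) = Z θ (VFun c k.1) := by
      have h2 : (Φ k) = (θ, x) := hEs _
      have h3 : (Φ k).2 = x := congrArg Prod.snd h2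
      rw [← h3, ← hkθ]
    have e2 : (x' : ℝ) = Z θ (VFun c k'.1) := by
      have h2 : (Φ k') = (θ, x') := hEs _
      have h3 : (Φ k').2 = x' := congrArg Prod.snd h2
      rw [← h3, ← hkθ']
    have hV0 : VFun c k.1 ≤ VFun c k'.1 := by
      rw [← hZm θ, ← e1, ← e2]; exact hx
    have hVd : VFun c k'.1 - VFun c k.1 ≤ 2 * c n := by
      simp only [VFun]
      rw [hh]
      have h5 := (KSet_summable hc hc0 k'.2).tsum_sub (KSet_summable hc hc0 k.2)
      have h6 : ∑' m, (c m * k'.1.2 m - c m * k.1.2 m) = c n * k'.1.2 n - c n * k.1.2 n := by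
        refine tsum_eq_single n fun m hm => ?_
        rw [hs m hm, sub_self]
      have h7 := abs_le.1 (k'.2 n).1
      have h8 := abs_le.1 (k.2 n).1
      have h9 := hc0 n
      have : c n * k'.1.2 n - c n * k.1.2 n ≤ 2 * c n := by nlinarith
      linarith
    have : (x' : ℝ) - x = (b - a) * ((VFun c k'.1 - VFun c k.1) / (U θ - L θ)) := by
      rw [e1, e2]
      simp only [Z]
      ring
    rw [this]
    refine le_trans ?_ hVd
    rw [mul_div_assoc', div_le_iff₀ (hUL0 θ), mul_comm]
    exact mul_le_mul_of_nonneg_left (hUL θ) (by linarith)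

/-! ### Dynamics -/

lemma rot_minimal {r : T1} (hr : DenseRange fun n : ℕ => n • r) {E : Set T1} (hE : IsClosed E)
    (hne : E.Nonempty) (hinv : ∀ θ ∈ E, θ + r ∈ E) : E = univ := by
  obtain ⟨θ₀, h0⟩ := hne
  have h1 : ∀ n : ℕ, θ₀ + n • r ∈ E := by
    intro n
    induction n with
    | zero => simpa using h0
    | succ n ih =>
      rw [succ_nsmul, ← add_assoc]
      exact hinv _ ih
  have h2 : IsClosed ((fun t : T1 => θ₀ + t) ⁻¹' E) :=
    hE.preimage (continuous_const.add continuous_id)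
  have h3 : ((fun t : T1 => θ₀ + t) ⁻¹' E) = univ := by
    rw [← h2.closure_eq]
    refine (hr.mono ?_).closure_eq
    rintro _ ⟨n, rfl⟩
    exact h1 n
  refine eq_univ_of_forall fun θ => ?_
  have : θ - θ₀ ∈ ((fun t : T1 => θ₀ + t) ⁻¹' E) := by rw [h3]; trivial
  simpa using this

instance instNeBotT1 (x : T1) : (nhdsWithin x {x}ᶜ).NeBot := by
  have h1 : Nontrivial T1 := by
    refine ⟨((1 / 2 : ℝ) : T1), 0, fun h => ?_⟩
    obtain ⟨n, hn⟩ := (AddCircle.coe_eq_zero_iff (1 : ℝ)).1 h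
    simp only [zsmul_eq_mul, mul_one] at hn
    have h2 : (2 * n : ℤ) = 1 := by
      have : (2 * n : ℝ) = 1 := by linarith
      exact_mod_cast this
    omega
  have h2 : ConnectedSpace T1 := by infer_instance
  infer_instance

/-- Points off the distinguished orbit. -/
def GenSet (r : T1) : Set T1 := {θ | ∀ n : ℤ, θ ≠ n • r}

lemma GenSet_dense (r : T1) : Dense (GenSet r) := by
  have : GenSet r = ⋂ n : ℤ, {n • r}ᶜ := by
    ext θ
    simp [GenSet]
  rw [this]
  exact dense_iInter_of_isOpen (fun n => isOpen_compl_singleton) fun n => dense_compl_singleton _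

lemma GenSet_add {r θ : T1} (h : θ ∈ GenSet r) : θ + r ∈ GenSet r := by
  intro n hn
  apply h (n - 1)
  rw [sub_smul, one_smul, ← hn]
  abel

lemma GenSet_neg {r θ : T1} (h : θ ∈ GenSet r) : -θ ∈ GenSet r := by
  intro n hn
  apply h (-n)
  rw [neg_smul, ← hn, neg_neg]

section
variable {a b : ℝ} {r : T1} {f : T1 × ↥(Icc a b) → T1 × ↥(Icc a b)}
  {γ : T1 → ↥(Icc a b)} {N D : ℤ → T1 × ↥(Icc a b) → ℝ} {c : ℤ → ℝ}
  {h : T1 × ↥(Icc a b) → T1 × ↥(Icc a b)} {s : T1 × ↥(Icc a b) → ℤ → ℝ}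

lemma BlowUp.le_iff' (B : BlowUp N D c h s) {q q' : T1 × ↥(Icc a b)} (hq : q.1 = q'.1) :
    q.2 ≤ q'.2 ↔ (h q).2 ≤ (h q').2 ∧ s q ≤ s q' := by
  obtain ⟨θ, x⟩ := q
  obtain ⟨θ', x'⟩ := q'
  obtain rfl : θ = θ' := hq
  exact B.le_iff θ x x'

lemma BlowUp.inj (B : BlowUp N D c h s) {q q' : T1 × ↥(Icc a b)} (hh : h q = h q')
    (hs : s q = s q') : q = q' := by
  have h1 : q.1 = q'.1 := by rw [← B.h1, ← B.h1 q', hh]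
  refine Prod.ext h1 (le_antisymm ?_ ?_)
  · rw [B.le_iff' h1, hh, hs]
    exact ⟨le_rfl, le_rfl⟩
  · rw [B.le_iff' h1.symm, hh, hs]
    exact ⟨le_rfl, le_rfl⟩

lemma BlowUp.inj' (B : BlowUp N D c h s) {q q' : T1 × ↥(Icc a b)} (hh : h q = h q')
    (hD : ∀ n, D n (h q) ≠ 0) : q = q' := by
  refine B.inj hh (funext fun n => ?_)
  refine KSet_coord_eq (B.mem q) ?_ (hD n)
  rw [hh]
  exact B.mem q'

lemma KSet_shift (hd : BUData r f γ N D) {p : T1 × ↥(Icc a b)} {t : ℤ → ℝ}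
    (hk : (p, t) ∈ KSet N D) : (f p, fun n => t (n - 1)) ∈ KSet N D := by
  intro n
  have e1 := hd.Dstep (n - 1) p
  have e2 := hd.Nstep (n - 1) p
  rw [sub_add_cancel] at e1 e2
  simp only
  rw [e1, e2]
  exact hk (n - 1)

lemma skew_injective (hf : ForcedIncreasing (fun θ : T1 => θ + r) f) : Injective f := by
  intro p p' hp
  have h1 : p.1 = p'.1 := by
    have e1 := hf.2.1 p
    have e2 := hf.2.1 p'
    rw [hp, e2] at e1
    exact (add_right_cancel e1).symm
  obtain ⟨θ, y⟩ := p
  obtain ⟨θ', y'⟩ := p'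
  obtain rfl : θ = θ' := h1
  have : y = y' := (hf.2.2 θ).injective (congrArg Prod.snd hp)
  rw [this]

lemma BlowUp.exists_fhat (B : BlowUp N D c h s) (hd : BUData r f γ N D)
    (hf : ForcedIncreasing (fun θ : T1 => θ + r) f) :
    ∃ g : T1 × ↥(Icc a b) → T1 × ↥(Icc a b), (∀ q, h (g q) = f (h q)) ∧
      (∀ q, s (g q) = fun n => s q (n - 1)) ∧ Injective g ∧
      ForcedIncreasing (fun θ : T1 => θ + r) g := by
  have hex : ∀ q, ∃ q', h q' = f (h q) ∧ s q' = fun n => s q (n - 1) :=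
    fun q => B.surj _ _ (KSet_shift hd (B.mem q))
  choose g hg1 hg2 using hex
  have hginj : Injective g := by
    intro q q' hq
    refine B.inj (skew_injective hf ?_) (funext fun n => ?_)
    · rw [← hg1, ← hg1, hq]
    · have e1 := congrFun (hg2 q) (n + 1)
      have e2 := congrFun (hg2 q') (n + 1)
      rw [hq, e2] at e1
      simpa using e1.symm
  have hg0 : ∀ q, (g q).1 = q.1 + r := by
    intro q
    rw [← B.h1, hg1, hf.2.1, B.h1]
  refine ⟨g, hg1, hg2, hginj, ?_, hg0, ?_⟩
  · have hec : Continuous fun q => (h q, s q) := B.hc.prodMk B.sc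
    have hei : Injective fun q => (h q, s q) := fun q q' hq =>
      B.inj (congrArg Prod.fst hq) (congrArg Prod.snd hq)
    have hemb := hec.isClosedEmbedding hei
    rw [hemb.isInducing.continuous_iff]
    have : (fun q => (h q, s q)) ∘ g = fun q => (f (h q), fun n => s q (n - 1)) := by
      funext q
      simp [hg1, hg2]
    rw [this]
    refine (hf.1.comp B.hc).prodMk (continuous_pi fun n => ?_)
    exact (continuous_apply (n - 1)).comp B.sc
  · intro θ
    refine Monotone.strictMono_of_injective ?_ ?_
    · intro x x' hx
      have h1 : (g (θ, x)).1 = (g (θ, x')).1 := by rw [hg0, hg0]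
      show (g (θ, x)).2 ≤ (g (θ, x')).2
      rw [B.le_iff' h1, hg1, hg1, hg2, hg2]
      have h2 := (B.le_iff θ x x').1 hx
      refine ⟨?_, fun n => h2.2 (n - 1)⟩
      have e1 : h (θ, x) = (θ, (h (θ, x)).2) := Prod.ext (B.h1 _) rfl
      have e2 : h (θ, x') = (θ, (h (θ, x')).2) := Prod.ext (B.h1 _) rfl
      rw [e1, e2]
      exact (hf.2.2 θ).monotone h2.1
    · intro x x' hx
      have h1 : g (θ, x) = g (θ, x') := Prod.ext (by rw [hg0, hg0]) hx
      exact congrArg Prod.snd (hginj h1)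

lemma BlowUp.conclusion (B : BlowUp N D c h s) (hd : BUData r f γ N D)
    (hrinj : ∀ n m : ℤ, n • r = m • r → n = m)
    {g : T1 × ↥(Icc a b) → T1 × ↥(Icc a b)}
    (hg1 : ∀ q, h (g q) = f (h q)) (hg : ForcedIncreasing (fun θ : T1 => θ + r) g) :
    BlowUpConclusion (fun θ : T1 => θ + r) f γ g h := by
  have hmono : ∀ θ : T1, Monotone fun x : ↥(Icc a b) => (h (θ, x)).2 :=
    fun θ x x' hx => ((B.le_iff θ x x').1 hx).1
  refine ⟨⟨B.hc, fun p => ?_, funext hg1⟩, B.h1, hg, hmono, ?_, ?_, ?_⟩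
  · obtain ⟨q, hq, -⟩ := B.surj _ _ (sec_mem hd p)
    exact ⟨q, hq⟩
  · intro q hq q' _ hh
    refine B.inj' hh fun n hn => hq ?_
    rw [hd.zero] at hn
    show (h q).2 = γ (h q).1
    rw [hn]
  · refine ⟨range fun n : ℤ => (n • r, γ (n • r)), ?_, countable_range _, ?_, ?_⟩
    · rintro _ ⟨n, rfl⟩
      rfl
    · rintro _ ⟨n, rfl⟩
      set p : T1 × ↥(Icc a b) := (n • r, γ (n • r)) with hp
      have hDn : D n p = 0 := (hd.zero n p).2 rfl
      have hNn : N n p = 0 := by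
        have := hd.le n p
        rw [hDn] at this
        exact abs_nonpos_iff.1 this
      have hDm : ∀ m, m ≠ n → D m p ≠ 0 := by
        intro m hm h0
        rw [hd.zero] at h0
        exact hm (hrinj _ _ (congrArg Prod.fst h0)).symm
      have hup : ∀ t : ℝ, |t| ≤ 1 → (p, Function.update (secFun N D p) n t) ∈ KSet N D := by
        intro t ht m
        by_cases hm : m = n
        · subst hm
          simp [hDn, hNn, ht]
        · simp only [Function.update_of_ne hm]
          exact sec_mem hd p m
      obtain ⟨q₁, h1, s1⟩ := B.surj _ _ (hup (-1) (by simp))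
      obtain ⟨q₂, h2, s2⟩ := B.surj _ _ (hup 1 (by simp))
      have k1 : q₁.1 = p.1 := by rw [← B.h1, h1]
      have k2 : q₂.1 = p.1 := by rw [← B.h1, h2]
      have hsle : ∀ t ∈ {t | (p, t) ∈ KSet N D}, s q₁ ≤ t ∧ t ≤ s q₂ := by
        intro t ht
        rw [s1, s2]
        refine ⟨fun m => ?_, fun m => ?_⟩
        · by_cases hm : m = n
          · subst hm
            simpa using (abs_le.1 (ht m).1).1
          · simp only [Function.update_of_ne hm]
            exact (KSet_coord_eq (sec_mem hd p) ht (hDm m hm)).le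
        · by_cases hm : m = n
          · subst hm
            simpa using (abs_le.1 (ht m).1).2
          · simp only [Function.update_of_ne hm]
            exact (KSet_coord_eq (sec_mem hd p) ht (hDm m hm)).ge
      refine ⟨q₁.2, q₂.2, ?_, ?_⟩
      · have k12 : q₁.1 = q₂.1 := k1.trans k2.symm
        have hle : q₁.2 ≤ q₂.2 := by
          rw [B.le_iff' k12, h1, h2]
          exact ⟨le_rfl, (hsle _ (by rw [s2]; exact hup 1 (by simp))).1⟩
        refine lt_of_le_of_ne hle fun he => ?_
        have he' : q₁ = q₂ := Prod.ext k12 he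
        have e := congrFun s2 n
        rw [← he', s1] at e
        simp at e
        norm_num at e
      · ext q
        simp only [mem_preimage, mem_singleton_iff, mem_prod, mem_Icc]
        constructor
        · intro hq
          have k : q.1 = p.1 := by rw [← B.h1, hq]
          have hmem := hsle (s q) (by have := B.mem q; rw [hq] at this; exact this)
          refine ⟨k, ?_, ?_⟩
          · rw [B.le_iff' (k1.trans k.symm), h1, hq]
            exact ⟨le_rfl, hmem.1⟩
          · rw [B.le_iff' (k.trans k2.symm), h2, hq]
            exact ⟨le_rfl, hmem.2⟩
        · rintro ⟨k, hl, hu⟩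
          rw [B.le_iff' (k1.trans k.symm), h1] at hl
          rw [B.le_iff' (k.trans k2.symm), h2] at hu
          exact Prod.ext ((B.h1 q).trans k) (le_antisymm hu.1 hl.1)
    · rintro p ⟨hpΓ, hpC⟩
      have hDm : ∀ m, D m p ≠ 0 := by
        intro m h0
        rw [hd.zero] at h0
        exact hpC ⟨m, h0.symm⟩
      obtain ⟨q, hq, -⟩ := B.surj _ _ (sec_mem hd p)
      refine ⟨q.2, ?_⟩
      ext q'
      simp only [mem_preimage, mem_singleton_iff]
      have hq1 : p.1 = q.1 := by rw [← B.h1 q, hq]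
      constructor
      · intro hq'
        rw [← B.inj' (hq.trans hq'.symm) (by rw [hq]; exact hDm)]
        exact Prod.ext hq1.symm rfl
      · intro hq'
        rw [hq', hq1]
        exact hq
  · intro η hη hsub
    have hA : ∀ θ, h (θ, η θ) = (θ, γ θ) := by
      intro θ
      have h2 : (h (θ, η θ)).2 = γ (h (θ, η θ)).1 := hsub (show (θ, η θ) ∈ curveGraph η from rfl)
      rw [B.h1] at h2
      exact Prod.ext (B.h1 _) h2
    set σ : T1 → ℝ := fun θ => s (θ, η θ) 0 with hσ
    have hσc : Continuous σ :=
      (continuous_apply (0 : ℤ)).comp (B.sc.comp (continuous_id.prodMk hη))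
    have hσv : ∀ θ, σ θ * vFun θ = uFun θ := by
      intro θ
      have := (B.mem (θ, η θ) 0).2
      simp only at this
      rwa [hA, hd.D0, hd.N0] at this
    have hdense : Dense ({0}ᶜ : Set T1) := dense_compl_singleton 0
    have hv : ∀ θ ∈ ({0}ᶜ : Set T1), vFun θ ≠ 0 := fun θ hθ h0 => hθ (vFun_eq_zero.1 h0)
    have r1 : (fun θ => σ (-θ)) = fun θ => -σ θ := by
      refine Continuous.ext_on hdense (hσc.comp continuous_neg) hσc.neg ?_
      intro θ hθ
      apply mul_right_cancel₀ (hv θ hθ)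
      have := hσv (-θ)
      rw [vFun_neg, uFun_neg, ← hσv θ] at this
      simp only
      linarith
    have r2 : (fun θ => 2 * σ θ ^ 2) = fun θ => 1 + cFun θ := by
      refine Continuous.ext_on hdense (continuous_const.mul (hσc.pow 2))
        (continuous_const.add continuous_cFun) ?_
      intro θ hθ
      apply mul_left_cancel₀ (pow_ne_zero 2 (hv θ hθ))
      rw [← uFun_sq, ← hσv]
      ring
    have e1 := congrFun r1 0
    have e2 := congrFun r2 0
    simp only [neg_zero, cFun_zero] at e1 e2
    have : σ 0 = 0 := by linarith
    rw [this] at e2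
    norm_num at e2
end

section
variable {a b : ℝ} {r : T1} {f : T1 × ↥(Icc a b) → T1 × ↥(Icc a b)}
  {γ : T1 → ↥(Icc a b)} {N D : ℤ → T1 × ↥(Icc a b) → ℝ} {c : ℤ → ℝ}
  {h : T1 × ↥(Icc a b) → T1 × ↥(Icc a b)} {s : T1 × ↥(Icc a b) → ℤ → ℝ}
  {g : T1 × ↥(Icc a b) → T1 × ↥(Icc a b)}

/-- The single-valued part of the preimage of the curve. -/
def genPart {a b : ℝ} (r : T1) (γ : T1 → ↥(Icc a b))
    (h : T1 × ↥(Icc a b) → T1 × ↥(Icc a b)) : Set (T1 × ↥(Icc a b)) :=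
  {q | q.1 ∈ GenSet r ∧ h q ∈ curveGraph γ}

lemma BlowUp.h_eq (B : BlowUp N D c h s) {q : T1 × ↥(Icc a b)} (hq : h q ∈ curveGraph γ) :
    h q = (q.1, γ q.1) := by
  have h2 : (h q).2 = γ (h q).1 := hq
  rw [B.h1] at h2
  exact Prod.ext (B.h1 _) h2

lemma BlowUp.isClosed_pre (B : BlowUp N D c h s) (hγc : Continuous γ) :
    IsClosed (h ⁻¹' curveGraph γ) := by
  have : IsClosed (curveGraph γ) := isClosed_eq continuous_snd (hγc.comp continuous_fst)
  exact this.preimage B.hc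

lemma BlowUp.exists_over (B : BlowUp N D c h s) (hd : BUData r f γ N D) (θ : T1) :
    ∃ q, q.1 = θ ∧ h q ∈ curveGraph γ := by
  obtain ⟨q, hq, -⟩ := B.surj _ _ (sec_mem hd (θ, γ θ))
  refine ⟨q, ?_, ?_⟩
  · rw [← B.h1, hq]
  · rw [hq]
    rfl

lemma BlowUp.gen_unique (B : BlowUp N D c h s) (hd : BUData r f γ N D)
    {q q' : T1 × ↥(Icc a b)} (hq : q ∈ genPart r γ h) (hq' : h q' ∈ curveGraph γ)
    (h1 : q.1 = q'.1) : q = q' := by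
  refine B.inj' ?_ fun n hn => ?_
  · rw [B.h_eq hq.2, B.h_eq hq', h1]
  · rw [hd.zero, B.h_eq hq.2] at hn
    exact hq.1 n (congrArg Prod.fst hn)

lemma BlowUp.gen_subset (B : BlowUp N D c h s) (hγc : Continuous γ) :
    closure (genPart r γ h) ⊆ h ⁻¹' curveGraph γ :=
  closure_minimal (fun _ hq => hq.2) (B.isClosed_pre hγc)

lemma BlowUp.gen_le (B : BlowUp N D c h s) (hd : BUData r f γ N D)
    (hr : DenseRange fun n : ℕ => n • r) (hg : ForcedIncreasing (fun θ : T1 => θ + r) g)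
    {M' : Set (T1 × ↥(Icc a b))} (hsub : M' ⊆ h ⁻¹' curveGraph γ) (hne : M'.Nonempty)
    (hcl : IsClosed M') (hinv : g '' M' ⊆ M') :
    (∀ θ, ∃ q ∈ M', q.1 = θ) ∧ closure (genPart r γ h) ⊆ M' := by
  have huniv : Prod.fst '' M' = univ := by
    refine rot_minimal hr (hcl.isCompact.image continuous_fst).isClosed (hne.image _) ?_
    rintro _ ⟨q, hq, rfl⟩
    exact ⟨g q, hinv ⟨q, hq, rfl⟩, hg.2.1 q⟩
  have hall : ∀ θ, ∃ q ∈ M', q.1 = θ := by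
    intro θ
    have : θ ∈ Prod.fst '' M' := by rw [huniv]; trivial
    exact this
  refine ⟨hall, closure_minimal (fun q hq => ?_) hcl⟩
  obtain ⟨q', hq', he⟩ := hall q.1
  rw [B.gen_unique hd hq (hsub hq') he.symm]
  exact hq'

lemma BlowUp.gen_nonempty (B : BlowUp N D c h s) (hd : BUData r f γ N D) :
    (genPart r γ h).Nonempty := by
  obtain ⟨θ, hθ⟩ := (GenSet_dense r).nonempty
  obtain ⟨q, hq, hqΓ⟩ := B.exists_over hd θ
  exact ⟨q, by rw [← hq] at hθ; exact hθ, hqΓ⟩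

lemma BlowUp.minimal (B : BlowUp N D c h s) (hd : BUData r f γ N D) (hγc : Continuous γ)
    (hr : DenseRange fun n : ℕ => n • r) (hg : ForcedIncreasing (fun θ : T1 => θ + r) g)
    (hg1 : ∀ q, h (g q) = f (h q)) (hγinv : ∀ θ : T1, f (θ, γ θ) = (θ + r, γ (θ + r))) :
    IsMinimalSet g (closure (genPart r γ h)) := by
  have hgG : g '' genPart r γ h ⊆ genPart r γ h := by
    rintro _ ⟨q, hq, rfl⟩
    refine ⟨?_, ?_⟩
    · rw [hg.2.1]
      exact GenSet_add hq.1
    · rw [hg1, B.h_eq hq.2, hγinv]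
      rfl
  have hne : (closure (genPart r γ h)).Nonempty := (B.gen_nonempty hd).closure
  have hinv : g '' closure (genPart r γ h) ⊆ closure (genPart r γ h) :=
    (image_closure_subset_closure_image hg.1).trans (closure_mono hgG)
  have hsub := B.gen_subset (r := r) hγc
  refine ⟨hne, isClosed_closure, ?_, ?_⟩
  · refine hinv.antisymm ?_
    refine (B.gen_le hd hr hg (hinv.trans hsub) (hne.image _)
      (isClosed_closure.isCompact.image hg.1).isClosed (image_mono hinv)).2
  · intro M' hM' hne' hcl' hinv'
    exact hM'.antisymm (B.gen_le hd hr hg (hM'.trans hsub) hne' hcl' hinv').2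

lemma zIter_addRight (r : T1) (n : ℤ) (y : T1) :
    zIter (Homeomorph.addRight r).toEquiv n y = y + n • r := by
  have h1 : ∀ m : ℕ, ∀ y : T1, ((Homeomorph.addRight r).toEquiv ^ m) y = y + m • r := by
    intro m
    induction m with
    | zero => intro y; simp
    | succ m ih =>
      intro y
      rw [pow_succ, Equiv.Perm.mul_apply, ih]
      simp [succ_nsmul]
      abel
  unfold zIter
  cases n with
  | ofNat m => simpa using h1 m y
  | negSucc m =>
    rw [zpow_negSucc, negSucc_zsmul, Equiv.Perm.inv_eq_iff_eq, h1]
    abel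

lemma BlowUp.isAA (B : BlowUp N D c h s) (hd : BUData r f γ N D) (hγc : Continuous γ)
    (hr : DenseRange fun n : ℕ => n • r) (hg : ForcedIncreasing (fun θ : T1 => θ + r) g)
    (hmin : IsMinimalSet g (closure (genPart r γ h))) :
    IsAAMinimal g (closure (genPart r γ h)) := by
  refine ⟨hmin, fun hM => ⟨?_⟩⟩
  have hall := (B.gen_le hd hr hg (B.gen_subset hγc) hmin.1 hmin.2.1 hmin.2.2.1.le).1
  refine
    { Y := T1
      g := Homeomorph.addRight r
      hmap := fun m => m.1.1
      factor := ⟨continuous_subtype_val.fst, fun θ => ?_, ?_⟩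
      a11 := ?_
      ap := ?_ }
  · obtain ⟨q, hq, hqθ⟩ := hall θ
    exact ⟨⟨q, hq⟩, hqθ⟩
  · funext m
    exact hg.2.1 m.1
  · refine (GenSet_dense r).mono fun θ hθ => ?_
    obtain ⟨q, hq, hqθ⟩ := hall θ
    refine ⟨⟨q, hq⟩, hqθ, ?_⟩
    rintro ⟨q', hq'⟩ hq'θ
    apply Subtype.ext
    have hqG : q ∈ genPart r γ h := ⟨by rw [hqθ]; exact hθ, B.gen_subset hγc hq⟩
    exact (B.gen_unique hd hqG (B.gen_subset hγc hq') (hqθ.trans hq'θ.symm)).symm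
  · intro ε hε
    refine ⟨ε, hε, fun y y' hy n => ?_⟩
    rw [zIter_addRight, zIter_addRight, dist_add_right]
    exact hy

lemma BlowUp.coord_pre (B : BlowUp N D c h s) (hd : BUData r f γ N D)
    {q : T1 × ↥(Icc a b)} (hq : h q ∈ curveGraph γ) : s q 0 * vFun q.1 = uFun q.1 := by
  have := (B.mem q 0).2
  simp only at this
  rwa [B.h_eq hq, hd.D0, hd.N0] at this

lemma gen_v_ne {q : T1 × ↥(Icc a b)} (hq : q ∈ genPart r γ h) : vFun q.1 ≠ 0 := by
  intro h0
  rw [vFun_eq_zero] at h0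
  exact hq.1 0 (by rw [h0, zero_smul])

lemma BlowUp.gen_sq (B : BlowUp N D c h s) (hd : BUData r f γ N D)
    {q : T1 × ↥(Icc a b)} (hq : q ∈ genPart r γ h) : 2 * s q 0 ^ 2 = 1 + cFun q.1 := by
  apply mul_left_cancel₀ (pow_ne_zero 2 (gen_v_ne hq))
  rw [← uFun_sq, ← B.coord_pre hd hq.2]
  ring

lemma BlowUp.s0_continuous (B : BlowUp N D c h s) : Continuous fun q => s q 0 :=
  (continuous_apply (0 : ℤ)).comp B.sc

lemma BlowUp.closure_sq (B : BlowUp N D c h s) (hd : BUData r f γ N D)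
    {q : T1 × ↥(Icc a b)} (hq : q ∈ closure (genPart r γ h)) :
    2 * s q 0 ^ 2 = 1 + cFun q.1 := by
  have hcl : IsClosed {q : T1 × ↥(Icc a b) | 2 * s q 0 ^ 2 = 1 + cFun q.1} :=
    isClosed_eq (continuous_const.mul (B.s0_continuous.pow 2))
      (continuous_const.add (continuous_cFun.comp continuous_fst))
  exact closure_minimal (fun q hq => B.gen_sq hd hq) hcl hq

lemma BlowUp.two_points (B : BlowUp N D c h s) (hd : BUData r f γ N D) :
    ∃ q ∈ closure (genPart r γ h), ∃ q' ∈ closure (genPart r γ h),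
      q.1 = 0 ∧ q'.1 = 0 ∧ s q 0 = 1 ∧ s q' 0 = -1 := by
  set P : Set ((T1 × ↥(Icc a b)) × (T1 × ↥(Icc a b))) :=
    {w | w.1 ∈ genPart r γ h ∧ w.2 ∈ genPart r γ h ∧ w.2.1 = -w.1.1} with hP
  have himg : (fun w : (T1 × ↥(Icc a b)) × (T1 × ↥(Icc a b)) => w.1.1) '' closure P = univ := by
    have hc : Continuous (fun w : (T1 × ↥(Icc a b)) × (T1 × ↥(Icc a b)) => w.1.1) :=
      continuous_fst.fst
    rw [← (isClosed_closure.isCompact.image hc).isClosed.closure_eq]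
    refine ((GenSet_dense r).mono fun θ hθ => ?_).closure_eq
    obtain ⟨q, hq, hqΓ⟩ := B.exists_over hd θ
    obtain ⟨q', hq', hqΓ'⟩ := B.exists_over hd (-θ)
    refine ⟨(q, q'), subset_closure ⟨⟨?_, hqΓ⟩, ⟨?_, hqΓ'⟩, ?_⟩, hq⟩
    · simp only [hq]; exact hθ
    · simp only [hq']; exact GenSet_neg hθ
    · simp only [hq, hq']
  obtain ⟨⟨q, q'⟩, hw, hq0⟩ : (0 : T1) ∈
      (fun w : (T1 × ↥(Icc a b)) × (T1 × ↥(Icc a b)) => w.1.1) '' closure P := by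
    rw [himg]; trivial
  have hR : IsClosed {w : (T1 × ↥(Icc a b)) × (T1 × ↥(Icc a b)) |
      (w.1 ∈ closure (genPart r γ h) ∧ w.2 ∈ closure (genPart r γ h)) ∧
      w.2.1 = -w.1.1 ∧ s w.2 0 = - s w.1 0} := by
    refine ((isClosed_closure.preimage continuous_fst).inter
      (isClosed_closure.preimage continuous_snd)).inter (IsClosed.inter ?_ ?_)
    · exact isClosed_eq continuous_snd.fst continuous_fst.fst.neg
    · exact isClosed_eq (B.s0_continuous.comp continuous_snd)
        (B.s0_continuous.comp continuous_fst).neg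
  have hPR := closure_minimal (s := P) (fun w hw => by
    obtain ⟨h1, h2, h3⟩ := hw
    refine ⟨⟨subset_closure h1, subset_closure h2⟩, h3, ?_⟩
    apply mul_right_cancel₀ (gen_v_ne h1)
    have e1 := B.coord_pre hd h1.2
    have e2 := B.coord_pre hd h2.2
    rw [h3, vFun_neg, uFun_neg] at e2
    linarith) hR hw
  obtain ⟨⟨hq, hq'⟩, h3, h4⟩ := hPR
  simp only at hq hq' h3 h4 hq0
  have h5 := B.closure_sq hd hq
  rw [hq0, neg_zero] at h3
  rw [hq0, cFun_zero] at h5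
  have h6 : (s q 0 - 1) * (s q 0 + 1) = 0 := by linarith
  rcases mul_eq_zero.1 h6 with h7 | h7
  · exact ⟨q, hq, q', hq', hq0, h3, by linarith, by linarith⟩
  · exact ⟨q', hq', q, hq, h3, hq0, by linarith, by linarith⟩

lemma BlowUp.not_filled (B : BlowUp N D c h s) (hd : BUData r f γ N D) (hγc : Continuous γ)
    (hrinj : ∀ n m : ℤ, n • r = m • r → n = m) :
    closure (genPart r γ h) ≠ FilledEnvelope (closure (genPart r γ h)) := by
  intro heq
  obtain ⟨q, hq, q', hq', hq0, hq0', hs, hs'⟩ := B.two_points hd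
  have e1 : h q = (0, γ 0) := by rw [B.h_eq (B.gen_subset hγc hq), hq0]
  have e2 : h q' = (0, γ 0) := by rw [B.h_eq (B.gen_subset hγc hq'), hq0']
  obtain ⟨m, hm, hsm⟩ := B.surj _ _ (sec_mem hd (0, γ 0))
  have hm0 : m.1 = 0 := by rw [← B.h1, hm]
  have hD0 : D 0 (0, γ 0) = 0 := by rw [hd.zero, zero_smul]
  have hDn : ∀ n, n ≠ 0 → D n (0, γ 0) ≠ 0 := by
    intro n hn h0
    rw [hd.zero] at h0
    apply hn
    apply hrinj
    rw [zero_smul]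
    exact (congrArg Prod.fst h0).symm
  have hsm0 : s m 0 = 0 := by rw [hsm]; simp [secFun, hD0]
  have hmemm : ((0, γ 0), s m) ∈ KSet N D := by rw [← hm]; exact B.mem m
  have hmemq : ((0, γ 0), s q) ∈ KSet N D := by rw [← e1]; exact B.mem q
  have hmemq' : ((0, γ 0), s q') ∈ KSet N D := by rw [← e2]; exact B.mem q'
  have le1 : q'.2 ≤ m.2 := by
    rw [B.le_iff' (hq0'.trans hm0.symm), e2, hm]
    refine ⟨le_rfl, fun n => ?_⟩
    by_cases hn : n = 0
    · rw [hn, hs', hsm0]; norm_num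
    · exact (KSet_coord_eq hmemq' hmemm (hDn n hn)).le
  have le2 : m.2 ≤ q.2 := by
    rw [B.le_iff' (hm0.trans hq0.symm), e1, hm]
    refine ⟨le_rfl, fun n => ?_⟩
    by_cases hn : n = 0
    · rw [hn, hs, hsm0]; norm_num
    · exact (KSet_coord_eq hmemm hmemq (hDn n hn)).le
  have hmM : m ∈ closure (genPart r γ h) := by
    rw [heq]
    have hsubI : fiberSet (closure (genPart r γ h)) m.1 ⊆ Icc a b := by
      rintro _ ⟨x, _, rfl⟩
      exact x.2
    constructor
    · refine (csInf_le (bddBelow_Icc.mono hsubI) ⟨q'.2, ?_, rfl⟩).trans le1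
      show (m.1, q'.2) ∈ closure (genPart r γ h)
      rw [hm0, ← hq0']
      exact hq'
    · refine le_trans le2 (le_csSup (bddAbove_Icc.mono hsubI) ⟨q.2, ?_, rfl⟩)
      show (m.1, q.2) ∈ closure (genPart r γ h)
      rw [hm0, ← hq0]
      exact hq
  have := B.closure_sq hd hmM
  rw [hsm0, hm0, cFun_zero] at this
  norm_num at this

lemma BlowUp.not_AP (B : BlowUp N D c h s) (hd : BUData r f γ N D) (hγc : Continuous γ)
    (hrinj : ∀ n m : ℤ, n • r = m • r → n = m) (hc : Summable c)
    (hf : ForcedIncreasing (fun θ : T1 => θ + r) f)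
    (hg1 : ∀ q, h (g q) = f (h q)) (hγinv : ∀ θ : T1, f (θ, γ θ) = (θ + r, γ (θ + r)))
    (hmin : IsMinimalSet g (closure (genPart r γ h))) :
    ¬ IsAPMinimal g (closure (genPart r γ h)) := by
  rintro ⟨-, hAP⟩
  set M := closure (genPart r γ h) with hMdef
  have hM : MapsTo g M M := fun q hq => hmin.2.2.1.le ⟨q, hq, rfl⟩
  obtain ⟨q, hq, q', hq', hq0, hq0', hs, hs'⟩ := B.two_points hd
  have e1 : h q = (0, γ 0) := by rw [B.h_eq (B.gen_subset hγc hq), hq0]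
  have e2 : h q' = (0, γ 0) := by rw [B.h_eq (B.gen_subset hγc hq'), hq0']
  have hne : q ≠ q' := by
    intro he
    rw [he, hs'] at hs
    norm_num at hs
  obtain ⟨δ, hδ, hAPδ⟩ := hAP hM (dist q q') (dist_pos.2 hne)
  have hpre : ∀ n : ℕ, ∀ w ∈ M, ∃ w' ∈ M, g^[n] w' = w := by
    intro n
    induction n with
    | zero => exact fun w hw => ⟨w, hw, rfl⟩
    | succ n ih =>
      intro w hw
      rw [← hmin.2.2.1] at hw
      obtain ⟨w₁, hw₁, rfl⟩ := hw
      obtain ⟨w₂, hw₂, rfl⟩ := ih w₁ hw₁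
      exact ⟨w₂, hw₂, Function.iterate_succ_apply' g n w₂⟩
  have hit : ∀ n : ℕ, ∀ w, h (g^[n] w) = f^[n] (h w) := by
    intro n
    induction n with
    | zero => exact fun w => rfl
    | succ n ih =>
      intro w
      rw [Function.iterate_succ_apply', Function.iterate_succ_apply', hg1, ih]
  have hfo : ∀ n : ℕ, ∀ θ, f^[n] (θ, γ θ) = (θ + n • r, γ (θ + n • r)) := by
    intro n
    induction n with
    | zero => intro θ; simp
    | succ n ih =>
      intro θ
      rw [Function.iterate_succ_apply', ih, hγinv, succ_nsmul, add_assoc]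
  obtain ⟨n, hn⟩ : ∃ n : ℕ, 2 * c (-(n : ℤ)) < δ := by
    have hinj : Injective fun n : ℕ => -(n : ℤ) := fun n m hnm => by
      simpa using hnm
    have ht : Filter.Tendsto (fun n : ℕ => c (-(n : ℤ))) Filter.cofinite (nhds 0) :=
      hc.tendsto_cofinite_zero.comp hinj.tendsto_cofinite
    have := ht.eventually (gt_mem_nhds (half_pos hδ))
    obtain ⟨n, hn⟩ := this.exists
    exact ⟨n, by linarith⟩
  set p : T1 × ↥(Icc a b) := ((-(n : ℤ)) • r, γ ((-(n : ℤ)) • r)) with hp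
  have hfp : f^[n] p = (0, γ 0) := by
    rw [hp, hfo]
    simp
  obtain ⟨w, hw, hwq⟩ := hpre n q hq
  obtain ⟨w', hw', hwq'⟩ := hpre n q' hq'
  have hinj : Injective f^[n] := (skew_injective hf).iterate n
  have hhw : h w = p := by
    apply hinj
    rw [← hit, hwq, hfp, e1]
  have hhw' : h w' = p := by
    apply hinj
    rw [← hit, hwq', hfp, e2]
  have hDm : ∀ m, m ≠ -(n : ℤ) → D m p ≠ 0 := by
    intro m hm h0
    rw [hd.zero] at h0
    exact hm (hrinj _ _ (congrArg Prod.fst h0).symm)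
  have hco : ∀ m, m ≠ -(n : ℤ) → s w m = s w' m := by
    intro m hm
    have k1 := B.mem w
    have k2 := B.mem w'
    rw [hhw] at k1
    rw [hhw'] at k2
    exact KSet_coord_eq k1 k2 (hDm m hm)
  have hw1 : w.1 = w'.1 := by rw [← B.h1 w, ← B.h1 w', hhw, hhw']
  have hdist : dist w w' < δ := by
    obtain ⟨θ, x⟩ := w
    obtain ⟨θ', x'⟩ := w'
    obtain rfl : θ = θ' := hw1
    refine lt_of_le_of_lt ?_ hn
    rw [Prod.dist_eq, dist_self, max_eq_right dist_nonneg, Subtype.dist_eq, Real.dist_eq]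
    rcases le_total x x' with hx | hx
    · have := B.est θ x x' _ hx (hhw.trans hhw'.symm) hco
      rw [abs_sub_comm, abs_of_nonneg (sub_nonneg.2 (show (x : ℝ) ≤ x' from hx))]
      exact this
    · have := B.est θ x' x _ hx (hhw'.trans hhw.symm) fun m hm => (hco m hm).symm
      rw [abs_of_nonneg (sub_nonneg.2 (show (x' : ℝ) ≤ x from hx))]
      exact this
  have hfin := hAPδ ⟨w, hw⟩ ⟨w', hw'⟩ hdist n
  unfold restrictMap at hfin
  rw [MapsTo.iterate_restrict] at hfin
  have : dist (g^[n] w) (g^[n] w') < dist q q' := hfin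
  rw [hwq, hwq'] at this
  exact lt_irrefl _ this
end

/-- in the blow-up construction, `h⁻¹(Γ)` contains exactly one minimal set;
it is almost automorphic, not almost periodic, and not filled-in. -/
theorem stmt4 {I : Set ℝ} (hIcomp : IsCompact I) (hIconn : I.OrdConnected)
    (ρ : ℝ) (hρ : Irrational ρ)
    (f : T1 × ↥I → T1 × ↥I) (hf : ForcedIncreasing (fun θ : T1 => θ + (ρ : T1)) f)
    (γ : T1 → ↥I) (hγc : Continuous γ) (hγint : ∀ θ : T1, (γ θ : ℝ) ∈ interior I)
    (hγinv : ∀ θ : T1, f (θ, γ θ) = (θ + (ρ : T1), γ (θ + (ρ : T1)))) :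
    ∃ fhat h : T1 × ↥I → T1 × ↥I,
      BlowUpConclusion (fun θ : T1 => θ + (ρ : T1)) f γ fhat h ∧
      Pinched (h ⁻¹' curveGraph γ) ∧
      ∃ M : Set (T1 × ↥I), M ⊆ h ⁻¹' curveGraph γ ∧ IsMinimalSet fhat M ∧
        (∀ M' : Set (T1 × ↥I), M' ⊆ h ⁻¹' curveGraph γ → IsMinimalSet fhat M' → M' = M) ∧
        IsAAMinimal fhat M ∧ ¬ IsAPMinimal fhat M ∧ M ≠ FilledEnvelope M := by
  have hr : Irrational (ρ / 1) := by simpa using hρ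
  have hdz : DenseRange fun n : ℤ => n • (ρ : T1) := AddCircle.denseRange_zsmul_coe_iff.2 hr
  have hdn : DenseRange fun n : ℕ => n • (ρ : T1) := denseRange_zsmul_iff_nsmul.1 hdz
  have hrinj : ∀ n m : ℤ, n • (ρ : T1) = m • (ρ : T1) → n = m := by
    intro n m hnm
    by_contra hne
    rw [← AddCircle.coe_zsmul, ← AddCircle.coe_zsmul, ← sub_eq_zero, ← AddCircle.coe_sub,
      AddCircle.coe_eq_zero_iff] at hnm
    obtain ⟨k, hk⟩ := hnm
    simp only [zsmul_eq_mul, mul_one] at hk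
    have h1 : Irrational (((n - m : ℤ) : ℝ) * ρ) := hρ.intCast_mul (sub_ne_zero.2 hne)
    apply h1.ne_int k
    push_cast
    linarith
  have hInonempty : I.Nonempty := ⟨γ 0, (γ 0).2⟩
  obtain ⟨a, b, rfl⟩ : ∃ a b, I = Icc a b :=
    ⟨_, _, eq_Icc_of_connected_compact ⟨hInonempty, hIconn.isPreconnected⟩ hIcomp⟩
  have hγ : ∀ θ, a < γ θ ∧ γ θ < b := by
    intro θ
    have := hγint θ
    rwa [interior_Icc] at this
  have hab : a < b := (hγ 0).1.trans (hγ 0).2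
  obtain ⟨N, D, hd⟩ := exists_BUData hab.le (ρ : T1) f hf γ hγc hγinv
  obtain ⟨c, hc0, C, hcs, -⟩ := posSumOfEncodable (ε := (1:ℝ)) one_pos ℤ
  have hc : Summable c := hcs.summable
  obtain ⟨h, s, B⟩ := exists_BlowUp hab hd hrinj hγ hc hc0
  obtain ⟨g, hg1, -, -, hg⟩ := B.exists_fhat hd hf
  have hmin := B.minimal hd hγc hdn hg hg1 hγinv
  refine ⟨g, h, B.conclusion hd hrinj hg1 hg, ?_, closure (genPart (ρ : T1) γ h),
    B.gen_subset hγc, hmin, ?_, B.isAA hd hγc hdn hg hmin,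
    B.not_AP hd hγc hrinj hc hf hg1 hγinv hmin, B.not_filled hd hγc hrinj⟩
  · obtain ⟨q, hq⟩ := B.gen_nonempty hd
    refine ⟨q.1, q.2, hq.2, fun x hx => ?_⟩
    exact (congrArg Prod.snd (B.gen_unique hd hq hx rfl)).symm
  · intro M' hM' hmin'
    have h1 := (B.gen_le hd hdn hg hM' hmin'.1 hmin'.2.1 hmin'.2.2.1.le).2
    exact (hmin'.2.2.2 _ h1 hmin.1 hmin.2.1 hmin.2.2.1.le).symm

end
end
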